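/- Every K-trivial set A is such that every Martin-Löf random sequence R with A ⊕ R ≥_T ∅′ is itself Turing above ∅′ (R is complete). Equivalently: no K-trivial set is weakly ML-cuppable. -/

import Mathlib

open MeasureTheory ENNReal

/-! ### Cantor space and the uniform (coin-flipping) measure -/

/-- The binary digits of a real number in `[0,1)`, giving a point of Cantor space. -/
noncomputable def binaryDigits (x : ℝ) : ℕ → Bool :=
  fun n => decide (⌊x * 2 ^ (n + 1)⌋ % 2 = 1)

/-- The uniform (Lebesgue / coin-flipping) measure on Cantor space `2^ω`,
obtained as the pushforward of Lebesgue measure on `[0,1)` under binary expansion. -/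
noncomputable def μCantor : Measure (ℕ → Bool) :=
  Measure.map binaryDigits (volume.restrict (Set.Ico (0 : ℝ) 1))

/-- `σ` is an initial segment of the infinite sequence `X`. -/
def IsPrefixOf (σ : List Bool) (X : ℕ → Bool) : Prop :=
  ∀ i : Fin σ.length, X i = σ.get i

/-- The cylinder determined by a finite binary string. -/
def cylinder (σ : List Bool) : Set (ℕ → Bool) := {X | IsPrefixOf σ X}

/-- The open set generated by a set of finite binary strings. -/
def openOf (S : Set (List Bool)) : Set (ℕ → Bool) := ⋃ σ ∈ S, cylinder σ

/-- The density of a set `P` above the string `τ`: `μ([τ] ∩ P) · 2^{|τ|}`. -/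
noncomputable def dens (τ : List Bool) (P : Set (ℕ → Bool)) : ℝ≥0∞ :=
  μCantor (cylinder τ ∩ P) * 2 ^ τ.length

/-- The length-`n` initial segment of `X`, as a finite binary string. -/
def strPrefix (X : ℕ → Bool) (n : ℕ) : List Bool := (List.range n).map X

/-- A set of strings is prefix-free if no element is a proper prefix of another. -/
def PrefixFreeSet (S : Set (List Bool)) : Prop :=
  ∀ σ ∈ S, ∀ τ ∈ S, σ <+: τ → σ = τ

/-- The weight `∑_{σ ∈ S} 2^{-|σ|}` of a set of strings. -/
noncomputable def weight (S : Set (List Bool)) : ℝ≥0∞ :=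
  ∑' σ : S, 2⁻¹ ^ (σ : List Bool).length

/-- A set of strings is bounded if its weight is finite. -/
def BoundedStr (S : Set (List Bool)) : Prop := weight S < ⊤

/-- The tail `X(·+k)` of an infinite binary sequence. -/
def tailSeq (X : ℕ → Bool) (k : ℕ) : ℕ → Bool := fun n => X (n + k)

/-! ### Oracle computability -/

/-- The `e`-th computably enumerable set of naturals (the domain of the `e`-th
partial computable function). -/
def WEnum (e n : ℕ) : Prop := ((Denumerable.ofNat Nat.Partrec.Code e).eval n).Dom

/-- `OracleComputes e X n m` holds if the `e`-th Turing functional with oracle `X`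
outputs `m` on input `n`; a Turing functional is presented by the c.e. set `W_e`
of coded axioms `(σ, n, m)`, and `Γ_e^X(n) = m` iff some initial segment `σ` of `X`
has `(σ, n, m) ∈ W_e`. -/
def OracleComputes (e : ℕ) (X : ℕ → Bool) (n m : ℕ) : Prop :=
  ∃ σ : List Bool, IsPrefixOf σ X ∧
    WEnum e (Nat.pair (Encodable.encode σ) (Nat.pair n m))

def natOfBool (b : Bool) : ℕ := cond b 1 0

/-- `f : ℕ → ℕ` is computable with oracle `A`: some Turing functional with oracle `A`
has graph exactly `f`. -/
def FnComputableIn (f : ℕ → ℕ) (A : ℕ → Bool) : Prop :=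
  ∃ e, ∀ n m, OracleComputes e A n m ↔ m = f n

/-- Turing reducibility `B ≤_T A` for subsets of `ω` (as elements of Cantor space). -/
def TuringLE (B A : ℕ → Bool) : Prop := FnComputableIn (fun n => natOfBool (B n)) A

/-- Turing equivalence. -/
def TuringEquiv (A B : ℕ → Bool) : Prop := TuringLE A B ∧ TuringLE B A

/-- The Turing join `A ⊕ B`. -/
def joinSet (A B : ℕ → Bool) : ℕ → Bool :=
  fun n => if n % 2 = 0 then A (n / 2) else B (n / 2)

open Classical in
/-- The Turing jump `A′ = {e : Γ_e^A(e)↓}`. -/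
noncomputable def jump (A : ℕ → Bool) : ℕ → Bool :=
  fun e => decide (∃ m, OracleComputes e A e m)

/-- The empty oracle. -/
def emptyOracle : ℕ → Bool := fun _ => false

/-- The halting problem `∅′`. -/
noncomputable def zeroJump : ℕ → Bool := jump emptyOracle

/-- A set is computable iff it is Turing reducible to the empty oracle. -/
def ComputableSet (A : ℕ → Bool) : Prop := TuringLE A emptyOracle

/-- A set of naturals is c.e. in `A`. -/
def CeIn (A : ℕ → Bool) (S : Set ℕ) : Prop :=
  ∃ e, ∀ n, n ∈ S ↔ ∃ m, OracleComputes e A n m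

/-- A set of strings is c.e. in `A`. -/
def CeStrIn (A : ℕ → Bool) (S : Set (List Bool)) : Prop :=
  ∃ e, ∀ σ : List Bool, σ ∈ S ↔ ∃ m, OracleComputes e A (Encodable.encode σ) m

/-- A c.e. set of strings. -/
def CeStr (S : Set (List Bool)) : Prop := CeStrIn emptyOracle S

/-! ### Π⁰₁ classes, Martin-Löf randomness, K-triviality -/

/-- A `Π⁰₁(A)` class: the complement of the union of cylinders over an `A`-c.e.
set of strings. -/
def Pi01In (A : ℕ → Bool) (P : Set (ℕ → Bool)) : Prop :=
  ∃ S : Set (List Bool), CeStrIn A S ∧ P = (openOf S)ᶜ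

/-- A `Π⁰₁` class. -/
def Pi01 (P : Set (ℕ → Bool)) : Prop := Pi01In emptyOracle P

/-- The `n`-th level of the `e`-th `A`-effective sequence of open sets. -/
def testLevel (e : ℕ) (A : ℕ → Bool) (n : ℕ) : Set (ℕ → Bool) :=
  openOf {σ | ∃ m, OracleComputes e A (Nat.pair n (Encodable.encode σ)) m}

/-- A Martin-Löf test relative to `A`: a uniformly `A`-c.e. sequence of open sets
`G n` with `μ(G n) ≤ 2^{-n}`. -/
def MLTestIn (A : ℕ → Bool) (G : ℕ → Set (ℕ → Bool)) : Prop :=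
  (∃ e, ∀ n, G n = testLevel e A n) ∧ ∀ n, μCantor (G n) ≤ 2⁻¹ ^ n

/-- `X` is Martin-Löf random relative to `A`: it passes every `A`-Martin-Löf test. -/
def MLRandomIn (A X : ℕ → Bool) : Prop :=
  ∀ G : ℕ → Set (ℕ → Bool), MLTestIn A G → ∃ n, X ∉ G n

/-- `X` is Martin-Löf random. -/
def MLRandom (X : ℕ → Bool) : Prop := MLRandomIn emptyOracle X

/-- The domain of the `e`-th machine, viewed as a set of binary strings. -/
def machineDom (e : ℕ) : Set (List Bool) :=
  {σ | ((Denumerable.ofNat Nat.Partrec.Code e).eval (Encodable.encode σ)).Dom}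

/-- The `e`-th machine is prefix-free. -/
def PrefixFreeMachine (e : ℕ) : Prop := PrefixFreeSet (machineDom e)

/-- Prefix-free Kolmogorov complexity (defined, up to an additive constant, as the
least `|σ| + 2e + 2` over prefix-free machines `e` and programs `σ` producing `x`). -/
noncomputable def Kcpx (x : ℕ) : ℕ :=
  sInf {k | ∃ e, ∃ σ : List Bool, PrefixFreeMachine e ∧
    x ∈ (Denumerable.ofNat Nat.Partrec.Code e).eval (Encodable.encode σ) ∧
    k = σ.length + 2 * e + 2}

/-- `K(n)` means `K(1^n)`. -/
noncomputable def KofNat (n : ℕ) : ℕ := Kcpx (Encodable.encode (List.replicate n true))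

/-- `A` is K-trivial: `K(A↾n) ≤ K(n) + c` for some constant `c`. -/
def KTrivial (A : ℕ → Bool) : Prop :=
  ∃ c, ∀ n, Kcpx (Encodable.encode (strPrefix A n)) ≤ KofNat n + c

/-! ## Toolkit: primitive recursion through fun_prop -/

attribute [fun_prop] Primrec
attribute [fun_prop] PrimrecPred
attribute [fun_prop] Primrec.const Primrec.fst Primrec.snd Primrec.comp Primrec.id
attribute [fun_prop] PrimrecPred.comp

section toolkit
variable {α β γ σ : Type*} [Primcodable α] [Primcodable β] [Primcodable γ] [Primcodable σ]

@[fun_prop] theorem pr_pair {f : α → β} {g : α → γ} (hf : Primrec f) (hg : Primrec g) :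
    Primrec fun a => (f a, g a) := hf.pair hg
@[fun_prop] theorem pr_add {f g : α → ℕ} (hf : Primrec f) (hg : Primrec g) :
    Primrec fun a => f a + g a := Primrec.nat_add.comp hf hg
@[fun_prop] theorem pr_sub {f g : α → ℕ} (hf : Primrec f) (hg : Primrec g) :
    Primrec fun a => f a - g a := Primrec.nat_sub.comp hf hg
@[fun_prop] theorem pr_mul {f g : α → ℕ} (hf : Primrec f) (hg : Primrec g) :
    Primrec fun a => f a * g a := Primrec.nat_mul.comp hf hg
@[fun_prop] theorem pr_div {f g : α → ℕ} (hf : Primrec f) (hg : Primrec g) :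
    Primrec fun a => f a / g a := Primrec.nat_div.comp hf hg
@[fun_prop] theorem pr_mod {f g : α → ℕ} (hf : Primrec f) (hg : Primrec g) :
    Primrec fun a => f a % g a := Primrec.nat_mod.comp hf hg
@[fun_prop] theorem pr_pow {f g : α → ℕ} (hf : Primrec f) (hg : Primrec g) :
    Primrec fun a => f a ^ g a :=
  (Primrec₂.unpaired'.1 Nat.Primrec.pow).comp hf hg
@[fun_prop] theorem pr_natpair {f g : α → ℕ} (hf : Primrec f) (hg : Primrec g) :
    Primrec fun a => Nat.pair (f a) (g a) := Primrec₂.natPair.comp hf hg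
@[fun_prop] theorem pr_unpair {f : α → ℕ} (hf : Primrec f) :
    Primrec fun a => Nat.unpair (f a) := Primrec.unpair.comp hf
@[fun_prop] theorem pr_encode {f : α → β} (hf : Primrec f) :
    Primrec fun a => Encodable.encode (f a) := Primrec.encode.comp hf
@[fun_prop] theorem pr_decode {f : α → ℕ} (hf : Primrec f) :
    Primrec fun a => (Encodable.decode (f a) : Option β) := Primrec.decode.comp hf
@[fun_prop] theorem pr_ofNat {β : Type*} [Denumerable β] {f : α → ℕ} (hf : Primrec f) :
    Primrec fun a => (Denumerable.ofNat β (f a)) := (Primrec.ofNat β).comp hf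
@[fun_prop] theorem pr_some {f : α → β} (hf : Primrec f) :
    Primrec fun a => some (f a) := Primrec.option_some.comp hf
@[fun_prop] theorem pr_getD {f : α → Option β} {g : α → β} (hf : Primrec f) (hg : Primrec g) :
    Primrec fun a => (f a).getD (g a) := Primrec.option_getD.comp hf hg
@[fun_prop] theorem pr_optmap {f : α → Option β} {g : α → β → σ} (hf : Primrec f)
    (hg : Primrec fun p : α × β => g p.1 p.2) :
    Primrec fun a => (f a).map (g a) := Primrec.option_map hf hg
@[fun_prop] theorem pr_optbind {f : α → Option β} {g : α → β → Option σ} (hf : Primrec f)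
    (hg : Primrec fun p : α × β => g p.1 p.2) :
    Primrec fun a => (f a).bind (g a) := Primrec.option_bind hf hg
@[fun_prop] theorem pr_isSome {f : α → Option β} (hf : Primrec f) :
    Primrec fun a => (f a).isSome := Primrec.option_isSome.comp hf
@[fun_prop] theorem pr_cons {f : α → β} {g : α → List β} (hf : Primrec f) (hg : Primrec g) :
    Primrec fun a => f a :: g a := Primrec.list_cons.comp hf hg
@[fun_prop] theorem pr_append {f g : α → List β} (hf : Primrec f) (hg : Primrec g) :
    Primrec fun a => f a ++ g a := Primrec.list_append.comp hf hg
@[fun_prop] theorem pr_length {f : α → List β} (hf : Primrec f) :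
    Primrec fun a => (f a).length := Primrec.list_length.comp hf
@[fun_prop] theorem pr_tail {f : α → List β} (hf : Primrec f) :
    Primrec fun a => (f a).tail := Primrec.list_tail.comp hf
@[fun_prop] theorem pr_head {f : α → List β} (hf : Primrec f) :
    Primrec fun a => (f a).head? := Primrec.list_head?.comp hf
@[fun_prop] theorem pr_reverse {f : α → List β} (hf : Primrec f) :
    Primrec fun a => (f a).reverse := Primrec.list_reverse.comp hf
@[fun_prop] theorem pr_range {f : α → ℕ} (hf : Primrec f) :
    Primrec fun a => List.range (f a) := Primrec.list_range.comp hf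
@[fun_prop] theorem pr_take {f : α → ℕ} {g : α → List β} (hf : Primrec f) (hg : Primrec g) :
    Primrec fun a => (g a).take (f a) := Primrec.list_take.comp hf hg
@[fun_prop] theorem pr_drop {f : α → ℕ} {g : α → List β} (hf : Primrec f) (hg : Primrec g) :
    Primrec fun a => (g a).drop (f a) := Primrec.list_drop.comp hf hg
@[fun_prop] theorem pr_getElem {f : α → ℕ} {g : α → List β} (hf : Primrec f) (hg : Primrec g) :
    Primrec fun a => (g a)[f a]? := Primrec.list_getElem?.comp hg hf
@[fun_prop] theorem pr_map {f : α → List β} {g : α → β → σ} (hf : Primrec f)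
    (hg : Primrec fun p : α × β => g p.1 p.2) :
    Primrec fun a => (f a).map (g a) := Primrec.list_map hf hg
@[fun_prop] theorem pr_flatMap {f : α → List β} {g : α → β → List σ} (hf : Primrec f)
    (hg : Primrec fun p : α × β => g p.1 p.2) :
    Primrec fun a => (f a).flatMap (g a) := Primrec.list_flatMap hf hg
@[fun_prop] theorem pr_natrec {f : α → ℕ} {g : α → β} {h : α → ℕ → β → β} (hf : Primrec f)
    (hg : Primrec g) (hh : Primrec fun p : α × ℕ × β => h p.1 p.2.1 p.2.2) :
    Primrec fun a => (Nat.rec (g a) (h a) (f a) : β) :=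
  Primrec.nat_rec' hf hg (h := fun a p => h a p.1 p.2) hh

theorem pr_foldr {f : α → List β} {g : α → σ} {h : α → β → σ → σ} (hf : Primrec f)
    (hg : Primrec g) (hh : Primrec fun p : α × β × σ => h p.1 p.2.1 p.2.2) :
    Primrec fun a => (f a).foldr (h a) (g a) :=
  Primrec.list_foldr hf hg (h := fun a p => h a p.1 p.2) hh

@[fun_prop] theorem pr_sum {f : α → List ℕ} (hf : Primrec f) :
    Primrec fun a => (f a).sum :=
  (pr_foldr (g := fun _ => 0) (h := fun _ x y => x + y) hf (by fun_prop) (by fun_prop)).of_eq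
    (fun a => by rw [List.sum])

@[fun_prop] theorem pr_replicate {f : α → ℕ} {g : α → β} (hf : Primrec f) (hg : Primrec g) :
    Primrec fun a => List.replicate (f a) (g a) :=
  (show Primrec fun a => (List.range (f a)).map (fun _ => g a) by fun_prop).of_eq
    (fun a => by simp)

@[fun_prop] theorem pr_evaln {f : α → ℕ} {g : α → Nat.Partrec.Code} {h : α → ℕ} (hf : Primrec f)
    (hg : Primrec g) (hh : Primrec h) :
    Primrec fun a => Nat.Partrec.Code.evaln (f a) (g a) (h a) :=
  Nat.Partrec.Code.primrec_evaln.comp (show Primrec fun a => ((f a, g a), h a) by fun_prop)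

@[fun_prop] theorem pr_curry {g : α → Nat.Partrec.Code} {h : α → ℕ}
    (hg : Primrec g) (hh : Primrec h) :
    Primrec fun a => Nat.Partrec.Code.curry (g a) (h a) :=
  Nat.Partrec.Code.primrec₂_curry.comp hg hh

@[fun_prop] theorem pr_and {p q : α → Prop} (hf : PrimrecPred p) (hg : PrimrecPred q) :
    PrimrecPred fun a => p a ∧ q a := hf.and hg
@[fun_prop] theorem pr_or {p q : α → Prop} (hf : PrimrecPred p) (hg : PrimrecPred q) :
    PrimrecPred fun a => p a ∨ q a := hf.or hg
@[fun_prop] theorem pr_not {p : α → Prop} (hf : PrimrecPred p) :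
    PrimrecPred fun a => ¬ p a := hf.not
@[fun_prop] theorem pr_le {f g : α → ℕ} (hf : Primrec f) (hg : Primrec g) :
    PrimrecPred fun a => f a ≤ g a := Primrec.nat_le.comp hf hg
@[fun_prop] theorem pr_lt {f g : α → ℕ} (hf : Primrec f) (hg : Primrec g) :
    PrimrecPred fun a => f a < g a := Primrec.nat_lt.comp hf hg
@[fun_prop] theorem pr_eq {f g : α → β} (hf : Primrec f) (hg : Primrec g) :
    PrimrecPred fun a => f a = g a := Primrec.eq.comp hf hg
@[fun_prop] theorem pr_ite {c : α → Prop} [DecidablePred c] {f g : α → σ} (hc : PrimrecPred c)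
    (hf : Primrec f) (hg : Primrec g) : Primrec fun a => if c a then f a else g a :=
  Primrec.ite hc hf hg
@[fun_prop] theorem pr_decide {c : α → Prop} [DecidablePred c] (hc : PrimrecPred c) :
    Primrec fun a => decide (c a) := hc.decide

@[fun_prop] theorem pr_filter {f : α → List β} {g : α → β → Bool} (hf : Primrec f)
    (hg : Primrec fun p : α × β => g p.1 p.2) :
    Primrec fun a => (f a).filter (g a) :=
  (show Primrec fun a => (f a).flatMap (fun b => if g a b = true then [b] else []) by
    fun_prop).of_eq (fun a => by
      induction f a with
      | nil => rfl
      | cons x l ih => by_cases h : g a x = true <;> simp_all)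

@[fun_prop] theorem pr_exmem {b : α → List β} {p : α → β → Prop} (hb : Primrec b)
    (hp : PrimrecPred fun q : α × β => p q.1 q.2) :
    PrimrecPred fun a => ∃ i ∈ b a, p a i :=
  ((PrimrecRel.exists_mem_list (R := fun (i : β) (a : α) => p a i)
    (hp.comp (Primrec.snd.pair Primrec.fst))).comp hb Primrec.id)
@[fun_prop] theorem pr_exlt {b : α → ℕ} {p : α → ℕ → Prop} (hb : Primrec b)
    (hp : PrimrecPred fun q : α × ℕ => p q.1 q.2) :
    PrimrecPred fun a => ∃ i < b a, p a i :=
  (show PrimrecPred fun a => ∃ i ∈ List.range (b a), p a i by fun_prop).of_eq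
    (fun a => by simp)
@[fun_prop] theorem pr_exle {b : α → ℕ} {p : α → ℕ → Prop} (hb : Primrec b)
    (hp : PrimrecPred fun q : α × ℕ => p q.1 q.2) :
    PrimrecPred fun a => ∃ i ≤ b a, p a i :=
  (show PrimrecPred fun a => ∃ i < b a + 1, p a i by fun_prop).of_eq
    (fun a => by simp)
theorem pr_allmem {b : α → List β} {p : α → β → Prop} (hb : Primrec b)
    (hp : PrimrecPred fun q : α × β => p q.1 q.2) :
    PrimrecPred fun a => ∀ i ∈ b a, p a i :=
  (show PrimrecPred fun a => ¬ ∃ i ∈ b a, ¬ p a i by fun_prop).of_eq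
    (fun a => by simp)
theorem pr_alllt {b : α → ℕ} {p : α → ℕ → Prop} (hb : Primrec b)
    (hp : PrimrecPred fun q : α × ℕ => p q.1 q.2) :
    PrimrecPred fun a => ∀ i < b a, p a i :=
  (show PrimrecPred fun a => ¬ ∃ i < b a, ¬ p a i by fun_prop).of_eq
    (fun a => by simp)
@[fun_prop] theorem pr_mem {b : α → List β} {f : α → β} (hb : Primrec b) (hf : Primrec f) :
    PrimrecPred fun a => f a ∈ b a :=
  (show PrimrecPred fun a => ∃ i ∈ b a, i = f a by fun_prop).of_eq (fun a => by simp)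
@[fun_prop] theorem pr_isPre {f g : α → List β} (hf : Primrec f) (hg : Primrec g) :
    PrimrecPred fun a => f a <+: g a :=
  (show PrimrecPred fun a => f a = (g a).take (f a).length by fun_prop).of_eq
    (fun a => by rw [List.prefix_iff_eq_take])
@[fun_prop] theorem pr_suffix {f g : α → List β} (hf : Primrec f) (hg : Primrec g) :
    PrimrecPred fun a => f a <:+ g a :=
  (show PrimrecPred fun a => f a = (g a).drop ((g a).length - (f a).length) by fun_prop).of_eq
    (fun a => by rw [List.suffix_iff_eq_drop])
@[fun_prop] theorem pr_toList {f : α → Option β} (hf : Primrec f) :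
    Primrec fun a => (f a).toList := Primrec.optionToList.comp hf
/-- decoding with a predicate -/
theorem pr_exopt {b : α → Option β} {p : α → β → Prop} (hb : Primrec b)
    (hp : PrimrecPred fun q : α × β => p q.1 q.2) :
    PrimrecPred fun a => ∃ i, b a = some i ∧ p a i := by
  classical
  exact (show PrimrecPred fun a => ((b a).bind fun i => if p a i then some () else none).isSome
    = true by fun_prop).of_eq
    (fun a => by
      cases h : b a with
      | none => simp
      | some i => by_cases hh : p a i <;> simp [hh])

end toolkit

/-- c.e. sets from primitive recursive predicates -/
theorem exists_code_of_primrec {Q : ℕ → ℕ → Prop} (hQ : PrimrecPred fun p : ℕ × ℕ => Q p.1 p.2) :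
    ∃ c : Nat.Partrec.Code, ∀ n, (c.eval n).Dom ↔ ∃ s, Q n s := by
  classical
  have h1 : Primrec fun p : ℕ × ℕ => (if Q p.1 p.2 then some 0 else none : Option ℕ) := by fun_prop
  have h2 : Partrec fun n : ℕ => Nat.rfindOpt fun s => (if Q n s then some 0 else none : Option ℕ) :=
    Partrec.rfindOpt (h1.to_comp.to₂ (f := fun p : ℕ × ℕ => (if Q p.1 p.2 then some 0 else none : Option ℕ)))
  obtain ⟨c, hc⟩ := Nat.Partrec.Code.exists_code.1 (Partrec.nat_iff.1 h2)
  refine ⟨c, fun n => ?_⟩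
  rw [hc, Nat.rfindOpt_dom]
  constructor
  · rintro ⟨s, a, ha⟩
    refine ⟨s, ?_⟩
    by_contra hn
    simp [hn] at ha
  · rintro ⟨s, hs⟩
    exact ⟨s, 0, by simp [hs]⟩

theorem exists_index_of_primrec {Q : ℕ → ℕ → Prop} (hQ : PrimrecPred fun p : ℕ × ℕ => Q p.1 p.2) :
    ∃ e, ∀ n, WEnum e n ↔ ∃ s, Q n s := by
  obtain ⟨c, hc⟩ := exists_code_of_primrec hQ
  refine ⟨Encodable.encode c, fun n => ?_⟩
  rw [WEnum, Denumerable.ofNat_encode]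
  exact hc n

/-- stage-bounded version of WEnum -/
def WStage (e n s : ℕ) : Prop :=
  (Nat.Partrec.Code.evaln s (Denumerable.ofNat Nat.Partrec.Code e) n).isSome = true

@[fun_prop] theorem pr_WStage : PrimrecPred fun p : ℕ × ℕ × ℕ => WStage p.1 p.2.1 p.2.2 := by
  unfold WStage; fun_prop

theorem wenum_iff (e n : ℕ) : WEnum e n ↔ ∃ s, WStage e n s := by
  unfold WEnum WStage
  rw [Part.dom_iff_mem]
  constructor
  · rintro ⟨y, hy⟩
    obtain ⟨k, hk⟩ := Nat.Partrec.Code.evaln_complete.1 hy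
    exact ⟨k, by rw [Option.mem_def.1 hk]; rfl⟩
  · rintro ⟨s, hs⟩
    obtain ⟨y, hy⟩ := Option.isSome_iff_exists.1 hs
    exact ⟨y, Nat.Partrec.Code.evaln_sound hy⟩

theorem WStage.mono {e n s t : ℕ} (h : WStage e n s) (hst : s ≤ t) : WStage e n t := by
  unfold WStage at *
  obtain ⟨y, hy⟩ := Option.isSome_iff_exists.1 h
  have := Nat.Partrec.Code.evaln_mono hst hy
  rw [Option.mem_def.1 this]; rfl

theorem WStage.lt {e n s : ℕ} (h : WStage e n s) : n < s := by
  unfold WStage at *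
  obtain ⟨y, hy⟩ := Option.isSome_iff_exists.1 h
  exact Nat.Partrec.Code.evaln_bound hy

/-! ## Strings -/

theorem length_strPrefix (X : ℕ → Bool) (n : ℕ) : (strPrefix X n).length = n := by
  simp [strPrefix]

theorem isPrefixOf_iff (σ : List Bool) (X : ℕ → Bool) : IsPrefixOf σ X ↔ σ = strPrefix X σ.length := by
  constructor
  · intro h
    apply List.ext_getElem
    · simp [strPrefix]
    · intro i h1 h2
      have := h ⟨i, h1⟩
      simp [strPrefix] at *
      exact this.symm
  · intro h i
    have h2 : σ[(i : ℕ)]? = (strPrefix X σ.length)[(i : ℕ)]? := by rw [← h]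
    simp [strPrefix] at h2
    simp [h2]

theorem isPrefixOf_strPrefix (X : ℕ → Bool) (n : ℕ) : IsPrefixOf (strPrefix X n) X := by
  rw [isPrefixOf_iff, length_strPrefix]

theorem take_strPrefix (X : ℕ → Bool) (m n : ℕ) (h : m ≤ n) :
    (strPrefix X n).take m = strPrefix X m := by
  simp [strPrefix, ← List.map_take, List.take_range, h]

theorem strPrefix_pre (X : ℕ → Bool) {m n : ℕ} (h : m ≤ n) :
    strPrefix X m <+: strPrefix X n := by
  rw [← take_strPrefix X m n h]; exact List.take_prefix _ _

theorem prefix_strPrefix_iff (σ : List Bool) (X : ℕ → Bool) (n : ℕ) :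
    σ <+: strPrefix X n ↔ IsPrefixOf σ X ∧ σ.length ≤ n := by
  constructor
  · intro h
    have hl := h.length_le
    rw [length_strPrefix] at hl
    refine ⟨?_, hl⟩
    rw [isPrefixOf_iff]
    rw [List.prefix_iff_eq_take, take_strPrefix X _ _ hl] at h
    exact h
  · rintro ⟨h, hl⟩
    rw [isPrefixOf_iff] at h
    rw [h]
    exact strPrefix_pre X hl

theorem IsPrefixOf.eq {σ : List Bool} {X : ℕ → Bool} (h : IsPrefixOf σ X) :
    strPrefix X σ.length = σ := ((isPrefixOf_iff σ X).1 h).symm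

theorem IsPrefixOf.of_pre {σ τ : List Bool} {X : ℕ → Bool} (h : IsPrefixOf τ X) (h2 : σ <+: τ) :
    IsPrefixOf σ X := by
  rw [← h.eq, prefix_strPrefix_iff] at h2; exact h2.1

theorem IsPrefixOf.comparable {σ τ : List Bool} {X : ℕ → Bool} (h : IsPrefixOf σ X)
    (h2 : IsPrefixOf τ X) : σ <+: τ ∨ τ <+: σ := by
  rw [← h.eq, ← h2.eq]
  rcases le_total σ.length τ.length with h3 | h3
  · exact Or.inl (strPrefix_pre X h3)
  · exact Or.inr (strPrefix_pre X h3)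

theorem IsPrefixOf.of_pre_of_le {σ τ : List Bool} {X : ℕ → Bool} (h : IsPrefixOf σ X)
    (h2 : IsPrefixOf τ X) (h3 : σ.length ≤ τ.length) : σ <+: τ := by
  rw [← h.eq, ← h2.eq]; exact strPrefix_pre X h3

/-- all strings of length n -/
def strs : ℕ → List (List Bool)
  | 0 => [[]]
  | n + 1 => (strs n).flatMap fun σ => [σ ++ [false], σ ++ [true]]

@[fun_prop] theorem pr_strs {α : Type*} [Primcodable α] {f : α → ℕ} (hf : Primrec f) :
    Primrec fun a => strs (f a) :=
  (show Primrec fun a => (Nat.rec [[]] (fun _ l => l.flatMap fun σ => [σ ++ [false], σ ++ [true]])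
    (f a) : List (List Bool)) by fun_prop).of_eq (fun a => by
      induction f a with
      | zero => rfl
      | succ n ih => simp only [strs, ← ih])

theorem mem_strs {n : ℕ} {σ : List Bool} : σ ∈ strs n ↔ σ.length = n := by
  induction n generalizing σ with
  | zero => simp [strs]
  | succ n ih =>
    simp only [strs, List.mem_flatMap, ih]
    constructor
    · rintro ⟨τ, h, h2⟩
      simp at h2
      rcases h2 with rfl | rfl <;> simp [h]
    · intro h
      rcases List.eq_nil_or_concat σ with rfl | ⟨τ, b, rfl⟩
      · simp at h
      · refine ⟨τ, by simpa using h, ?_⟩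
        cases b <;> simp

theorem nodup_strs (n : ℕ) : (strs n).Nodup := by
  induction n with
  | zero => simp [strs]
  | succ n ih =>
    simp only [strs]
    rw [List.nodup_flatMap]
    refine ⟨fun x _ => by simp, ?_⟩
    apply List.Pairwise.imp _ ih
    intro a b hab
    simp only [Function.onFun, List.disjoint_left]
    intro x hx hx2
    apply hab
    have h1 : x.dropLast = a := by
      simp at hx
      rcases hx with rfl | rfl <;> simp
    have h2 : x.dropLast = b := by
      simp at hx2
      rcases hx2 with rfl | rfl <;> simp
    rw [← h1, h2]

theorem length_strs (n : ℕ) : (strs n).length = 2 ^ n := by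
  induction n with
  | zero => simp [strs]
  | succ n ih =>
    simp only [strs, List.length_flatMap]
    simp [ih, pow_succ]

/-- Finset version -/
def strF (n : ℕ) : Finset (List Bool) := (strs n).toFinset

theorem mem_strF {n : ℕ} {σ : List Bool} : σ ∈ strF n ↔ σ.length = n := by
  simp [strF, mem_strs]

theorem card_strF (n : ℕ) : (strF n).card = 2 ^ n := by
  rw [strF, List.toFinset_card_of_nodup (nodup_strs n), length_strs]

theorem card_ext (σ : List Bool) (s : ℕ) (h : σ.length ≤ s) :
    ((strF s).filter fun ρ => σ <+: ρ).card = 2 ^ (s - σ.length) := by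
  rw [← card_strF]
  symm
  apply Finset.card_bij (fun τ _ => σ ++ τ)
  · intro τ hτ
    simp only [mem_strF, Finset.mem_filter, List.length_append] at *
    exact ⟨by omega, List.prefix_append _ _⟩
  · intro a _ b _ hab
    exact List.append_cancel_left hab
  · intro ρ hρ
    simp only [mem_strF, Finset.mem_filter] at *
    obtain ⟨h1, t, rfl⟩ := hρ
    exact ⟨t, by simp at *; omega, rfl⟩

/-- prefix-free finite sets: Kraft counting -/
theorem kraft_count (F : Finset (List Bool)) (s : ℕ) (hs : ∀ σ ∈ F, σ.length ≤ s)
    (hF : ∀ σ ∈ F, ∀ τ ∈ F, σ <+: τ → σ = τ) :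
    ∑ σ ∈ F, 2 ^ (s - σ.length) = ((strF s).filter fun ρ => ∃ σ ∈ F, σ <+: ρ).card := by
  have : ((strF s).filter fun ρ => ∃ σ ∈ F, σ <+: ρ) =
      F.biUnion (fun σ => (strF s).filter fun ρ => σ <+: ρ) := by
    ext ρ; simp; tauto
  rw [this, Finset.card_biUnion]
  · exact Finset.sum_congr rfl (fun σ hσ => (card_ext σ s (hs σ hσ)).symm)
  · intro σ hσ τ hτ hne
    simp only [Function.onFun]
    rw [Finset.disjoint_left]
    intro ρ h1 h2
    simp only [Finset.mem_filter] at h1 h2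
    rcases List.prefix_or_prefix_of_prefix h1.2 h2.2 with h | h
    · exact hne (hF _ hσ _ hτ h)
    · exact hne (hF _ hτ _ hσ h).symm

/-- the weight 2^(-n) -/
noncomputable def w (n : ℕ) : ℝ := (1 / 2) ^ n

theorem w_pos (n : ℕ) : 0 < w n := by unfold w; positivity
theorem w_nonneg (n : ℕ) : 0 ≤ w n := (w_pos n).le
theorem w_zero : w 0 = 1 := by simp [w]
theorem w_add (m n : ℕ) : w (m + n) = w m * w n := by simp [w, pow_add]
theorem w_succ (n : ℕ) : w (n + 1) = w n / 2 := by simp [w, pow_succ]; ring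
theorem w_mul_pow (n : ℕ) : w n * 2 ^ n = 1 := by
  unfold w; rw [← mul_pow]; norm_num
theorem w_le_one (n : ℕ) : w n ≤ 1 := by
  unfold w; apply pow_le_one₀ <;> norm_num
theorem w_eq (n : ℕ) : w n = 1 / 2 ^ n := by simp [w]
theorem w_anti {m n : ℕ} (h : m ≤ n) : w n ≤ w m := by
  unfold w; exact pow_le_pow_of_le_one (by norm_num) (by norm_num) h
theorem pow_sub_w (s n : ℕ) (h : n ≤ s) : (2 : ℝ) ^ (s - n) = 2 ^ s * w n := by
  obtain ⟨d, rfl⟩ := Nat.exists_eq_add_of_le h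
  rw [Nat.add_sub_cancel_left, pow_add, mul_right_comm, mul_comm _ (w n), w_mul_pow, one_mul]

theorem kraft_sum (F : Finset (List Bool)) (s : ℕ) (hs : ∀ σ ∈ F, σ.length ≤ s)
    (hF : ∀ σ ∈ F, ∀ τ ∈ F, σ <+: τ → σ = τ) :
    ∑ σ ∈ F, w σ.length = w s * ((strF s).filter fun ρ => ∃ σ ∈ F, σ <+: ρ).card := by
  rw [← kraft_count F s hs hF]
  push_cast
  rw [Finset.mul_sum]
  refine Finset.sum_congr rfl fun σ hσ => ?_
  rw [pow_sub_w s _ (hs σ hσ), ← mul_assoc, w_mul_pow, one_mul]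

theorem kraft_le_one (F : Finset (List Bool))
    (hF : ∀ σ ∈ F, ∀ τ ∈ F, σ <+: τ → σ = τ) :
    ∑ σ ∈ F, w σ.length ≤ 1 := by
  have hs : ∀ σ ∈ F, σ.length ≤ F.sup List.length := fun σ hσ => Finset.le_sup (f := List.length) hσ
  rw [kraft_sum F _ hs hF, ← w_mul_pow (F.sup List.length)]
  refine mul_le_mul_of_nonneg_left ?_ (w_nonneg _)
  have := Finset.card_filter_le (strF (F.sup List.length)) (fun ρ => ∃ σ ∈ F, σ <+: ρ)
  rw [card_strF] at this
  exact_mod_cast this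

/-- sums of weights -/
noncomputable def wsum (l : List ℕ) : ℝ := (l.map w).sum

theorem wsum_nil : wsum [] = 0 := by simp [wsum]
theorem wsum_cons (a : ℕ) (l : List ℕ) : wsum (a :: l) = w a + wsum l := by simp [wsum]
theorem wsum_append (a l : List ℕ) : wsum (a ++ l) = wsum a + wsum l := by simp [wsum]
theorem wsum_replicate (n a : ℕ) : wsum (List.replicate n a) = n * w a := by simp [wsum]
theorem wsum_nonneg (l : List ℕ) : 0 ≤ wsum l := by
  induction l with
  | nil => simp [wsum]
  | cons a l ih => rw [wsum_cons]; have := w_nonneg a; linarith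

theorem wsum_scale (l : List ℕ) (S : ℕ) (h : ∀ a ∈ l, a ≤ S) :
    wsum l * 2 ^ S = ((l.map fun a => 2 ^ (S - a)).sum : ℕ) := by
  induction l with
  | nil => simp [wsum]
  | cons a l ih =>
    rw [wsum_cons, add_mul, ih (fun b hb => h b (List.mem_cons_of_mem _ hb))]
    simp only [List.map_cons, List.sum_cons]
    push_cast
    rw [pow_sub_w S a (h a (by simp))]
    ring

@[fun_prop] theorem pr_wsum_le {α : Type*} [Primcodable α] {f g : α → List ℕ} (hf : Primrec f)
    (hg : Primrec g) : PrimrecPred fun a => wsum (f a) ≤ wsum (g a) := by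
  refine (show PrimrecPred fun a =>
    ((f a).map fun x => 2 ^ (((f a).sum + (g a).sum) - x)).sum ≤
    ((g a).map fun x => 2 ^ (((f a).sum + (g a).sum) - x)).sum by fun_prop).of_eq ?_
  intro a
  have h1 := wsum_scale (f a) ((f a).sum + (g a).sum)
    (fun x hx => (List.le_sum_of_mem hx).trans (Nat.le_add_right _ _))
  have h2 := wsum_scale (g a) ((f a).sum + (g a).sum)
    (fun x hx => (List.le_sum_of_mem hx).trans (Nat.le_add_left _ _))
  rw [← Nat.cast_le (α := ℝ), ← h1, ← h2]
  exact mul_le_mul_iff_left₀ (by positivity)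

/-! ## Kraft-Chaitin theorem and payments -/

def val (σ : List Bool) : ℕ := σ.foldl (fun v b => 2 * v + b.toNat) 0

theorem val_concat (σ : List Bool) (b : Bool) : val (σ ++ [b]) = 2 * val σ + b.toNat := by
  simp [val]

@[fun_prop] theorem pr_val {α : Type*} [Primcodable α] {f : α → List Bool} (hf : Primrec f) :
    Primrec fun a => val (f a) := by
  have hb : Primrec Bool.toNat := Primrec.dom_bool _
  exact Primrec.list_foldl (g := fun _ => 0) (h := fun _ (p : ℕ × Bool) => 2 * p.1 + p.2.toNat) hf
    (by fun_prop) (show Primrec fun p : α × ℕ × Bool => 2 * p.2.1 + p.2.2.toNat by fun_prop)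

theorem val_append (σ τ : List Bool) : val (σ ++ τ) = val σ * 2 ^ τ.length + val τ := by
  induction τ using List.reverseRecOn with
  | nil => simp [val]
  | append_singleton τ b ih =>
    rw [← List.append_assoc, val_concat, ih, val_concat]
    simp [pow_succ]; ring

theorem val_lt (σ : List Bool) : val σ < 2 ^ σ.length := by
  induction σ using List.reverseRecOn with
  | nil => simp [val]
  | append_singleton τ b ih =>
    rw [val_concat]
    have : b.toNat ≤ 1 := Bool.toNat_le b
    simp [pow_succ]; omega

theorem exists_val (n j : ℕ) (h : j < 2 ^ n) : ∃ σ : List Bool, σ.length = n ∧ val σ = j := by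
  induction n generalizing j with
  | zero => exact ⟨[], rfl, by simp [val] at *; omega⟩
  | succ n ih =>
    obtain ⟨σ, h1, h2⟩ := ih (j / 2) (by rw [pow_succ] at h; omega)
    refine ⟨σ ++ [decide (j % 2 = 1)], by simp [h1], ?_⟩
    rw [val_concat, h2]
    rcases Nat.mod_two_eq_zero_or_one j with h3 | h3 <;> simp [h3] <;> omega

def klist (req : ℕ → Option (ℕ × ℕ)) (s : ℕ) : List ℕ :=
  (List.range s).flatMap fun t => ((req t).map Prod.snd).toList

theorem klist_succ (req : ℕ → Option (ℕ × ℕ)) (s : ℕ) :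
    klist req (s + 1) = klist req s ++ ((req s).map Prod.snd).toList := by
  simp [klist, List.range_succ]

theorem wsum_klist_mono (req : ℕ → Option (ℕ × ℕ)) {s t : ℕ} (h : s ≤ t) :
    wsum (klist req s) ≤ wsum (klist req t) := by
  induction t, h using Nat.le_induction with
  | base => exact le_rfl
  | succ t _ ih =>
    rw [klist_succ, wsum_append]
    have := wsum_nonneg ((req t).map Prod.snd).toList
    linarith

/-- the machine relation -/
def KCrel (req : ℕ → Option (ℕ × ℕ)) (σ : List Bool) (s : ℕ) (k : ℕ) : Prop :=
  σ.length = k + 1 ∧ wsum (klist req s) ≤ wsum (List.replicate (val σ) σ.length) ∧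
    wsum (List.replicate (val σ + 1) σ.length) ≤ wsum (k :: klist req s)

theorem KCrel_unique {req : ℕ → Option (ℕ × ℕ)} {σ τ : List Bool} {s t : ℕ} {p q : ℕ × ℕ}
    (h1 : KCrel req σ s p.2) (h2 : KCrel req τ t q.2) (hp : req s = some p) (hq : req t = some q)
    (hστ : σ <+: τ) : s = t := by
  have key : ∀ s t : ℕ, ∀ p : ℕ × ℕ, req s = some p → s < t →
      wsum (p.2 :: klist req s) ≤ wsum (klist req t) := by
    intro s t p hp hst
    refine le_trans (le_of_eq ?_) (wsum_klist_mono req (show s + 1 ≤ t from hst))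
    rw [klist_succ, wsum_append, hp, wsum_cons]
    simp [wsum, add_comm]
  obtain ⟨ρ, rfl⟩ := hστ
  obtain ⟨a1, a2, a3⟩ := h1
  obtain ⟨b1, b2, b3⟩ := h2
  rw [wsum_replicate] at a2 a3 b2 b3
  rw [List.length_append, w_add, val_append] at b2 b3
  have hv := val_lt ρ
  have hv2 : (val ρ : ℝ) + 1 ≤ 2 ^ ρ.length := by exact_mod_cast hv
  push_cast at *
  have hw := w_pos σ.length
  have hw2 := w_pos ρ.length
  have hw3 := w_mul_pow ρ.length
  have e1 : ((val σ : ℝ) * 2 ^ ρ.length + val ρ) * (w σ.length * w ρ.length) =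
      val σ * w σ.length + val ρ * w σ.length * w ρ.length := by
    calc _ = val σ * w σ.length * (w ρ.length * 2 ^ ρ.length) + val ρ * w σ.length * w ρ.length := by
          ring
      _ = _ := by rw [hw3]; ring
  have e2 : ((val σ : ℝ) * 2 ^ ρ.length + val ρ + 1) * (w σ.length * w ρ.length) =
      val σ * w σ.length + val ρ * w σ.length * w ρ.length + w σ.length * w ρ.length := by
    rw [add_mul, e1]; ring
  rw [e1] at b2
  rw [e2] at b3
  have n1 : 0 ≤ (val ρ : ℝ) * w σ.length * w ρ.length := by positivity
  have n2 : (val ρ : ℝ) * w σ.length * w ρ.length + w σ.length * w ρ.length ≤ w σ.length := by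
    have := mul_le_mul_of_nonneg_right hv2 (mul_nonneg hw.le hw2.le)
    calc _ = ((val ρ : ℝ) + 1) * (w σ.length * w ρ.length) := by ring
      _ ≤ 2 ^ ρ.length * (w σ.length * w ρ.length) := this
      _ = w σ.length * (w ρ.length * 2 ^ ρ.length) := by ring
      _ = _ := by rw [hw3, mul_one]
  have n3 : 0 < w σ.length * w ρ.length := by positivity
  rcases lt_trichotomy s t with h | h | h
  · have := key s t p hp h
    nlinarith
  · exact h
  · have := key t s q hq h
    nlinarith

open Classical in
theorem kraft_chaitin (req : ℕ → Option (ℕ × ℕ)) (hreq : Primrec req)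
    (hsum : ∀ s, wsum (klist req s) ≤ 1) :
    ∃ e, PrefixFreeMachine e ∧ ∀ s x k, req s = some (x, k) →
      ∃ σ : List Bool, σ.length = k + 1 ∧
        x ∈ (Denumerable.ofNat Nat.Partrec.Code e).eval (Encodable.encode σ) := by
  have hkl : Primrec fun s => klist req s := by
    unfold klist
    fun_prop
  have hrel : PrimrecPred fun p : (List Bool × ℕ) × ℕ => KCrel req p.1.1 p.1.2 p.2 := by
    unfold KCrel; fun_prop
  let g : ℕ → ℕ → Option ℕ := fun n s => (Encodable.decode n : Option (List Bool)).bind fun σ =>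
    (req s).bind fun xk => if KCrel req σ s xk.2 then some xk.1 else none
  have hg : Primrec fun p : ℕ × ℕ => g p.1 p.2 := by
    have : Primrec fun q : ((ℕ × ℕ) × List Bool) × (ℕ × ℕ) =>
        if KCrel req q.1.2 q.1.1.2 q.2.2 then some q.2.1 else none := by
      have : PrimrecPred fun q : ((ℕ × ℕ) × List Bool) × (ℕ × ℕ) =>
          KCrel req q.1.2 q.1.1.2 q.2.2 := hrel.comp
            (show Primrec fun q : ((ℕ × ℕ) × List Bool) × (ℕ × ℕ) =>
              ((q.1.2, q.1.1.2), q.2.2) by fun_prop)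
      fun_prop
    fun_prop
  have gspec : ∀ n s x, g n s = some x ↔ ∃ σ : List Bool, Encodable.decode n = some σ ∧
      ∃ k, req s = some (x, k) ∧ KCrel req σ s k := by
    intro n s x
    simp only [g, Option.bind_eq_some_iff]
    constructor
    · rintro ⟨σ, h1, ⟨x', k⟩, h2, h3⟩
      split_ifs at h3 with h4
      simp at h3
      subst h3
      exact ⟨σ, h1, k, h2, h4⟩
    · rintro ⟨σ, h1, k, h2, h3⟩
      exact ⟨σ, h1, (x, k), h2, by simp [h3]⟩
  have h2 : Partrec fun n : ℕ => Nat.rfindOpt fun s => g n s :=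
    Partrec.rfindOpt (hg.to_comp.to₂ (f := fun p : ℕ × ℕ => g p.1 p.2))
  obtain ⟨c, hc⟩ := Nat.Partrec.Code.exists_code.1 (Partrec.nat_iff.1 h2)
  have hdom : ∀ σ : List Bool, (c.eval (Encodable.encode σ)).Dom →
      ∃ s p, req s = some p ∧ KCrel req σ s p.2 := by
    intro σ hσ
    rw [hc, Nat.rfindOpt_dom] at hσ
    obtain ⟨s, x, hx⟩ := hσ
    rw [Option.mem_def, gspec] at hx
    obtain ⟨σ', h1, k, h3, h4⟩ := hx
    rw [Encodable.encodek] at h1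
    cases h1
    exact ⟨s, (x, k), h3, h4⟩
  refine ⟨Encodable.encode c, ?_, ?_⟩
  · intro σ hσ τ hτ hστ
    simp only [machineDom, Denumerable.ofNat_encode, Set.mem_ofPred_eq] at hσ hτ
    obtain ⟨s, p, hp, h1⟩ := hdom σ hσ
    obtain ⟨t, q, hq, h2⟩ := hdom τ hτ
    have := KCrel_unique h1 h2 hp hq hστ
    subst this
    rw [hp] at hq
    cases hq
    exact hστ.eq_of_length (by rw [h1.1, h2.1])
  · intro s x k hs
    have hb : wsum (klist req s) + w k ≤ 1 := by
      have := hsum (s + 1)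
      rw [klist_succ, wsum_append, hs] at this
      simpa [wsum] using this
    set p := wsum (klist req s) with hp
    have hp0 : 0 ≤ p := wsum_nonneg _
    have hw := w_pos (k + 1)
    have hws := w_succ k
    have hmul := w_mul_pow (k + 1)
    have hpow : (0 : ℝ) < 2 ^ (k + 1) := by positivity
    have c1 := Nat.le_ceil (p * 2 ^ (k + 1))
    have c2 := Nat.ceil_lt_add_one (show 0 ≤ p * 2 ^ (k + 1) by positivity)
    set j := ⌈p * 2 ^ (k + 1)⌉₊ with hj
    have d1 : p ≤ j * w (k + 1) := by
      have := mul_le_mul_of_nonneg_right c1 hw.le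
      calc p = p * (w (k + 1) * 2 ^ (k + 1)) := by rw [hmul, mul_one]
        _ = p * 2 ^ (k + 1) * w (k + 1) := by ring
        _ ≤ _ := this
    have d2 : j * w (k + 1) < p + w (k + 1) := by
      have := mul_lt_mul_of_pos_right c2 hw
      calc j * w (k + 1) < (p * 2 ^ (k + 1) + 1) * w (k + 1) := this
        _ = p * (w (k + 1) * 2 ^ (k + 1)) + w (k + 1) := by ring
        _ = _ := by rw [hmul, mul_one]
    have hjlt : j < 2 ^ (k + 1) := by
      have : (j : ℝ) * w (k + 1) < 2 ^ (k + 1) * w (k + 1) := by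
        rw [mul_comm (2 ^ (k + 1)), hmul]; linarith
      have := lt_of_mul_lt_mul_right this hw.le
      exact_mod_cast this
    obtain ⟨σ, hl, hv⟩ := exists_val (k + 1) j hjlt
    refine ⟨σ, hl, ?_⟩
    rw [Denumerable.ofNat_encode, hc]
    have hrelσ : KCrel req σ s k := by
      refine ⟨hl, ?_, ?_⟩
      · rw [wsum_replicate, hl, hv]; exact d1
      · rw [wsum_replicate, hl, hv, wsum_cons]; push_cast; linarith
    have hgs : g (Encodable.encode σ) s = some x :=
      (gspec _ _ _).2 ⟨σ, Encodable.encodek σ, k, hs, hrelσ⟩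
    have hd : (Nat.rfindOpt fun s => g (Encodable.encode σ) s).Dom :=
      Nat.rfindOpt_dom.2 ⟨s, x, hgs⟩
    obtain ⟨y, hy⟩ := Part.dom_iff_mem.1 hd
    obtain ⟨t, ht⟩ := Nat.rfindOpt_spec hy
    rw [Option.mem_def, gspec] at ht
    obtain ⟨σ', h1, k', h3, h4⟩ := ht
    rw [Encodable.encodek] at h1
    cases h1
    have := KCrel_unique (p := (x, k)) (q := (y, k')) hrelσ h4 hs h3 (List.prefix_refl σ)
    subst this
    rw [hs] at h3
    cases h3
    exact hy

theorem Kcpx_le_of {e : ℕ} {σ : List Bool} {x : ℕ} (h : PrefixFreeMachine e)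
    (hx : x ∈ (Denumerable.ofNat Nat.Partrec.Code e).eval (Encodable.encode σ)) :
    Kcpx x ≤ σ.length + 2 * e + 2 := Nat.sInf_le ⟨e, σ, h, hx, rfl⟩

theorem Kcpx_attained (x : ℕ) : ∃ e, ∃ σ : List Bool, PrefixFreeMachine e ∧
    x ∈ (Denumerable.ofNat Nat.Partrec.Code e).eval (Encodable.encode σ) ∧
    Kcpx x = σ.length + 2 * e + 2 := by
  have : Set.Nonempty {k | ∃ e, ∃ σ : List Bool, PrefixFreeMachine e ∧
      x ∈ (Denumerable.ofNat Nat.Partrec.Code e).eval (Encodable.encode σ) ∧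
      k = σ.length + 2 * e + 2} := by
    obtain ⟨e, he, h⟩ := kraft_chaitin (fun s => if s = 0 then some (x, 0) else none)
      (by fun_prop) (by
        intro s
        cases s with
        | zero => simp [klist, wsum]
        | succ s =>
          rw [klist, List.range_succ_eq_map]
          have : (List.range s).flatMap (fun _ => ([] : List ℕ)) = [] := by simp
          simp [wsum_cons, w_zero, List.flatMap_map, this, wsum_nil])
    obtain ⟨σ, h1, h2⟩ := h 0 x 0 (by simp)
    exact ⟨_, e, σ, he, h2, rfl⟩
  exact Nat.sInf_mem this

/-- stage-bounded prefix-freeness -/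
def PFst (e s : ℕ) : Prop := ¬ ∃ n1 < s, ∃ n2 < s, ∃ σ ∈ strs n1, ∃ τ ∈ strs n2,
  (WStage e (Encodable.encode σ) s ∧ WStage e (Encodable.encode τ) s) ∧ σ <+: τ ∧ ¬ σ = τ

def paidAt (s x k : ℕ) : Prop := ∃ e ≤ k, ∃ n < s, ∃ π ∈ strs n, n + 2 * e + 2 ≤ k ∧
  Nat.Partrec.Code.evaln s (Denumerable.ofNat Nat.Partrec.Code e) (Encodable.encode π) = some x ∧
  PFst e s

def paid (s x k : ℕ) : Prop := ∃ t ≤ s, paidAt t x k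

@[fun_prop] theorem pr_PFst : PrimrecPred fun p : ℕ × ℕ => PFst p.1 p.2 := by
  unfold PFst; fun_prop

@[fun_prop] theorem pr_paidAt : PrimrecPred fun p : ℕ × ℕ × ℕ => paidAt p.1 p.2.1 p.2.2 := by
  unfold paidAt; fun_prop

@[fun_prop] theorem pr_paid : PrimrecPred fun p : ℕ × ℕ × ℕ => paid p.1 p.2.1 p.2.2 := by
  unfold paid; fun_prop

theorem paid.mono {s t x k : ℕ} (h : paid s x k) (hst : s ≤ t) : paid t x k := by
  obtain ⟨s', h1, h2⟩ := h; exact ⟨s', h1.trans hst, h2⟩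

theorem paid_of_Kcpx {x k : ℕ} (h : Kcpx x ≤ k) : ∃ s, paid s x k := by
  obtain ⟨e, σ, hpf, hx, hk⟩ := Kcpx_attained x
  obtain ⟨s, hs⟩ := Nat.Partrec.Code.evaln_complete.1 hx
  have hs' := Nat.Partrec.Code.evaln_mono (Nat.le_add_right s (σ.length + 1)) hs
  refine ⟨s + (σ.length + 1), _, le_rfl, e, by omega, σ.length, by omega, σ, mem_strs.2 rfl,
    by omega, hs', ?_⟩
  rintro ⟨n1, _, n2, _, σ', _, τ', _, ⟨h1, h2⟩, h3, h4⟩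
  exact h4 (hpf σ' ((wenum_iff _ _).2 ⟨_, h1⟩) τ' ((wenum_iff _ _).2 ⟨_, h2⟩) h3)

theorem sum_w_le (N : ℕ) : ∑ e ∈ Finset.range N, w (e + 1) ≤ 1 := by
  have : ∑ e ∈ Finset.range N, w (e + 1) = 1 - w N := by
    induction N with
    | zero => simp [w_zero]
    | succ n ih => rw [Finset.sum_range_succ, ih, w_succ]; ring
  rw [this]; have := w_nonneg N; linarith

theorem paid_sum (T : Finset ℕ) (k : ℕ → ℕ) (s : ℕ) (h : ∀ x ∈ T, paid s x (k x)) :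
    ∑ x ∈ T, w (k x) ≤ 1 := by
  classical
  have h' : ∀ x, ∃ (t e : ℕ) (π : List Bool), x ∈ T → π.length < t ∧ π.length + 2 * e + 2 ≤ k x ∧
      Nat.Partrec.Code.evaln t (Denumerable.ofNat Nat.Partrec.Code e) (Encodable.encode π) = some x
      ∧ PFst e t := by
    intro x
    by_cases hx : x ∈ T
    · obtain ⟨t, _, e, _, n, hn, π, hπ, h1, h2, h3⟩ := h x hx
      rw [mem_strs] at hπ
      subst hπ
      exact ⟨t, e, π, fun _ => ⟨hn, h1, h2, h3⟩⟩
    · exact ⟨0, 0, [], fun h => absurd h hx⟩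
  choose t e π hh using h'
  have inj : ∀ x ∈ T, ∀ y ∈ T, e x = e y → π x = π y → x = y := by
    intro x hx y hy h1 h2
    have a1 := Nat.Partrec.Code.evaln_sound (hh x hx).2.2.1
    have a2 := Nat.Partrec.Code.evaln_sound (hh y hy).2.2.1
    rw [h1, h2] at a1
    exact Part.mem_unique a1 a2
  have pf : ∀ x ∈ T, ∀ y ∈ T, e x = e y → π x <+: π y → π x = π y := by
    intro x hx y hy h1 h2
    by_contra hne
    obtain ⟨a1, a2, a3, a4⟩ := hh x hx
    obtain ⟨b1, b2, b3, b4⟩ := hh y hy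
    have wa : WStage (e x) (Encodable.encode (π x)) (t x) := by unfold WStage; rw [a3]; rfl
    have wb : WStage (e y) (Encodable.encode (π y)) (t y) := by unfold WStage; rw [b3]; rfl
    rw [h1] at wa a4
    rcases le_total (t x) (t y) with h | h
    · exact b4 ⟨_, a1.trans_le h, _, b1, _, mem_strs.2 rfl, _, mem_strs.2 rfl,
        ⟨wa.mono h, wb⟩, h2, hne⟩
    · exact a4 ⟨_, a1, _, b1.trans_le h, _, mem_strs.2 rfl, _, mem_strs.2 rfl,
        ⟨wa, wb.mono h⟩, h2, hne⟩
  have step1 : ∑ x ∈ T, w (k x) ≤ ∑ x ∈ T, w (e x + 1) * w (π x).length := by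
    refine Finset.sum_le_sum fun x hx => ?_
    rw [← w_add]
    apply w_anti
    have := (hh x hx).2.1
    omega
  have step2 : ∑ x ∈ T, w (e x + 1) * w (π x).length =
      ∑ i ∈ Finset.range (T.sup e + 1), ∑ x ∈ T with e x = i, w (e x + 1) * w (π x).length := by
    rw [Finset.sum_fiberwise_of_maps_to]
    intro x hx
    rw [Finset.mem_range, Nat.lt_succ_iff]
    exact Finset.le_sup hx
  refine step1.trans (step2.trans_le (le_trans ?_ (sum_w_le (T.sup e + 1))))
  refine Finset.sum_le_sum fun i _ => ?_
  have : ∑ x ∈ T with e x = i, w (e x + 1) * w (π x).length =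
      w (i + 1) * ∑ σ ∈ (T.filter fun x => e x = i).image π, w σ.length := by
    rw [Finset.sum_image, Finset.mul_sum]
    · refine Finset.sum_congr rfl fun x hx => ?_
      rw [(Finset.mem_filter.1 hx).2]
    · intro x hx y hy hxy
      simp only [Finset.coe_filter, Set.mem_ofPred_eq] at hx hy
      exact inj x hx.1 y hy.1 (by rw [hx.2, hy.2]) hxy
  rw [this]
  have k1 := kraft_le_one ((T.filter fun x => e x = i).image π) (by
    intro σ hσ τ hτ hp
    simp only [Finset.mem_image, Finset.mem_filter] at hσ hτ
    obtain ⟨x, ⟨hx, hx2⟩, rfl⟩ := hσ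
    obtain ⟨y, ⟨hy, hy2⟩, rfl⟩ := hτ
    exact pf x hx y hy (by rw [hx2, hy2]) hp)
  have := w_nonneg (i + 1)
  nlinarith

/-! ## Covering theorem: the construction -/

structure CTD where
  P : ℕ → Prop
  use : ℕ → List Bool
  h : ℕ → ℕ
  hP : PrimrecPred P
  huse : Primrec use
  hh : Primrec h

namespace CTD
variable (D : CTD)

abbrev Nd := List (ℕ × ℕ)
abbrev Ev := List (ℕ × ℕ) × Bool

def kk (b : ℕ) (ν : Nd) : ℕ := b + 1 + (ν.map fun p => 2 * b + 8 + p.1 + D.h p.1).sum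

theorem kk_nil (b : ℕ) : D.kk b [] = b + 1 := by simp [kk]
theorem kk_cons (b x t : ℕ) (ν : Nd) :
    D.kk b ((x, t) :: ν) = D.kk b ν + (2 * b + 7) + (x + 1) + D.h x := by
  simp [kk]; ring

def base : Nd → List Bool :=
  fun ν => ν.foldr (fun p σ => if σ.length ≤ (D.use p.1).length then D.use p.1 else σ) []

theorem base_nil : D.base [] = [] := rfl
theorem base_cons (x t : ℕ) (ν : Nd) : D.base ((x, t) :: ν) =
    if (D.base ν).length ≤ (D.use x).length then D.use x else D.base ν := rfl

def nlen (b : ℕ) (κ : Nd) : ℕ :=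
  Nat.pair (Nat.pair b (Encodable.encode κ)) (D.base κ).length

def Lv (b : ℕ) : ℕ := 2 ^ (2 * b + 3)

def Started (Z : List Ev) (ν : Nd) : Prop := ν = [] ∨ (ν, false) ∈ Z

open Classical in
noncomputable def chList (b : ℕ) (Z : List Ev) (ν : Nd) : List ℕ :=
  Z.flatMap fun ev => if ev.2 = true ∧ ev.1.tail = ν ∧ ¬ ev.1 = [] then [D.kk b ev.1] else []

def active (b : ℕ) (Z : List Ev) (ν : Nd) : Prop :=
  ¬ wsum [D.kk b ν] ≤ wsum ((D.kk b ν + (2 * b + 7)) :: D.chList b Z ν)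

open Classical in
noncomputable def payList (b s : ℕ) (Z : List Ev) (ν : Nd) : List ℕ :=
  Z.flatMap fun ev => if ev.2 = false ∧ ev.1.length = Lv b ∧ ν <:+ ev.1 then
    ((strs (D.nlen b ev.1)).filter fun B => decide (D.base ν <+: B ∧
      paid s (Encodable.encode B) (D.kk b ev.1 + b))).map fun _ => D.kk b ev.1 else []

def hd (κ : Nd) : ℕ × ℕ := κ.head?.getD (0, 0)

def startOK (b : ℕ) (Z : List Ev) (κ : Nd) : Prop :=
  ¬ κ = [] ∧ Started Z κ.tail ∧ ¬ Started Z κ ∧ κ.tail.length < Lv b ∧ D.P (hd κ).1 ∧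
    (D.use (hd κ).1 <+: D.base κ.tail ∨ D.base κ.tail <+: D.use (hd κ).1) ∧
    (hd κ).2 < 2 ^ ((hd κ).1 + 1) ∧
    ((hd κ).2 = 0 ∨ (((hd κ).1, (hd κ).2 - 1) :: κ.tail, true) ∈ Z) ∧ D.active b Z κ.tail

def haltOK (b s : ℕ) (Z : List Ev) (ν : Nd) : Prop :=
  Started Z ν ∧ ¬ (ν, true) ∈ Z ∧ (ν.length = Lv b ∨ ¬ D.active b Z ν) ∧
    wsum (List.replicate (Lv b - ν.length + 1) (D.kk b ν + 2)) ≤ wsum (D.payList b s Z ν)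

def OK (b s : ℕ) (Z : List Ev) (ev : Ev) : Prop :=
  (ev.2 = false ∧ D.startOK b Z ev.1) ∨ (ev.2 = true ∧ D.haltOK b s Z ev.1)

open Classical in
noncomputable def step (b s : ℕ) (Z : List Ev) : List Ev :=
  ((Encodable.decode s.unpair.1 : Option Ev).map fun ev =>
    if D.OK b s Z ev then ev :: Z else Z).getD Z

noncomputable def Zs (b s : ℕ) : List Ev := Nat.rec [] (fun s Z => D.step b s Z) s

theorem Zs_succ (b s : ℕ) : D.Zs b (s + 1) = D.step b s (D.Zs b s) := rfl
theorem Zs_zero (b : ℕ) : D.Zs b 0 = [] := rfl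

theorem step_cases (b s : ℕ) : D.Zs b (s + 1) = D.Zs b s ∨
    ∃ ev, D.OK b s (D.Zs b s) ev ∧ D.Zs b (s + 1) = ev :: D.Zs b s := by
  classical
  rw [Zs_succ, step]
  cases h : (Encodable.decode s.unpair.1 : Option Ev) with
  | none => left; rfl
  | some ev =>
    by_cases hok : D.OK b s (D.Zs b s) ev
    · right; exact ⟨ev, hok, by simp [hok]⟩
    · left; simp [hok]

theorem step_do {b s : ℕ} {ev : Ev} (h : s.unpair.1 = Encodable.encode ev)
    (hok : D.OK b s (D.Zs b s) ev) : D.Zs b (s + 1) = ev :: D.Zs b s := by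
  rw [Zs_succ, step, h, Encodable.encodek]
  simp [hok]

section prim
variable {α : Type*} [Primcodable α]

theorem pr_P : PrimrecPred D.P := D.hP
attribute [fun_prop] pr_P
@[fun_prop] theorem pr_use : Primrec D.use := D.huse
@[fun_prop] theorem pr_h : Primrec D.h := D.hh

@[fun_prop] theorem pr_kk {f : α → ℕ} {g : α → Nd} (hf : Primrec f) (hg : Primrec g) :
    Primrec fun a => D.kk (f a) (g a) := by
  unfold kk; fun_prop

@[fun_prop] theorem pr_base {g : α → Nd} (hg : Primrec g) : Primrec fun a => D.base (g a) := by
  unfold base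
  exact pr_foldr (g := fun _ => [])
    (h := fun _ (p : ℕ × ℕ) σ => if σ.length ≤ (D.use p.1).length then D.use p.1 else σ) hg
    (by fun_prop) (by fun_prop)

@[fun_prop] theorem pr_nlen {f : α → ℕ} {g : α → Nd} (hf : Primrec f) (hg : Primrec g) :
    Primrec fun a => D.nlen (f a) (g a) := by
  unfold nlen; fun_prop

@[fun_prop] theorem pr_Lv {f : α → ℕ} (hf : Primrec f) : Primrec fun a => Lv (f a) := by
  unfold Lv; fun_prop

@[fun_prop] theorem pr_Started {f : α → List Ev} {g : α → Nd} (hf : Primrec f) (hg : Primrec g) :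
    PrimrecPred fun a => Started (f a) (g a) := by
  unfold Started; fun_prop

@[fun_prop] theorem pr_chList {e : α → ℕ} {f : α → List Ev} {g : α → Nd} (he : Primrec e)
    (hf : Primrec f) (hg : Primrec g) : Primrec fun a => D.chList (e a) (f a) (g a) := by
  unfold chList; fun_prop

@[fun_prop] theorem pr_active {e : α → ℕ} {f : α → List Ev} {g : α → Nd} (he : Primrec e)
    (hf : Primrec f) (hg : Primrec g) : PrimrecPred fun a => D.active (e a) (f a) (g a) := by
  unfold active; fun_prop

@[fun_prop] theorem pr_payList {e e2 : α → ℕ} {f : α → List Ev} {g : α → Nd} (he : Primrec e)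
    (he2 : Primrec e2)
    (hf : Primrec f) (hg : Primrec g) : Primrec fun a => D.payList (e a) (e2 a) (f a) (g a) := by
  unfold payList; fun_prop

@[fun_prop] theorem pr_hd {g : α → Nd} (hg : Primrec g) : Primrec fun a => hd (g a) := by
  unfold hd; fun_prop

@[fun_prop] theorem pr_startOK {e : α → ℕ} {f : α → List Ev} {g : α → Nd} (he : Primrec e)
    (hf : Primrec f) (hg : Primrec g) : PrimrecPred fun a => D.startOK (e a) (f a) (g a) := by
  unfold startOK; fun_prop

@[fun_prop] theorem pr_haltOK {e e2 : α → ℕ} {f : α → List Ev} {g : α → Nd} (he : Primrec e)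
    (he2 : Primrec e2)
    (hf : Primrec f) (hg : Primrec g) : PrimrecPred fun a => D.haltOK (e a) (e2 a) (f a) (g a) := by
  unfold haltOK; fun_prop

@[fun_prop] theorem pr_OK {e e2 : α → ℕ} {f : α → List Ev} {g : α → Ev} (he : Primrec e)
    (he2 : Primrec e2)
    (hf : Primrec f) (hg : Primrec g) : PrimrecPred fun a => D.OK (e a) (e2 a) (f a) (g a) := by
  unfold OK; fun_prop

@[fun_prop] theorem pr_step {e e2 : α → ℕ} {f : α → List Ev} (he : Primrec e)
    (he2 : Primrec e2)
    (hf : Primrec f) : Primrec fun a => D.step (e a) (e2 a) (f a) := by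
  unfold step; fun_prop

@[fun_prop] theorem pr_Zs {e e2 : α → ℕ} (he : Primrec e)
    (he2 : Primrec e2) : Primrec fun a => D.Zs (e a) (e2 a) := by
  unfold Zs; fun_prop

end prim

/-! ### monotonicity and fairness -/

theorem Zs_mono (b : ℕ) {s t : ℕ} (h : s ≤ t) {ev : Ev} (he : ev ∈ D.Zs b s) : ev ∈ D.Zs b t := by
  induction t, h using Nat.le_induction with
  | base => exact he
  | succ t _ ih =>
    rcases D.step_cases b t with h | ⟨ev', _, h⟩
    · rwa [h]
    · rw [h]; exact List.mem_cons_of_mem _ ih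

theorem fair (b s0 : ℕ) (ev : Ev)
    (h : ∀ s, s0 ≤ s → ev ∉ D.Zs b s → D.OK b s (D.Zs b s) ev) : ∃ s, ev ∈ D.Zs b s := by
  by_contra hn
  push Not at hn
  have h1 := h (Nat.pair (Encodable.encode ev) s0) (Nat.right_le_pair _ _) (hn _)
  have := D.step_do (by simp) h1
  exact hn (Nat.pair (Encodable.encode ev) s0 + 1) (by rw [this]; simp)

theorem Started.mono {Z Z' : List Ev} {ν : Nd} (h : Started Z ν) (hz : ∀ ev ∈ Z, ev ∈ Z') :
    Started Z' ν := h.imp id (hz _)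

end CTD

namespace CTD
variable (D : CTD)

open Classical in
noncomputable def FF (Z : List Ev) (c : Bool) : Finset Nd :=
  (Z.toFinset.filter fun ev => ev.2 = c).image Prod.fst

theorem mem_FF {Z : List Ev} {c : Bool} {κ : Nd} : κ ∈ FF Z c ↔ (κ, c) ∈ Z := by
  simp [FF]

theorem wsum_flatMap {ι : Type*} [DecidableEq ι] (Z : List ι) (hZ : Z.Nodup) (f : ι → List ℕ) :
    wsum (Z.flatMap f) = ∑ ev ∈ Z.toFinset, wsum (f ev) := by
  induction Z with
  | nil => simp [wsum]
  | cons a Z ih =>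
    rw [List.nodup_cons] at hZ
    rw [List.flatMap_cons, wsum_append, ih hZ.2, List.toFinset_cons, Finset.sum_insert]
    simpa using hZ.1

theorem sum_FF (Z : List Ev) (c : Bool) (p : Nd → Prop) [DecidablePred p] (g : Nd → ℝ)
    (f : Ev → ℝ) (hf1 : ∀ ev, ev.2 = c ∧ p ev.1 → f ev = g ev.1)
    (hf2 : ∀ ev, ¬ (ev.2 = c ∧ p ev.1) → f ev = 0) :
    ∑ ev ∈ Z.toFinset, f ev = ∑ κ ∈ (FF Z c).filter p, g κ := by
  classical
  have : ∀ ev, f ev = if ev.2 = c ∧ p ev.1 then g ev.1 else 0 := by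
    intro ev
    split_ifs with h
    · exact hf1 _ h
    · exact hf2 _ h
  simp only [this]
  rw [← Finset.sum_filter]
  symm
  apply Finset.sum_bij (fun κ _ => (κ, c))
  · intro κ hκ
    rw [Finset.mem_filter, mem_FF] at hκ
    simp [hκ]
  · intro a _ b _ h
    simpa using h
  · rintro ⟨κ, c'⟩ h
    simp only [Finset.mem_filter, List.mem_toFinset] at h
    obtain ⟨h1, rfl, h2⟩ := h
    exact ⟨κ, by rw [Finset.mem_filter, mem_FF]; exact ⟨h1, h2⟩, rfl⟩
  · intros; rfl

open Classical in
noncomputable def ch (Z : List Ev) (c : Bool) (ν : Nd) : Finset Nd :=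
  (FF Z c).filter fun κ => κ.tail = ν ∧ ¬ κ = []

theorem mem_ch {Z : List Ev} {c : Bool} {ν κ : Nd} :
    κ ∈ ch Z c ν ↔ (κ, c) ∈ Z ∧ ∃ x t, κ = (x, t) :: ν := by
  rw [ch, Finset.mem_filter, mem_FF]
  constructor
  · rintro ⟨h, h2, h3⟩
    refine ⟨h, ?_⟩
    cases κ with
    | nil => simp at h3
    | cons p κ => obtain ⟨x, t⟩ := p; simp at h2; exact ⟨x, t, by rw [h2]⟩
  · rintro ⟨h, x, t, rfl⟩
    exact ⟨h, by simp⟩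

theorem wsum_chList (b : ℕ) (Z : List Ev) (hZ : Z.Nodup) (ν : Nd) :
    wsum (D.chList b Z ν) = ∑ κ ∈ ch Z true ν, w (D.kk b κ) := by
  classical
  rw [chList, wsum_flatMap _ hZ, ch]
  refine sum_FF _ _ _ _ _ (fun ev h => ?_) (fun ev h => ?_)
  · rw [if_pos h]; simp [wsum]
  · rw [if_neg h]; simp [wsum]

theorem active_iff (b : ℕ) (Z : List Ev) (hZ : Z.Nodup) (ν : Nd) :
    D.active b Z ν ↔ ∑ κ ∈ ch Z true ν, w (D.kk b κ) + w (D.kk b ν + (2 * b + 7))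
      < w (D.kk b ν) := by
  rw [active, wsum_cons, wsum_cons, wsum_nil, wsum_chList D b Z hZ, not_le, add_zero, add_comm]

open Classical in
noncomputable def leaves (b : ℕ) (Z : List Ev) (ν : Nd) : Finset Nd :=
  (FF Z false).filter fun κ => κ.length = Lv b ∧ ν <:+ κ

open Classical in
noncomputable def Bs (b s : ℕ) (ν κ : Nd) : Finset (List Bool) :=
  (strF (D.nlen b κ)).filter fun B => D.base ν <+: B ∧ paid s (Encodable.encode B) (D.kk b κ + b)

noncomputable def payoff (b s : ℕ) (Z : List Ev) (ν : Nd) : ℝ :=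
  ∑ κ ∈ leaves b Z ν, (D.Bs b s ν κ).card * w (D.kk b κ)

theorem wsum_payList (b s : ℕ) (Z : List Ev) (hZ : Z.Nodup) (ν : Nd) :
    wsum (D.payList b s Z ν) = D.payoff b s Z ν := by
  classical
  rw [payList, wsum_flatMap _ hZ, payoff, leaves]
  refine sum_FF _ _ _ _ _ (fun ev h => ?_) (fun ev h => ?_)
  · rw [if_pos h, wsum, List.map_map]
    simp only [Function.comp_def, List.map_const', List.sum_replicate, nsmul_eq_mul]
    congr 2
    rw [← List.toFinset_card_of_nodup ((nodup_strs _).filter _)]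
    congr 1
    ext B
    simp [Bs, strF]
  · rw [if_neg h]; simp [wsum]

theorem Bs_mono (b : ℕ) {s t : ℕ} (h : s ≤ t) (ν κ : Nd) : D.Bs b s ν κ ⊆ D.Bs b t ν κ := by
  intro B hB
  classical
  simp only [Bs, Finset.mem_filter] at *
  exact ⟨hB.1, hB.2.1, hB.2.2.mono h⟩

theorem leaves_mono (b : ℕ) {Z Z' : List Ev} (h : ∀ ev ∈ Z, ev ∈ Z') (ν : Nd) :
    leaves b Z ν ⊆ leaves b Z' ν := by
  intro κ hκ
  classical
  simp only [leaves, Finset.mem_filter, mem_FF] at *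
  exact ⟨h _ hκ.1, hκ.2⟩

theorem ch_mono {Z Z' : List Ev} (h : ∀ ev ∈ Z, ev ∈ Z') (c : Bool) (ν : Nd) :
    ch Z c ν ⊆ ch Z' c ν := by
  intro κ hκ
  rw [mem_ch] at *
  exact ⟨h _ hκ.1, hκ.2⟩

theorem payoff_mono (b : ℕ) {s t : ℕ} (h : s ≤ t) {Z Z' : List Ev} (hz : ∀ ev ∈ Z, ev ∈ Z')
    (ν : Nd) : D.payoff b s Z ν ≤ D.payoff b t Z' ν := by
  unfold payoff
  refine le_trans (Finset.sum_le_sum fun κ _ => ?_)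
    (Finset.sum_le_sum_of_subset_of_nonneg (leaves_mono b hz ν) fun κ _ _ => ?_)
  · refine mul_le_mul_of_nonneg_right ?_ (w_nonneg _)
    exact_mod_cast Finset.card_le_card (D.Bs_mono b h ν κ)
  · have := w_nonneg (D.kk b κ); positivity

theorem sumch_mono (b : ℕ) {Z Z' : List Ev} (h : ∀ ev ∈ Z, ev ∈ Z') (c : Bool) (ν : Nd) :
    ∑ κ ∈ ch Z c ν, w (D.kk b κ) ≤ ∑ κ ∈ ch Z' c ν, w (D.kk b κ) :=
  Finset.sum_le_sum_of_subset_of_nonneg (ch_mono h c ν) fun _ _ _ => w_nonneg _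

/-- invariants of the construction -/
structure Inv (b s : ℕ) (Z : List Ev) : Prop where
  nodup : Z.Nodup
  st : ∀ ν x t, ((x, t) :: ν, false) ∈ Z → Started Z ν ∧ ν.length < Lv b ∧ D.P x ∧
    (D.use x <+: D.base ν ∨ D.base ν <+: D.use x) ∧ t < 2 ^ (x + 1) ∧
    ∀ t' < t, ((x, t') :: ν, true) ∈ Z
  st_nil : ([], false) ∉ Z
  ht : ∀ ν, (ν, true) ∈ Z → Started Z ν ∧
    (ν.length = Lv b ∨ w (D.kk b ν) ≤
      ∑ κ ∈ ch Z true ν, w (D.kk b κ) + w (D.kk b ν + (2 * b + 7))) ∧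
    (Lv b - ν.length + 1 : ℕ) * w (D.kk b ν + 2) ≤ D.payoff b s Z ν
  sum : ∀ ν, ∑ κ ∈ ch Z false ν, w (D.kk b κ) ≤ w (D.kk b ν)

theorem Inv.succ_same {b s : ℕ} {Z : List Ev} (h : D.Inv b s Z) : D.Inv b (s + 1) Z :=
  { h with
    ht := fun ν hν => by
      obtain ⟨h1, h2, h3⟩ := h.ht ν hν
      exact ⟨h1, h2, h3.trans (D.payoff_mono b (Nat.le_succ s) (fun _ h => h) ν)⟩ }

theorem Inv.start_of_halt {b s : ℕ} {Z : List Ev} (h : D.Inv b s Z) {x t : ℕ} {ν : Nd}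
    (hz : ((x, t) :: ν, true) ∈ Z) : ((x, t) :: ν, false) ∈ Z := by
  rcases (h.ht _ hz).1 with h | h
  · simp at h
  · exact h

theorem Inv.halt {b s : ℕ} {Z : List Ev} (h : D.Inv b s Z) (ν : Nd) (hok : D.haltOK b s Z ν) :
    D.Inv b (s + 1) ((ν, true) :: Z) := by
  have hsub : ∀ ev ∈ Z, ev ∈ (ν, true) :: Z := fun ev h => List.mem_cons_of_mem _ h
  obtain ⟨o1, o2, o3, o4⟩ := hok
  refine ⟨List.nodup_cons.2 ⟨o2, h.nodup⟩, ?_, ?_, ?_, ?_⟩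
  · intro ν' x t hm
    have hm' : ((x, t) :: ν', false) ∈ Z := by simpa using hm
    obtain ⟨a1, a2, a3, a4, a5, a6⟩ := h.st ν' x t hm'
    exact ⟨a1.mono hsub, a2, a3, a4, a5, fun t' ht => hsub _ (a6 t' ht)⟩
  · simpa using h.st_nil
  · intro ν' hm
    rcases List.mem_cons.1 hm with he | hm
    · simp at he
      subst he
      refine ⟨o1.mono hsub, ?_, ?_⟩
      · rcases o3 with o3 | o3
        · exact Or.inl o3
        · right
          rw [active_iff D b Z h.nodup, not_lt] at o3
          have := D.sumch_mono b hsub true ν'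
          linarith
      · rw [wsum_replicate, wsum_payList D b s Z h.nodup] at o4
        exact o4.trans (D.payoff_mono b (Nat.le_succ s) hsub ν')
    · obtain ⟨h1, h2, h3⟩ := h.ht ν' hm
      refine ⟨h1.mono hsub, h2.imp id fun h2 => ?_,
        h3.trans (D.payoff_mono b (Nat.le_succ s) hsub ν')⟩
      have := D.sumch_mono b hsub true ν'
      linarith
  · intro ν'
    refine le_trans (le_of_eq (Finset.sum_congr ?_ fun _ _ => rfl)) (h.sum ν')
    ext κ; simp [mem_ch]

theorem Inv.start {b s : ℕ} {Z : List Ev} (h : D.Inv b s Z) (κ : Nd) (hok : D.startOK b Z κ) :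
    D.Inv b (s + 1) ((κ, false) :: Z) := by
  classical
  have hsub : ∀ ev ∈ Z, ev ∈ (κ, false) :: Z := fun ev h => List.mem_cons_of_mem _ h
  obtain ⟨o1, o2, o3, o4, o5, o6, o7, o8, o9⟩ := hok
  cases κ with
  | nil => simp at o1
  | cons p ν =>
  obtain ⟨x, t⟩ := p
  simp only [List.tail_cons, hd, List.head?_cons, Option.getD_some] at o2 o4 o5 o6 o7 o8 o9
  have o3' : ((x, t) :: ν, false) ∉ Z := fun hc => o3 (Or.inr hc)
  have hprev : ∀ t' < t, ((x, t') :: ν, true) ∈ Z := by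
    intro t' ht'
    rcases o8 with o8 | o8
    · omega
    · rcases Nat.lt_or_ge t' (t - 1) with h1 | h1
      · exact (h.st ν x (t - 1) (h.start_of_halt D o8)).2.2.2.2.2 t' h1
      · have : t' = t - 1 := by omega
        rw [this]; exact o8
  have hst : ∀ ν' x' t', ((x', t') :: ν', false) ∈ ((x, t) :: ν, false) :: Z →
      Started (((x, t) :: ν, false) :: Z) ν' ∧ ν'.length < Lv b ∧ D.P x' ∧
    (D.use x' <+: D.base ν' ∨ D.base ν' <+: D.use x') ∧ t' < 2 ^ (x' + 1) ∧
    ∀ t'' < t', ((x', t'') :: ν', true) ∈ ((x, t) :: ν, false) :: Z := by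
    intro ν' x' t' hm
    rcases List.mem_cons.1 hm with he | hm
    · simp at he
      obtain ⟨⟨rfl, rfl⟩, rfl⟩ := he
      exact ⟨o2.mono hsub, o4, o5, o6, o7, fun t' ht' => hsub _ (hprev t' ht')⟩
    · obtain ⟨a1, a2, a3, a4, a5, a6⟩ := h.st ν' x' t' hm
      exact ⟨a1.mono hsub, a2, a3, a4, a5, fun t' ht => hsub _ (a6 t' ht)⟩
  refine ⟨List.nodup_cons.2 ⟨o3', h.nodup⟩, hst, ?_, ?_, ?_⟩
  · simpa using h.st_nil
  · intro ν' hm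
    have hm : (ν', true) ∈ Z := by simpa using hm
    obtain ⟨h1, h2, h3⟩ := h.ht ν' hm
    refine ⟨h1.mono hsub, h2.imp id fun h2 => ?_,
      h3.trans (D.payoff_mono b (Nat.le_succ s) hsub ν')⟩
    have := D.sumch_mono b hsub true ν'
    linarith
  · intro ν'
    by_cases hν : ν' = ν
    · subst hν
      rw [active_iff D b Z h.nodup] at o9
      set Z' := ((x, t) :: ν', false) :: Z with hZ'
      have hH : ch Z' true ν' = ch Z true ν' := by ext κ; simp [mem_ch, hZ']
      rw [← hH] at o9
      rw [← Finset.sum_filter_add_sum_filter_not _ (fun κ => κ ∈ ch Z' true ν')]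
      have e1 : ∑ κ ∈ ch Z' false ν' with κ ∈ ch Z' true ν', w (D.kk b κ) ≤
          ∑ κ ∈ ch Z' true ν', w (D.kk b κ) :=
        Finset.sum_le_sum_of_subset_of_nonneg (fun κ hκ => (Finset.mem_filter.1 hκ).2)
          fun _ _ _ => w_nonneg _
      have e2 : ∑ κ ∈ ch Z' false ν' with ¬ κ ∈ ch Z' true ν', w (D.kk b κ) ≤
          w (D.kk b ν' + (2 * b + 7)) := by
        set T := (ch Z' false ν').filter (fun κ => ¬ κ ∈ ch Z' true ν') with hT
        have hTm : ∀ κ ∈ T, ∃ x t, κ = (x, t) :: ν' ∧ (κ, false) ∈ Z' ∧ (κ, true) ∉ Z' := by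
          intro κ hκ
          rw [hT, Finset.mem_filter, mem_ch, mem_ch] at hκ
          obtain ⟨⟨h1, x, t, h2⟩, h3⟩ := hκ
          exact ⟨x, t, h2, h1, fun hc => h3 ⟨hc, x, t, h2⟩⟩
        have hinj : Set.InjOn (fun κ => (hd κ).1) (T : Set Nd) := by
          intro κ1 h1 κ2 h2 heq
          obtain ⟨x1, t1, rfl, a1, a2⟩ := hTm κ1 h1
          obtain ⟨x2, t2, rfl, b1, b2⟩ := hTm κ2 h2
          simp [hd] at heq
          subst heq
          rcases lt_trichotomy t1 t2 with hlt | heq | hlt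
          · exact absurd ((hst _ _ _ b1).2.2.2.2.2 t1 hlt) a2
          · rw [heq]
          · exact absurd ((hst _ _ _ a1).2.2.2.2.2 t2 hlt) b2
        calc ∑ κ ∈ T, w (D.kk b κ)
            ≤ ∑ κ ∈ T, w (D.kk b ν' + (2 * b + 7)) * w ((hd κ).1 + 1) := by
              refine Finset.sum_le_sum fun κ hκ => ?_
              obtain ⟨x1, t1, rfl, a1, a2⟩ := hTm κ hκ
              rw [← w_add, kk_cons]
              apply w_anti
              simp [hd]
          _ = w (D.kk b ν' + (2 * b + 7)) * ∑ x ∈ T.image (fun κ => (hd κ).1), w (x + 1) := by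
              rw [Finset.sum_image hinj, Finset.mul_sum]
          _ ≤ w (D.kk b ν' + (2 * b + 7)) * 1 := by
              refine mul_le_mul_of_nonneg_left ?_ (w_nonneg _)
              refine le_trans (Finset.sum_le_sum_of_subset_of_nonneg (t := Finset.range
                ((T.image (fun κ => (hd κ).1)).sup id + 1)) ?_ fun _ _ _ => w_nonneg _) (sum_w_le _)
              intro x hx
              rw [Finset.mem_range, Nat.lt_succ_iff]
              exact Finset.le_sup (f := id) hx
          _ = _ := mul_one _
      linarith
    · refine le_trans (le_of_eq (Finset.sum_congr ?_ fun _ _ => rfl)) (h.sum ν')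
      ext κ
      simp only [mem_ch, List.mem_cons, Prod.mk.injEq, and_true]
      constructor
      · rintro ⟨h1 | h1, x', t', h2⟩
        · rw [h1] at h2; simp at h2; exact absurd h2.2.symm hν
        · exact ⟨h1, x', t', h2⟩
      · rintro ⟨h1, h2⟩
        exact ⟨Or.inr h1, h2⟩

theorem inv (b s : ℕ) : D.Inv b s (D.Zs b s) := by
  induction s with
  | zero =>
    rw [Zs_zero]
    refine ⟨List.nodup_nil, by simp, by simp, by simp, ?_⟩
    intro ν
    have : ch [] false ν = ∅ := by ext κ; simp [mem_ch]
    rw [this]; simp [w_nonneg]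
  | succ s ih =>
    rcases D.step_cases b s with h | ⟨⟨κ, c⟩, hok, h⟩
    · rw [h]; exact ih.succ_same D
    · rw [h]
      rcases hok with ⟨h1, h2⟩ | ⟨h1, h2⟩
      · simp at h1; subst h1; exact ih.start D κ h2
      · simp at h1; subst h1; exact ih.halt D κ h2

end CTD

theorem paid_sum' {ι : Type*} (T : Finset ι) (c : ι → ℕ) (hc : Set.InjOn c (T : Set ι)) (k : ι → ℕ)
    (s : ℕ) (h : ∀ i ∈ T, paid s (c i) (k i)) : ∑ i ∈ T, w (k i) ≤ 1 := by
  classical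
  rcases T.eq_empty_or_nonempty with rfl | ⟨i0, hi0⟩
  · simp
  have : Nonempty ι := ⟨i0⟩
  have h1 : ∀ i ∈ T, Function.invFunOn c T (c i) = i := fun i hi => hc.leftInvOn_invFunOn hi
  have := paid_sum (T.image c) (fun x => k (Function.invFunOn c T x)) s (by
    intro x hx
    obtain ⟨i, hi, rfl⟩ := Finset.mem_image.1 hx
    rw [h1 i hi]
    exact h i hi)
  rw [Finset.sum_image hc] at this
  refine le_trans (le_of_eq (Finset.sum_congr rfl fun i hi => ?_)) this
  rw [h1 i hi]

namespace CTD
variable (D : CTD)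

theorem Lv_pos (b : ℕ) : 0 < Lv b := by unfold Lv; positivity

theorem mem_leaves {b : ℕ} {Z : List Ev} {ν κ : Nd} :
    κ ∈ leaves b Z ν ↔ (κ, false) ∈ Z ∧ κ.length = Lv b ∧ ν <:+ κ := by
  classical
  simp only [leaves, Finset.mem_filter, mem_FF]

theorem mem_Bs {b s : ℕ} {ν κ : Nd} {B : List Bool} : B ∈ D.Bs b s ν κ ↔
    B.length = D.nlen b κ ∧ D.base ν <+: B ∧ paid s (Encodable.encode B) (D.kk b κ + b) := by
  classical
  simp only [Bs, Finset.mem_filter, mem_strF]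

variable {D} in
theorem Inv.base_tail {b s : ℕ} {Z : List Ev} (h : D.Inv b s Z) {x t : ℕ} {ν : Nd}
    (hz : ((x, t) :: ν, false) ∈ Z) : D.base ν <+: D.base ((x, t) :: ν) := by
  obtain ⟨-, -, -, h4, -⟩ := h.st _ _ _ hz
  rw [base_cons]
  split_ifs with hl
  · rcases h4 with h4 | h4
    · have := h4.eq_of_length (le_antisymm h4.length_le hl)
      rw [this]
    · exact h4
  · exact List.prefix_refl _

variable {D} in
theorem Inv.base_mono {b s : ℕ} {Z : List Ev} (h : D.Inv b s Z) {κ ν : Nd}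
    (hz : Started Z κ) (hν : ν <:+ κ) : D.base ν <+: D.base κ ∧ Started Z ν := by
  induction κ with
  | nil => simp at hν; subst hν; exact ⟨List.prefix_refl _, hz⟩
  | cons p κ ih =>
    obtain ⟨x, t⟩ := p
    rcases List.suffix_cons_iff.1 hν with rfl | hν
    · exact ⟨List.prefix_refl _, hz⟩
    · have hz' : ((x, t) :: κ, false) ∈ Z := hz.resolve_left (by simp)
      have := ih (h.st _ _ _ hz').1 hν
      exact ⟨this.1.trans (h.base_tail hz'), this.2⟩

variable {D} in
theorem Inv.length_le {b s : ℕ} {Z : List Ev} (h : D.Inv b s Z) {κ : Nd}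
    (hz : Started Z κ) : κ.length ≤ Lv b := by
  cases κ with
  | nil => simp
  | cons p κ =>
    obtain ⟨x, t⟩ := p
    have hz' : ((x, t) :: κ, false) ∈ Z := hz.resolve_left (by simp)
    exact (h.st _ _ _ hz').2.1

theorem base_le_nlen (b : ℕ) (κ : Nd) : (D.base κ).length ≤ D.nlen b κ := Nat.right_le_pair _ _

theorem suffix_of_length {ν : Nd} {κ : Nd} (h : ν <:+ κ) (hl : ν.length < κ.length) :
    ∃ x t, (x, t) :: ν <:+ κ := by
  obtain ⟨μ, rfl⟩ := h
  induction μ using List.reverseRecOn with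
  | nil => simp at hl
  | append_singleton μ p _ => obtain ⟨x, t⟩ := p; exact ⟨x, t, μ, by simp⟩

variable {D} in
theorem Inv.leaves_eq {b s : ℕ} {Z : List Ev} (h : D.Inv b s Z) {ν : Nd} (hl : ν.length < Lv b) :
    leaves b Z ν = (ch Z false ν).biUnion (leaves b Z) := by
  classical
  ext κ
  simp only [Finset.mem_biUnion, mem_leaves, mem_ch]
  constructor
  · rintro ⟨h1, h2, h3⟩
    obtain ⟨x, t, h4⟩ := suffix_of_length h3 (by omega)
    have := h.base_mono (Or.inr h1) h4
    exact ⟨_, ⟨this.2.resolve_left (by simp), x, t, rfl⟩, h1, h2, h4⟩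
  · rintro ⟨c, ⟨h1, x, t, rfl⟩, h2, h3, h4⟩
    exact ⟨h2, h3, (List.suffix_cons _ _).trans h4⟩

variable {D} in
theorem Inv.sum_leaves {b s : ℕ} {Z : List Ev} (h : D.Inv b s Z) {ν : Nd} (hl : ν.length < Lv b)
    (f : Nd → ℝ) : ∑ κ ∈ leaves b Z ν, f κ = ∑ c ∈ ch Z false ν, ∑ κ ∈ leaves b Z c, f κ := by
  classical
  rw [h.leaves_eq hl, Finset.sum_biUnion]
  intro c1 h1 c2 h2 hne
  rw [Function.onFun, Finset.disjoint_left]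
  intro κ k1 k2
  obtain ⟨_, x1, t1, rfl⟩ := mem_ch.1 h1
  obtain ⟨_, x2, t2, rfl⟩ := mem_ch.1 h2
  obtain ⟨_, _, k1⟩ := mem_leaves.1 k1
  obtain ⟨_, _, k2⟩ := mem_leaves.1 k2
  apply hne
  have := List.suffix_of_suffix_length_le k1 k2 (by simp)
  exact this.eq_of_length (by simp)

variable {D} in
theorem Inv.leaf_sum {b s : ℕ} {Z : List Ev} (h : D.Inv b s Z) (ν : Nd) :
    ∑ κ ∈ leaves b Z ν, w (D.kk b κ) ≤ w (D.kk b ν) := by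
  obtain ⟨n, hn⟩ : ∃ n, Lv b - ν.length = n := ⟨_, rfl⟩
  induction n generalizing ν with
  | zero =>
    have : leaves b Z ν ⊆ {ν} := by
      intro κ hκ
      obtain ⟨_, h2, h3⟩ := mem_leaves.1 hκ
      rw [Finset.mem_singleton]
      exact (h3.eq_of_length (by have := h3.length_le; omega)).symm
    refine (Finset.sum_le_sum_of_subset_of_nonneg this fun _ _ _ => w_nonneg _).trans ?_
    simp
  | succ n ih =>
    rw [h.sum_leaves (by omega)]
    refine le_trans (Finset.sum_le_sum fun c hc => ih c ?_) (h.sum ν)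
    obtain ⟨_, x, t, rfl⟩ := mem_ch.1 hc
    simp; omega

theorem Lv_eps (b : ℕ) : (Lv b : ℝ) * w (2 * b + 7) = 1 / 16 := by
  have := w_mul_pow (2 * b + 3)
  have e : w (2 * b + 7) = w (2 * b + 3) * w 4 := by rw [← w_add]
  have e4 : w 4 = 1 / 16 := by rw [w_eq]; norm_num
  rw [e, e4, Lv]; push_cast; linear_combination this / 16

theorem i_eps {b i : ℕ} (h : i ≤ Lv b) : (i : ℝ) * w (2 * b + 7) ≤ 1 / 16 := by
  rw [← Lv_eps]
  exact mul_le_mul_of_nonneg_right (by exact_mod_cast h) (w_nonneg _)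

variable {D} in
theorem Inv.ch_sub {b s : ℕ} {Z : List Ev} (h : D.Inv b s Z) (ν : Nd) :
    ch Z true ν ⊆ ch Z false ν := by
  intro c hc
  obtain ⟨h1, x, t, rfl⟩ := mem_ch.1 hc
  exact mem_ch.2 ⟨h.start_of_halt D h1, x, t, rfl⟩

variable {D} in
theorem Inv.used {b s : ℕ} {Z : List Ev} (h : D.Inv b s Z) (ν : Nd) (hν : (ν, true) ∈ Z) :
    (1 - (Lv b - ν.length : ℕ) * w (2 * b + 7)) * w (D.kk b ν) ≤
      ∑ κ ∈ leaves b Z ν, w (D.kk b κ) := by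
  obtain ⟨n, hn⟩ : ∃ n, Lv b - ν.length = n := ⟨_, rfl⟩
  induction n generalizing ν with
  | zero =>
    have hs := (h.ht ν hν).1
    have hl := h.length_le hs
    have hp := Lv_pos b
    have : ν ≠ [] := by rintro rfl; simp at hn; omega
    have hm : ν ∈ leaves b Z ν := mem_leaves.2 ⟨hs.resolve_left this, by omega, List.suffix_refl _⟩
    rw [hn]
    simp only [Nat.cast_zero, zero_mul, sub_zero, one_mul]
    exact Finset.single_le_sum (f := fun κ => w (D.kk b κ)) (fun _ _ => w_nonneg _) hm
  | succ n ih =>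
    rw [hn, h.sum_leaves (by omega)]
    obtain ⟨hs, h2, _⟩ := h.ht ν hν
    have h2 := h2.resolve_left (by omega)
    have e1 : ∑ c ∈ ch Z true ν, (1 - n * w (2 * b + 7)) * w (D.kk b c) ≤
        ∑ c ∈ ch Z true ν, ∑ κ ∈ leaves b Z c, w (D.kk b κ) := by
      refine Finset.sum_le_sum fun c hc => ?_
      obtain ⟨h1, x, t, rfl⟩ := mem_ch.1 hc
      have hn' : Lv b - ((x, t) :: ν).length = n := by simp; omega
      have := ih _ h1 hn'
      rwa [hn'] at this
    have e2 : ∑ c ∈ ch Z true ν, ∑ κ ∈ leaves b Z c, w (D.kk b κ) ≤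
      ∑ c ∈ ch Z false ν, ∑ κ ∈ leaves b Z c, w (D.kk b κ) :=
      Finset.sum_le_sum_of_subset_of_nonneg (h.ch_sub ν) fun _ _ _ =>
        Finset.sum_nonneg fun _ _ => w_nonneg _
    rw [← Finset.mul_sum] at e1
    refine le_trans ?_ (e1.trans e2)
    rw [w_add] at h2
    have hi := i_eps (b := b) (i := n) (by omega)
    have hw := w_nonneg (D.kk b ν)
    have he := w_nonneg (2 * b + 7)
    set ε := w (2 * b + 7)
    set W := w (D.kk b ν)
    set S := ∑ c ∈ ch Z true ν, w (D.kk b c)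
    have h3 : (1 - n * ε) * (W - W * ε) ≤ (1 - n * ε) * S :=
      mul_le_mul_of_nonneg_left (by linarith) (by linarith)
    refine le_trans ?_ h3
    have : 0 ≤ n * ε * ε * W := by positivity
    push_cast
    nlinarith

variable {D} in
theorem nlen_inj {b b' : ℕ} {κ κ' : Nd} (h : D.nlen b κ = D.nlen b' κ') : b = b' ∧ κ = κ' := by
  unfold nlen at h
  rw [Nat.pair_eq_pair, Nat.pair_eq_pair] at h
  exact ⟨h.1.1, Encodable.encode_injective h.1.2⟩

theorem payoff_le (b s : ℕ) (Z : List Ev) (ν : Nd) : D.payoff b s Z ν ≤ 2 ^ b := by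
  classical
  have h := paid_sum' ((leaves b Z ν).sigma fun κ => D.Bs b s ν κ) (fun p => Encodable.encode p.2)
    (by
      rintro ⟨κ, B⟩ h1 ⟨κ', B'⟩ h2 heq
      simp only [Finset.coe_sigma, Set.mem_sigma_iff, Finset.mem_coe, mem_Bs] at h1 h2
      have heq := Encodable.encode_injective heq
      dsimp only at heq
      subst heq
      have := (nlen_inj (h1.2.1.symm.trans h2.2.1)).2
      subst this; rfl) (fun p => D.kk b p.1 + b) s (by
      rintro ⟨κ, B⟩ h1
      rw [Finset.mem_sigma] at h1
      exact ((D.mem_Bs).1 h1.2).2.2)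
  rw [Finset.sum_sigma] at h
  simp only [Finset.sum_const, nsmul_eq_mul, w_add] at h
  have e : ∑ κ ∈ leaves b Z ν, ((D.Bs b s ν κ).card : ℝ) * (w (D.kk b κ) * w b) =
      D.payoff b s Z ν * w b := by
    rw [payoff, Finset.sum_mul]
    exact Finset.sum_congr rfl fun _ _ => by ring
  rw [e] at h
  have := w_mul_pow b
  have h3 := mul_le_mul_of_nonneg_right h (show (0 : ℝ) ≤ 2 ^ b by positivity)
  rw [mul_assoc, this] at h3
  linarith

variable {D} in
theorem Inv.root {b s : ℕ} {Z : List Ev} (h : D.Inv b s Z) : ([], true) ∉ Z := by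
  intro hz
  have h1 := (h.ht _ hz).2.2.trans (D.payoff_le b s Z [])
  rw [kk_nil] at h1
  have e1 := w_mul_pow (b + 3)
  have e2 : w (b + 1 + 2) = w (b + 3) := rfl
  have hp := w_pos (b + 3)
  have e3 : ((Lv b : ℕ) : ℝ) = 2 ^ (b + 3) * 2 ^ b := by
    rw [Lv]; push_cast; rw [← pow_add]; congr 1; ring
  rw [e2] at h1
  simp only [List.length_nil, Nat.sub_zero, Nat.cast_add, Nat.cast_one] at h1
  rw [e3] at h1
  have : (2 ^ (b + 3) * 2 ^ b + 1) * w (b + 3) = (w (b + 3) * 2 ^ (b + 3)) * 2 ^ b + w (b + 3) := by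
    ring
  rw [this, e1] at h1
  linarith

end CTD

namespace CTD
variable (D : CTD)

open Classical in
noncomputable def req (t : ℕ) : Option (ℕ × ℕ) :=
  (Encodable.decode t.unpair.1.unpair.2 : Option Nd).bind fun κ =>
    if κ.length = Lv t.unpair.1.unpair.1 ∧ (κ, false) ∈ D.Zs t.unpair.1.unpair.1 (t.unpair.2 + 1) ∧
      ¬ (κ, false) ∈ D.Zs t.unpair.1.unpair.1 t.unpair.2 then
    some (Encodable.encode (List.replicate (D.nlen t.unpair.1.unpair.1 κ) true),
      D.kk t.unpair.1.unpair.1 κ) else none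

theorem pr_req : Primrec D.req := by
  unfold req; fun_prop

theorem req_some {t x k : ℕ} (h : D.req t = some (x, k)) : ∃ b κ s, t =
    Nat.pair (Nat.pair b (Encodable.encode κ)) s ∧ κ.length = Lv b ∧ (κ, false) ∈ D.Zs b (s + 1) ∧
      ¬ (κ, false) ∈ D.Zs b s ∧ k = D.kk b κ := by
  classical
  rw [req, Option.bind_eq_some_iff] at h
  obtain ⟨κ, h1, h2⟩ := h
  split_ifs at h2 with h3
  simp at h2
  refine ⟨t.unpair.1.unpair.1, κ, t.unpair.2, ?_, h3.1, h3.2.1, h3.2.2, h2.2.symm⟩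
  have : Encodable.encode κ = t.unpair.1.unpair.2 := by
    have h4 := Denumerable.decode_eq_ofNat Nd t.unpair.1.unpair.2
    rw [h1] at h4
    simp only [Option.some.injEq] at h4
    rw [h4, Denumerable.encode_ofNat]
  rw [this]; simp

theorem req_of {b s : ℕ} {κ : Nd} (h1 : κ.length = Lv b) (h2 : (κ, false) ∈ D.Zs b (s + 1))
    (h3 : ¬ (κ, false) ∈ D.Zs b s) : D.req (Nat.pair (Nat.pair b (Encodable.encode κ)) s) =
      some (Encodable.encode (List.replicate (D.nlen b κ) true), D.kk b κ) := by
  classical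
  rw [req]
  simp only [Nat.unpair_pair, Encodable.encodek, Option.bind_some]
  rw [if_pos ⟨h1, h2, h3⟩]

theorem req_sum (s : ℕ) : wsum (klist D.req s) ≤ 1 := by
  classical
  rw [klist, wsum_flatMap _ List.nodup_range, List.toFinset_range]
  set T := (Finset.range s).filter fun t => (D.req t).isSome with hT
  have hTm : ∀ t ∈ T, ∃ b κ s', t =
    Nat.pair (Nat.pair b (Encodable.encode κ)) s' ∧ κ.length = Lv b ∧ (κ, false) ∈ D.Zs b (s' + 1) ∧
      ¬ (κ, false) ∈ D.Zs b s' ∧ t < s ∧ ∃ x, D.req t = some (x, D.kk b κ) := by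
    intro t ht
    rw [hT, Finset.mem_filter, Finset.mem_range, Option.isSome_iff_exists] at ht
    obtain ⟨h1, ⟨x, k⟩, h2⟩ := ht
    obtain ⟨b, κ, s', e1, e2, e3, e4, e5⟩ := D.req_some h2
    exact ⟨b, κ, s', e1, e2, e3, e4, h1, x, e5 ▸ h2⟩
  set φ : ℕ → ℕ × Nd := fun t => (t.unpair.1.unpair.1, Denumerable.ofNat Nd t.unpair.1.unpair.2)
  have hinj : Set.InjOn φ (T : Set ℕ) := by
    intro t1 h1 t2 h2 heq
    obtain ⟨b, κ, s1, rfl, a1, a2, a3, -⟩ := hTm t1 h1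
    obtain ⟨b', κ', s2, rfl, b1, b2, b3, -⟩ := hTm t2 h2
    simp [φ] at heq
    obtain ⟨rfl, rfl⟩ := heq
    rcases lt_trichotomy s1 s2 with h | h | h
    · exact absurd (D.Zs_mono b h a2) b3
    · rw [h]
    · exact absurd (D.Zs_mono b h b2) a3
  calc ∑ t ∈ Finset.range s, wsum ((D.req t).map Prod.snd).toList
      = ∑ t ∈ T, wsum ((D.req t).map Prod.snd).toList := by
        rw [hT, Finset.sum_filter]
        refine Finset.sum_congr rfl fun t _ => ?_
        split_ifs with h
        · rfl
        · simp at h; simp [h, wsum_nil]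
    _ = ∑ t ∈ T, w (D.kk (φ t).1 (φ t).2) := by
        refine Finset.sum_congr rfl fun t ht => ?_
        obtain ⟨b, κ, s1, rfl, a1, a2, a3, -, x, hx⟩ := hTm t ht
        rw [hx]
        simp [φ, wsum_cons, wsum_nil]
    _ = ∑ p ∈ T.image φ, w (D.kk p.1 p.2) := by rw [Finset.sum_image hinj]
    _ ≤ ∑ p ∈ (Finset.range s).biUnion (fun b => (leaves b (D.Zs b s) []).image fun κ => (b, κ)),
          w (D.kk p.1 p.2) := by
        refine Finset.sum_le_sum_of_subset_of_nonneg ?_ fun _ _ _ => w_nonneg _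
        intro p hp
        obtain ⟨t, ht, rfl⟩ := Finset.mem_image.1 hp
        obtain ⟨b, κ, s1, rfl, a1, a2, a3, a4, -⟩ := hTm t ht
        have l1 := Nat.left_le_pair (Nat.pair b (Encodable.encode κ)) s1
        have l2 := Nat.right_le_pair (Nat.pair b (Encodable.encode κ)) s1
        have l3 := Nat.left_le_pair b (Encodable.encode κ)
        simp only [φ, Nat.unpair_pair, Denumerable.ofNat_encode, Finset.mem_biUnion,
          Finset.mem_range, Finset.mem_image]
        exact ⟨b, by omega, κ, mem_leaves.2 ⟨D.Zs_mono b (by omega) a2, a1, List.nil_suffix⟩, rfl⟩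
    _ ≤ ∑ b ∈ Finset.range s, ∑ κ ∈ leaves b (D.Zs b s) [], w (D.kk b κ) := by
        rw [Finset.sum_biUnion]
        · refine Finset.sum_le_sum fun b _ => ?_
          rw [Finset.sum_image]
          intro _ _ _ _ h; simpa using h
        · intro b1 _ b2 _ hne
          rw [Function.onFun, Finset.disjoint_left]
          rintro ⟨b, κ⟩ h1 h2
          simp at h1 h2
          omega
    _ ≤ ∑ b ∈ Finset.range s, w (b + 1) := by
        refine Finset.sum_le_sum fun b _ => ?_
        have := (D.inv b s).leaf_sum []
        rwa [kk_nil] at this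
    _ ≤ 1 := sum_w_le s

theorem leaf_K : ∃ C, ∀ b κ s, (κ, false) ∈ D.Zs b s → κ.length = Lv b →
    KofNat (D.nlen b κ) ≤ D.kk b κ + C := by
  classical
  obtain ⟨e, he, h⟩ := kraft_chaitin D.req D.pr_req D.req_sum
  refine ⟨1 + 2 * e + 2, fun b κ s hs hl => ?_⟩
  have hex : ∃ s, (κ, false) ∈ D.Zs b s := ⟨s, hs⟩
  have h1 := Nat.find_spec hex
  have h2 : Nat.find hex ≠ 0 := by
    intro h0; rw [h0, Zs_zero] at h1; simp at h1
  obtain ⟨m, hm⟩ := Nat.exists_eq_succ_of_ne_zero h2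
  rw [hm] at h1
  have h3 := Nat.find_min hex (m := m) (by omega)
  obtain ⟨σ, hσ, hx⟩ := h _ _ _ (D.req_of hl h1 h3)
  have := Kcpx_le_of he hx
  rw [KofNat]; omega

variable {D} in
theorem haltOK_of {b s : ℕ} {ν : Nd} (h1 : Started (D.Zs b s) ν) (h2 : (ν, true) ∉ D.Zs b s)
    (h3 : ν.length = Lv b ∨ ¬ D.active b (D.Zs b s) ν)
    (h4 : (Lv b - ν.length + 1 : ℕ) * w (D.kk b ν + 2) ≤ D.payoff b s (D.Zs b s) ν) :
    D.haltOK b s (D.Zs b s) ν := by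
  refine ⟨h1, h2, h3, ?_⟩
  rw [wsum_replicate, wsum_payList D b s _ (D.inv b s).nodup]
  exact h4

theorem exists_common {ι : Type*} (T : Finset ι) (p : ι → ℕ → Prop)
    (hm : ∀ i s t, s ≤ t → p i s → p i t) (h : ∀ i ∈ T, ∃ s, p i s) (s0 : ℕ) :
    ∃ s, s0 ≤ s ∧ ∀ i ∈ T, p i s := by
  classical
  induction T using Finset.induction_on with
  | empty => exact ⟨s0, le_rfl, by simp⟩
  | insert a T ha ih =>
    obtain ⟨s, hs, h1⟩ := ih fun i hi => h i (Finset.mem_insert_of_mem hi)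
    obtain ⟨t, ht⟩ := h a (Finset.mem_insert_self _ _)
    refine ⟨max s t, by omega, fun i hi => ?_⟩
    rcases Finset.mem_insert.1 hi with rfl | hi
    · exact hm _ _ _ (le_max_right _ _) ht
    · exact hm _ _ _ (le_max_left _ _) (h1 i hi)

/-- key set-up: initial segments of A get paid for -/
def Pays (A : ℕ → Bool) (b : ℕ) : Prop := ∀ κ s, (κ, false) ∈ D.Zs b s → κ.length = Lv b →
  ∃ s, paid s (Encodable.encode (strPrefix A (D.nlen b κ))) (D.kk b κ + b)

theorem exists_pays (A : ℕ → Bool) (hA : KTrivial A) : ∃ b, D.Pays A b := by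
  obtain ⟨c, hc⟩ := hA
  obtain ⟨C, hC⟩ := D.leaf_K
  refine ⟨C + c, fun κ s hs hl => paid_of_Kcpx ?_⟩
  have h1 := hC _ κ s hs hl
  have h2 := hc (D.nlen (C + c) κ)
  omega

def Good (A : ℕ → Bool) (b : ℕ) (ν : Nd) : Prop :=
  (∃ s, Started (D.Zs b s) ν) ∧ (∀ s, (ν, true) ∉ D.Zs b s) ∧ IsPrefixOf (D.base ν) A

theorem exists_golden (A : ℕ → Bool) (b : ℕ) : ∃ ν, D.Good A b ν ∧
    ∀ x t, ¬ D.Good A b ((x, t) :: ν) := by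
  by_contra hn
  push Not at hn
  have : ∀ n, ∃ ν : Nd, ν.length = n ∧ D.Good A b ν := by
    intro n
    induction n with
    | zero =>
      refine ⟨[], rfl, ⟨0, Or.inl rfl⟩, fun s => (D.inv b s).root, ?_⟩
      rw [base_nil]; intro i; exact i.elim0
    | succ n ih =>
      obtain ⟨ν, h1, h2⟩ := ih
      obtain ⟨x, t, h⟩ := hn ν h2
      exact ⟨_, by simp [h1], h⟩
  obtain ⟨ν, h1, ⟨s, h2⟩, _⟩ := this (Lv b + 1)
  have := (D.inv b s).length_le h2
  omega

variable {D}

theorem mem_Bs_A {A : ℕ → Bool} {b s : ℕ} {ν κ : Nd} (hb : IsPrefixOf (D.base ν) A)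
    (hν : (D.base ν).length ≤ D.nlen b κ)
    (hp : paid s (Encodable.encode (strPrefix A (D.nlen b κ))) (D.kk b κ + b)) :
    strPrefix A (D.nlen b κ) ∈ D.Bs b s ν κ :=
  (D.mem_Bs).2 ⟨length_strPrefix _ _, (prefix_strPrefix_iff _ _ _).2 ⟨hb, hν⟩, hp⟩

theorem Good.length_lt {A : ℕ → Bool} {b : ℕ} (hp : D.Pays A b) {ν : Nd} (h : D.Good A b ν) :
    ν.length < Lv b := by
  obtain ⟨⟨s0, h1⟩, h2, h3⟩ := h
  refine lt_of_le_of_ne ((D.inv b s0).length_le h1) fun hl => ?_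
  have hne : ν ≠ [] := by rintro rfl; have := Lv_pos b; simp at hl; omega
  have h1' := h1.resolve_left hne
  obtain ⟨s1, hs1⟩ := hp ν s0 h1' hl
  obtain ⟨s, hs⟩ := D.fair b (max s0 s1) (ν, true) (by
    intro s hs hn
    right
    refine ⟨rfl, haltOK_of (Or.inr (D.Zs_mono b (by omega) h1')) hn (Or.inl hl) ?_⟩
    rw [hl]
    have hm : ν ∈ leaves b (D.Zs b s) ν :=
      mem_leaves.2 ⟨D.Zs_mono b (by omega) h1', hl, List.suffix_refl _⟩
    have hB := mem_Bs_A h3 (D.base_le_nlen b ν) (hs1.mono (show s1 ≤ s by omega))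
    have hc : 1 ≤ (D.Bs b s ν ν).card := Finset.card_pos.2 ⟨_, hB⟩
    have hsl := Finset.single_le_sum (f := fun κ => ((D.Bs b s ν κ).card : ℝ) * w (D.kk b κ))
      (fun κ _ => mul_nonneg (Nat.cast_nonneg _) (w_nonneg _)) hm
    refine le_trans ?_ hsl
    have hc' : (1 : ℝ) ≤ (D.Bs b s ν ν).card := by exact_mod_cast hc
    have hw := w_nonneg (D.kk b ν)
    have := w_anti (show D.kk b ν ≤ D.kk b ν + 2 by omega)
    simp only [Nat.sub_self, zero_add, Nat.cast_one, one_mul]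
    nlinarith)
  exact h2 s hs

theorem right_use {A : ℕ → Bool} {x t : ℕ} {ν : Nd}
    (hc : D.use x <+: D.base ν ∨ D.base ν <+: D.use x)
    (h : IsPrefixOf (D.base ((x, t) :: ν)) A) : IsPrefixOf (D.use x) A := by
  rw [base_cons] at h
  split_ifs at h with hl
  · exact h
  · rcases hc with hc | hc
    · exact h.of_pre hc
    · exact absurd hc.length_le hl

/-- sum over right children -/
theorem right_sum {A : ℕ → Bool} {b s : ℕ} {ν : Nd}
    (hw : ∀ F : Finset ℕ, (∀ x ∈ F, D.P x ∧ IsPrefixOf (D.use x) A) → ∑ x ∈ F, w (D.h x) ≤ 1)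
    (T : Finset Nd) (hT : T ⊆ ch (D.Zs b s) false ν)
    (hr : ∀ κ ∈ T, IsPrefixOf (D.base κ) A) :
    ∑ κ ∈ T, w (D.kk b κ) ≤ w (D.kk b ν) * w (2 * b + 7) := by
  classical
  set F := T.image fun κ => (hd κ).1
  have hsub : T ⊆ F.biUnion fun x => (Finset.range (2 ^ (x + 1))).image fun t => (x, t) :: ν := by
    intro κ hκ
    obtain ⟨h1, x, t, rfl⟩ := mem_ch.1 (hT hκ)
    have := (D.inv b s).st _ _ _ h1
    simp only [Finset.mem_biUnion, Finset.mem_image, Finset.mem_range]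
    exact ⟨x, Finset.mem_image.2 ⟨_, hκ, rfl⟩, t, this.2.2.2.2.1, rfl⟩
  have hF := hw F (by
    intro x hx
    obtain ⟨κ, hκ, rfl⟩ := Finset.mem_image.1 hx
    obtain ⟨h1, x, t, rfl⟩ := mem_ch.1 (hT hκ)
    have := (D.inv b s).st _ _ _ h1
    exact ⟨this.2.2.1, right_use this.2.2.2.1 (hr _ hκ)⟩)
  calc ∑ κ ∈ T, w (D.kk b κ) ≤ ∑ κ ∈ F.biUnion fun x =>
        (Finset.range (2 ^ (x + 1))).image fun t => (x, t) :: ν, w (D.kk b κ) :=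
        Finset.sum_le_sum_of_subset_of_nonneg hsub fun _ _ _ => w_nonneg _
    _ ≤ ∑ x ∈ F, ∑ κ ∈ (Finset.range (2 ^ (x + 1))).image fun t => (x, t) :: ν, w (D.kk b κ) := by
        rw [Finset.sum_biUnion]
        intro x1 _ x2 _ hne
        rw [Function.onFun, Finset.disjoint_left]
        intro κ h1 h2
        simp at h1 h2
        obtain ⟨t1, _, rfl⟩ := h1
        obtain ⟨t2, _, h⟩ := h2
        simp at h
        exact hne h.1.symm
    _ = ∑ x ∈ F, w (D.kk b ν) * w (2 * b + 7) * w (D.h x) := by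
        refine Finset.sum_congr rfl fun x _ => ?_
        rw [Finset.sum_image (by intro _ _ _ _ h; simpa using h)]
        simp only [kk_cons, Finset.sum_const, Finset.card_range, nsmul_eq_mul, w_add _ (D.h x),
          w_add _ (x + 1), w_add _ (2 * b + 7)]
        have := w_mul_pow (x + 1)
        push_cast
        linear_combination w (D.kk b ν) * w (2 * b + 7) * w (D.h x) * this
    _ = w (D.kk b ν) * w (2 * b + 7) * ∑ x ∈ F, w (D.h x) := by rw [Finset.mul_sum]
    _ ≤ w (D.kk b ν) * w (2 * b + 7) := by
        have := mul_nonneg (w_nonneg (D.kk b ν)) (w_nonneg (2 * b + 7))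
        nlinarith

theorem inactive_mono {b s t : ℕ} {ν : Nd} (hst : s ≤ t) (h : ¬ D.active b (D.Zs b s) ν) :
    ¬ D.active b (D.Zs b t) ν := by
  rw [active_iff D b _ (D.inv b _).nodup, not_lt] at *
  have := D.sumch_mono b (fun ev he => D.Zs_mono b hst he) true ν
  linarith

theorem Good.active {A : ℕ → Bool} {b : ℕ} (hp : D.Pays A b) {ν : Nd} (h : D.Good A b ν)
    (hw : ∀ F : Finset ℕ, (∀ x ∈ F, D.P x ∧ IsPrefixOf (D.use x) A) → ∑ x ∈ F, w (D.h x) ≤ 1)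
    (s0 : ℕ) (hs0 : Started (D.Zs b s0) ν) :
    D.active b (D.Zs b s0) ν := by
  classical
  by_contra hna
  have hlt := h.length_lt hp
  set Z := D.Zs b s0 with hZ
  have hI := D.inv b s0
  obtain ⟨s1, hs01, hs1⟩ := exists_common (leaves b Z ν)
    (fun κ s => paid s (Encodable.encode (strPrefix A (D.nlen b κ))) (D.kk b κ + b))
    (fun _ _ _ hst h => h.mono hst) (fun κ hκ => by
      obtain ⟨h1, h2, h3⟩ := mem_leaves.1 hκ
      exact hp κ s0 h1 h2) s0
  -- the payoff estimate
  have key : (Lv b - ν.length + 1 : ℕ) * w (D.kk b ν + 2) ≤ D.payoff b s1 Z ν := by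
    set i := Lv b - ν.length with hi
    set U := (ch Z true ν).filter fun c => IsPrefixOf (D.base c) A with hU
    have hUs : U ⊆ ch (D.Zs b s0) false ν := (Finset.filter_subset _ _).trans (hI.ch_sub ν)
    have hright := right_sum hw U hUs (fun κ hκ => (Finset.mem_filter.1 hκ).2)
    have e0 : ∀ c ∈ ch Z true ν, i * w (D.kk b c + 2) +
        (if IsPrefixOf (D.base c) A then 0 else 15 / 16 * w (D.kk b c)) ≤
        ∑ κ ∈ leaves b Z c, (D.Bs b s1 ν κ).card * w (D.kk b κ) := by
      intro c hc
      obtain ⟨h1, x, t, hcx⟩ := mem_ch.1 hc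
      have hst : (c, false) ∈ Z := by rw [hcx] at h1 ⊢; exact hI.start_of_halt D h1
      have hbt : D.base ν <+: D.base c := by rw [hcx] at hst ⊢; exact hI.base_tail hst
      have hci : Lv b - c.length + 1 = i := by rw [hcx]; simp; omega
      have hpay := (hI.ht c h1).2.2
      rw [hci] at hpay
      have hsubB : ∀ κ, D.Bs b s0 c κ ⊆ D.Bs b s1 ν κ := by
        intro κ B hB
        rw [mem_Bs] at hB ⊢
        exact ⟨hB.1, hbt.trans hB.2.1, hB.2.2.mono hs01⟩
      split_ifs with hr
      · rw [add_zero]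
        refine hpay.trans (Finset.sum_le_sum fun κ _ => ?_)
        exact mul_le_mul_of_nonneg_right (by exact_mod_cast Finset.card_le_card (hsubB κ))
          (w_nonneg _)
      · have hused := hI.used c h1
        have h15 := i_eps (b := b) (i := Lv b - c.length) (by omega)
        have hwc := w_nonneg (D.kk b c)
        have hused' : 15 / 16 * w (D.kk b c) ≤ ∑ κ ∈ leaves b Z c, w (D.kk b κ) := by
          refine le_trans ?_ hused
          exact mul_le_mul_of_nonneg_right (by linarith) hwc
        refine (add_le_add hpay hused').trans ?_
        rw [payoff, ← Finset.sum_add_distrib]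
        refine Finset.sum_le_sum fun κ hκ => ?_
        obtain ⟨k1, k2, k3⟩ := mem_leaves.1 hκ
        have hκν : κ ∈ leaves b Z ν := mem_leaves.2 ⟨k1, k2, by
          rw [hcx] at k3; exact (List.suffix_cons _ _).trans k3⟩
        have hbc := hI.base_mono (Or.inr k1) k3
        have hA := mem_Bs_A (D := D) (ν := ν) h.2.2
          ((hbt.trans hbc.1).length_le.trans (D.base_le_nlen b κ)) (hs1 κ hκν)
        have hcard : (D.Bs b s0 c κ).card + 1 ≤ (D.Bs b s1 ν κ).card := by
          have hnot : strPrefix A (D.nlen b κ) ∉ D.Bs b s0 c κ := by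
            intro hm
            rw [mem_Bs] at hm
            exact hr ((prefix_strPrefix_iff _ _ _).1 hm.2.1).1
          rw [← Finset.card_insert_of_notMem hnot]
          exact Finset.card_le_card (Finset.insert_subset hA (hsubB κ))
        have hcard' : ((D.Bs b s0 c κ).card : ℝ) + 1 ≤ (D.Bs b s1 ν κ).card := by
          exact_mod_cast hcard
        have := mul_le_mul_of_nonneg_right hcard' (w_nonneg (D.kk b κ))
        linarith
    have e1 : ∑ c ∈ ch Z true ν, (i * w (D.kk b c + 2) +
        (if IsPrefixOf (D.base c) A then 0 else 15 / 16 * w (D.kk b c))) ≤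
        D.payoff b s1 Z ν := by
      refine (Finset.sum_le_sum e0).trans ?_
      rw [payoff, hI.sum_leaves hlt]
      refine Finset.sum_le_sum_of_subset_of_nonneg (hI.ch_sub ν) fun _ _ _ =>
        Finset.sum_nonneg fun κ _ => mul_nonneg (Nat.cast_nonneg _) (w_nonneg _)
    refine le_trans ?_ e1
    have w2 : ∀ n, w (n + 2) = w n / 4 := by
      intro n; rw [w_add, show w 2 = 1 / 4 by rw [w_eq]; norm_num]; ring
    have e2 : ∑ c ∈ ch Z true ν, (i * w (D.kk b c + 2) +
        (if IsPrefixOf (D.base c) A then 0 else 15 / 16 * w (D.kk b c))) =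
        (i / 4 + 15 / 16) * ∑ c ∈ ch Z true ν, w (D.kk b c) -
          15 / 16 * ∑ c ∈ U, w (D.kk b c) := by
      rw [hU, Finset.sum_filter, Finset.mul_sum, Finset.mul_sum, ← Finset.sum_sub_distrib]
      refine Finset.sum_congr rfl fun c _ => ?_
      rw [w2]
      split_ifs <;> ring
    rw [e2, w2]
    rw [active_iff D b _ hI.nodup, not_lt, w_add] at hna
    have hie := i_eps (b := b) (i := i) (by omega)
    have hW := w_nonneg (D.kk b ν)
    have hε := w_nonneg (2 * b + 7)
    have hε1 : w (2 * b + 7) ≤ 1 / 16 := by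
      have := i_eps (b := b) (i := 1) (Lv_pos b)
      simpa using this
    set S := ∑ c ∈ ch Z true ν, w (D.kk b c)
    set W := w (D.kk b ν)
    set ε := w (2 * b + 7)
    set V := ∑ c ∈ U, w (D.kk b c)
    have hi0 : (0 : ℝ) ≤ i := Nat.cast_nonneg _
    have h1 : (i / 4 + 15 / 16) * (W - W * ε) ≤ (i / 4 + 15 / 16) * S :=
      mul_le_mul_of_nonneg_left (by linarith) (by positivity)
    have h2 : (i : ℝ) * ε * W ≤ 1 / 16 * W := mul_le_mul_of_nonneg_right hie hW
    have h3 : ε * W ≤ 1 / 16 * W := mul_le_mul_of_nonneg_right hε1 hW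
    push_cast
    nlinarith
  obtain ⟨s, hs⟩ := D.fair b s1 (ν, true) (by
    intro s hs hn
    right
    refine ⟨rfl, haltOK_of (hs0.mono fun ev he => D.Zs_mono b (by omega) he) hn
      (Or.inr (inactive_mono (by omega) hna)) (key.trans ?_)⟩
    exact D.payoff_mono b hs (fun ev he => D.Zs_mono b (by omega) he) ν)
  exact h.2.1 s hs

end CTD

namespace CTD
variable {D : CTD}

theorem isPrefixOf_base {A : ℕ → Bool} {x t : ℕ} {ν : Nd} (h1 : IsPrefixOf (D.use x) A)
    (h2 : IsPrefixOf (D.base ν) A) : IsPrefixOf (D.base ((x, t) :: ν)) A := by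
  rw [base_cons]; split_ifs <;> assumption

theorem ct (D : CTD) (A : ℕ → Bool) (hA : KTrivial A)
    (hw : ∀ F : Finset ℕ, (∀ x ∈ F, D.P x ∧ IsPrefixOf (D.use x) A) → ∑ x ∈ F, w (D.h x) ≤ 1) :
    ∃ Wr : ℕ → ℕ → Prop, PrimrecPred (fun p : ℕ × ℕ => Wr p.1 p.2) ∧
      (∀ x s t, s ≤ t → Wr x s → Wr x t) ∧
      (∃ C : ℝ, ∀ s (F : Finset ℕ), (∀ x ∈ F, Wr x s) → ∑ x ∈ F, w (D.h x) ≤ C) ∧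
      (∀ x, D.P x → IsPrefixOf (D.use x) A → ∃ s, Wr x s) ∧
      (∀ x s, Wr x s → D.P x) := by
  classical
  obtain ⟨b, hp⟩ := D.exists_pays A hA
  obtain ⟨ν, hg, hch⟩ := D.exists_golden A b
  obtain ⟨⟨s0, hs0⟩, hnh, hb⟩ := id hg
  have hlt := hg.length_lt hp
  refine ⟨fun x s => ((x, 2 ^ (x + 1) - 1) :: ν, true) ∈ D.Zs b s, by fun_prop, ?_, ?_, ?_, ?_⟩
  · intro x s t hst h
    exact D.Zs_mono b hst h
  · refine ⟨2 ^ (2 * b + 7), fun s F hF => ?_⟩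
    have hI := D.inv b s
    have hsub : (F.biUnion fun x => (Finset.range (2 ^ (x + 1))).image fun t => (x, t) :: ν) ⊆
        ch (D.Zs b s) false ν := by
      intro κ hκ
      simp only [Finset.mem_biUnion, Finset.mem_image, Finset.mem_range] at hκ
      obtain ⟨x, hx, t, ht, rfl⟩ := hκ
      refine mem_ch.2 ⟨?_, x, t, rfl⟩
      have h1 := hF x hx
      rcases Nat.lt_or_ge t (2 ^ (x + 1) - 1) with h | h
      · exact hI.start_of_halt D ((hI.st _ _ _ (hI.start_of_halt D h1)).2.2.2.2.2 t h)
      · have : t = 2 ^ (x + 1) - 1 := by omega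
        rw [this]; exact hI.start_of_halt D h1
    have h1 : ∑ x ∈ F, w (D.kk b ν) * w (2 * b + 7) * w (D.h x) ≤ w (D.kk b ν) :=
      calc _ = ∑ x ∈ F, ∑ κ ∈ (Finset.range (2 ^ (x + 1))).image fun t => (x, t) :: ν,
            w (D.kk b κ) := by
            refine Finset.sum_congr rfl fun x _ => ?_
            rw [Finset.sum_image (by intro _ _ _ _ h; simpa using h)]
            simp only [kk_cons, Finset.sum_const, Finset.card_range, nsmul_eq_mul,
              w_add _ (D.h x), w_add _ (x + 1), w_add _ (2 * b + 7)]
            have := w_mul_pow (x + 1)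
            push_cast
            linear_combination - w (D.kk b ν) * w (2 * b + 7) * w (D.h x) * this
        _ = ∑ κ ∈ F.biUnion fun x =>
              (Finset.range (2 ^ (x + 1))).image fun t => (x, t) :: ν, w (D.kk b κ) := by
            rw [Finset.sum_biUnion]
            intro x1 _ x2 _ hne
            rw [Function.onFun, Finset.disjoint_left]
            intro κ h1 h2
            simp at h1 h2
            obtain ⟨t1, _, rfl⟩ := h1
            obtain ⟨t2, _, h⟩ := h2
            simp at h
            exact hne h.1.symm
        _ ≤ _ := (Finset.sum_le_sum_of_subset_of_nonneg hsub fun _ _ _ => w_nonneg _).trans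
              (hI.sum ν)
    rw [← Finset.mul_sum] at h1
    have hW := w_pos (D.kk b ν)
    have h2 : w (2 * b + 7) * ∑ x ∈ F, w (D.h x) ≤ 1 := by
      rw [mul_assoc] at h1
      by_contra hc
      push Not at hc
      have := mul_lt_mul_of_pos_left hc hW
      linarith
    have h3 := w_mul_pow (2 * b + 7)
    have h4 := mul_le_mul_of_nonneg_left h2 (show (0 : ℝ) ≤ 2 ^ (2 * b + 7) by positivity)
    rw [← mul_assoc, mul_comm ((2 : ℝ) ^ _), h3] at h4
    linarith
  · intro x hP hu
    have hall : ∀ t, t < 2 ^ (x + 1) → ∃ s, ((x, t) :: ν, true) ∈ D.Zs b s := by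
      intro t
      induction t with
      | zero =>
        intro ht
        obtain ⟨s1, h1⟩ := D.fair b s0 ((x, 0) :: ν, false) (by
          intro s hs hn
          have hst : Started (D.Zs b s) ν := hs0.mono fun ev he => D.Zs_mono b hs he
          left
          refine ⟨rfl, by simp, hst, ?_, hlt, hP, hu.comparable hb, ht, Or.inl rfl, ?_⟩
          · rintro (h | h)
            · simp at h
            · exact hn h
          · exact hg.active hp hw s hst)
        by_contra hcon
        push Not at hcon
        exact hch x 0 ⟨⟨s1, Or.inr h1⟩, hcon, isPrefixOf_base hu hb⟩
      | succ t ih =>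
        intro ht
        obtain ⟨s2, h2⟩ := ih (by omega)
        obtain ⟨s1, h1⟩ := D.fair b (max s0 s2) ((x, t + 1) :: ν, false) (by
          intro s hs hn
          have hst : Started (D.Zs b s) ν := hs0.mono fun ev he => D.Zs_mono b (by omega) he
          left
          refine ⟨rfl, by simp, hst, ?_, hlt, hP, hu.comparable hb, ht, Or.inr ?_, ?_⟩
          · rintro (h | h)
            · simp at h
            · exact hn h
          · exact D.Zs_mono b (show s2 ≤ s by omega) h2
          · exact hg.active hp hw s hst)
        by_contra hcon
        push Not at hcon
        exact hch x (t + 1) ⟨⟨s1, Or.inr h1⟩, hcon, isPrefixOf_base hu hb⟩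
    exact hall _ (by have : 0 < 2 ^ (x + 1) := by positivity
                     omega)
  · intro x s h
    have hI := D.inv b s
    exact (hI.st _ _ _ (hI.start_of_halt D h)).2.2.1

end CTD

/-- Covering theorem, for items in an arbitrary primcodable type. -/
theorem covering {β : Type} [Primcodable β] (A : ℕ → Bool) (hA : KTrivial A)
    (P : β → Prop) (use : β → List Bool) (h : β → ℕ) (hP : PrimrecPred P) (huse : Primrec use)
    (hh : Primrec h)
    (hw : ∀ F : Finset β, (∀ x ∈ F, P x ∧ IsPrefixOf (use x) A) → ∑ x ∈ F, w (h x) ≤ 1) :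
    ∃ Wr : β → ℕ → Prop, PrimrecPred (fun p : β × ℕ => Wr p.1 p.2) ∧
      (∀ x s t, s ≤ t → Wr x s → Wr x t) ∧
      (∃ C : ℝ, ∀ s (F : Finset β), (∀ x ∈ F, Wr x s) → ∑ x ∈ F, w (h x) ≤ C) ∧
      (∀ x, P x → IsPrefixOf (use x) A → ∃ s, Wr x s) ∧
      (∀ x s, Wr x s → P x) := by
  classical
  let D : CTD :=
    { P := fun n => ∃ x, (Encodable.decode n : Option β) = some x ∧ P x ∧ Encodable.encode x = n
      use := fun n => ((Encodable.decode n : Option β).map use).getD []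
      h := fun n => ((Encodable.decode n : Option β).map h).getD 0
      hP := pr_exopt (by fun_prop) (by fun_prop)
      huse := by fun_prop
      hh := by fun_prop }
  have hDP : ∀ x, D.P (Encodable.encode x) ↔ P x := by intro x; simp [D]
  have hDu : ∀ x, D.use (Encodable.encode x) = use x := by intro x; simp [D]
  have hDh : ∀ x, D.h (Encodable.encode x) = h x := by intro x; simp [D]
  have hinj : Function.Injective (Encodable.encode : β → ℕ) := Encodable.encode_injective
  obtain ⟨Wr, h1, h2, ⟨C, h3⟩, h4, h5⟩ := CTD.ct D A hA (by
    intro F hF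
    have hFe : F = (F.preimage Encodable.encode hinj.injOn).image Encodable.encode := by
      ext n
      simp only [Finset.mem_image, Finset.mem_preimage]
      constructor
      · intro hn
        obtain ⟨⟨x, _, _, hx⟩, _⟩ := hF n hn
        exact ⟨x, by rwa [hx], hx⟩
      · rintro ⟨x, hx, rfl⟩; exact hx
    rw [hFe, Finset.sum_image hinj.injOn]
    simp only [hDh]
    refine hw _ fun x hx => ?_
    have := hF _ (Finset.mem_preimage.1 hx)
    rwa [hDP, hDu] at this)
  refine ⟨fun x s => Wr (Encodable.encode x) s,
    h1.comp (show Primrec fun p : β × ℕ => (Encodable.encode p.1, p.2) by fun_prop),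
    fun x s t => h2 _ s t, ⟨C, fun s F hF => ?_⟩, fun x hx hu => ?_, fun x s hx => ?_⟩
  · have := h3 s (F.image Encodable.encode) (by
      intro n hn
      obtain ⟨x, hx, rfl⟩ := Finset.mem_image.1 hn
      exact hF x hx)
    rw [Finset.sum_image hinj.injOn] at this
    simpa only [hDh] using this
  · exact h4 _ ((hDP x).2 hx) (by rwa [hDu])
  · exact (hDP x).1 (h5 _ s hx)

open MeasureTheory ENNReal

/-! ## measure and the Solovay lemma -/

theorem measurable_binaryDigits : Measurable binaryDigits := by
  rw [measurable_pi_iff]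
  intro n
  have h1 : Measurable fun x : ℝ => ⌊x * 2 ^ (n + 1)⌋ :=
    Int.measurable_floor.comp (measurable_id.mul_const _)
  exact (Measurable.of_discrete (f := fun z : ℤ => decide (z % 2 = 1))).comp h1

theorem floor_binaryDigits (σ : List Bool) (x : ℝ) (hx : x ∈ Set.Ico (0 : ℝ) 1)
    (h : IsPrefixOf σ (binaryDigits x)) : ⌊x * 2 ^ σ.length⌋ = val σ := by
  induction σ using List.reverseRecOn with
  | nil => simp [val, hx.1, hx.2]
  | append_singleton σ b ih =>
    have h1 := ih (h.of_pre (List.prefix_append _ _))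
    have h2 : binaryDigits x σ.length = b := by
      have := h ⟨σ.length, by simp⟩
      simpa using this
    rw [val_concat]
    simp only [List.length_append, List.length_cons, List.length_nil, zero_add, Nat.cast_add,
      Nat.cast_mul, Nat.cast_ofNat]
    rw [← h1]
    have h3 : x * 2 ^ (σ.length + 1) = 2 * (x * 2 ^ σ.length) := by ring
    have h4 : ⌊x * 2 ^ (σ.length + 1)⌋ / 2 = ⌊x * 2 ^ σ.length⌋ := by
      rw [h3]
      have := Int.floor_div_natCast (2 * (x * 2 ^ σ.length)) 2
      rw [Nat.cast_ofNat, mul_div_cancel_left₀ _ (by norm_num)] at this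
      rw [this]; norm_num
    have h5 : ⌊x * 2 ^ (σ.length + 1)⌋ % 2 = (b.toNat : ℤ) := by
      rw [binaryDigits] at h2
      rcases Int.emod_two_eq_zero_or_one ⌊x * 2 ^ (σ.length + 1)⌋ with h6 | h6
      · rw [h6] at h2 ⊢
        subst h2; rfl
      · rw [h6] at h2 ⊢
        subst h2; rfl
    omega

theorem measurableSet_cylinder (σ : List Bool) : MeasurableSet (cylinder σ) := by
  have : cylinder σ = ⋂ i : Fin σ.length, (fun X : ℕ → Bool => X i) ⁻¹' {σ.get i} := by
    ext X; simp [_root_.cylinder, IsPrefixOf]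
  rw [this]
  exact MeasurableSet.iInter fun i => (measurable_pi_apply _) (MeasurableSet.singleton _)

theorem μ_cylinder (σ : List Bool) : μCantor (cylinder σ) ≤ 2⁻¹ ^ σ.length := by
  rw [μCantor, Measure.map_apply measurable_binaryDigits (measurableSet_cylinder σ),
    Measure.restrict_apply (measurable_binaryDigits (measurableSet_cylinder σ))]
  have hsub : binaryDigits ⁻¹' cylinder σ ∩ Set.Ico 0 1 ⊆
      Set.Ico (val σ * w σ.length) ((val σ + 1) * w σ.length) := by
    rintro x ⟨hx1, hx2⟩
    have h := floor_binaryDigits σ x hx2 hx1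
    rw [Int.floor_eq_iff] at h
    have hw := w_mul_pow σ.length
    have hp := w_pos σ.length
    push_cast at h
    have e : x = x * 2 ^ σ.length * w σ.length := by rw [mul_assoc, mul_comm (2 ^ _), hw, mul_one]
    constructor
    · rw [e]; exact mul_le_mul_of_nonneg_right h.1 hp.le
    · rw [e]; exact mul_lt_mul_of_pos_right h.2 hp
  refine (measure_mono hsub).trans ?_
  rw [Real.volume_Ico]
  have : (val σ + 1) * w σ.length - val σ * w σ.length = w σ.length := by ring
  rw [this, w, ENNReal.ofReal_pow (by norm_num)]
  rw [one_div, ENNReal.ofReal_inv_of_pos (by norm_num)]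
  simp

theorem ml_pass {X : ℕ → Bool} (hX : MLRandom X) (Q : ℕ → List Bool → ℕ → Prop)
    (hQ : PrimrecPred fun p : ℕ × List Bool × ℕ => Q p.1 p.2.1 p.2.2)
    (hμ : ∀ n, μCantor (openOf {σ | ∃ s, Q n σ s}) ≤ 2⁻¹ ^ n) :
    ∃ n, ∀ m s, ¬ Q n (strPrefix X m) s := by
  obtain ⟨e, he⟩ := exists_index_of_primrec (Q := fun k s => k.unpair.1 = 0 ∧
    Q k.unpair.2.unpair.1.unpair.1 ((Encodable.decode k.unpair.2.unpair.1.unpair.2 : Option (List Bool)).getD []) s)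
    (by
      have := hQ.comp (show Primrec fun p : ℕ × ℕ => (p.1.unpair.2.unpair.1.unpair.1,
        (Encodable.decode p.1.unpair.2.unpair.1.unpair.2 : Option (List Bool)).getD [], p.2) by fun_prop)
      fun_prop)
  have hl : ∀ n, testLevel e emptyOracle n = openOf {σ | ∃ s, Q n σ s} := by
    intro n
    rw [testLevel]
    congr 1
    ext σ
    simp only [Set.mem_ofPred_eq, OracleComputes, he, Nat.unpair_pair, Encodable.encodek,
      Option.getD_some]
    constructor
    · rintro ⟨m, τ, _, s, _, h⟩; exact ⟨s, h⟩
    · rintro ⟨s, h⟩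
      exact ⟨0, [], fun i => i.elim0, s, rfl, h⟩
  obtain ⟨n, hn⟩ := hX (fun n => openOf {σ | ∃ s, Q n σ s}) ⟨⟨e, fun n => (hl n).symm⟩, hμ⟩
  refine ⟨n, fun m s hq => hn ?_⟩
  rw [openOf, Set.mem_iUnion₂]
  exact ⟨_, ⟨s, hq⟩, isPrefixOf_strPrefix X m⟩

/-- number of initial segments of `ρ` in the stage `|ρ|` approximation -/
noncomputable def pcnt (Q : List Bool → ℕ → Prop) (ρ : List Bool) : ℕ :=
  open Classical in
  ((List.range (ρ.length + 1)).filter fun m => decide (Q (ρ.take m) ρ.length)).length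

open Classical in
theorem pcnt_eq (Q : List Bool → ℕ → Prop) (ρ : List Bool) : pcnt Q ρ =
    ((Finset.range (ρ.length + 1)).filter fun m => Q (ρ.take m) ρ.length).card := by
  rw [pcnt, ← List.toFinset_card_of_nodup (List.nodup_range.filter _)]
  congr 1
  ext m; simp

theorem pcnt_mono {Q : List Bool → ℕ → Prop} (hm : ∀ σ s t, s ≤ t → Q σ s → Q σ t)
    {X : ℕ → Bool} {s t : ℕ} (h : s ≤ t) : pcnt Q (strPrefix X s) ≤ pcnt Q (strPrefix X t) := by
  classical
  rw [pcnt_eq, pcnt_eq]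
  refine Finset.card_le_card fun m hmm => ?_
  simp only [length_strPrefix, Finset.mem_filter, Finset.mem_range] at *
  rw [take_strPrefix _ _ _ (by omega)] at *
  exact ⟨by omega, hm _ _ _ h hmm.2⟩

theorem pcnt_sum {Q : List Bool → ℕ → Prop} {C : ℝ}
    (hC : ∀ s (F : Finset (List Bool)), (∀ σ ∈ F, Q σ s) → ∑ σ ∈ F, w σ.length ≤ C) (s : ℕ) :
    (∑ ρ ∈ strF s, (pcnt Q ρ : ℝ)) * w s ≤ C := by
  classical
  set F := ((Finset.range (s + 1)).biUnion strF).filter fun σ => Q σ s with hF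
  have hFm : ∀ σ, σ ∈ F ↔ σ.length ≤ s ∧ Q σ s := by
    intro σ; simp [hF, mem_strF]
  have h1 : ∀ ρ ∈ strF s, pcnt Q ρ = (F.filter fun σ => σ <+: ρ).card := by
    intro ρ hρ
    rw [mem_strF] at hρ
    rw [pcnt_eq]
    refine Finset.card_bij (fun m _ => ρ.take m) ?_ ?_ ?_
    · intro m hm
      simp only [Finset.mem_filter, Finset.mem_range, hFm] at *
      exact ⟨⟨by simp; omega, by rw [← hρ]; exact hm.2⟩, List.take_prefix _ _⟩
    · intro m1 h1 m2 h2 heq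
      simp only [Finset.mem_filter, Finset.mem_range] at h1 h2
      have := congrArg List.length heq
      simp at this
      omega
    · intro σ hσ
      simp only [Finset.mem_filter, Finset.mem_range, hFm] at *
      have := List.prefix_iff_eq_take.1 hσ.2
      exact ⟨σ.length, ⟨by omega, by rw [← this, hρ]; exact hσ.1.2⟩, this.symm⟩
  have h2 : ∑ ρ ∈ strF s, (pcnt Q ρ : ℝ) = ∑ σ ∈ F, (2 : ℝ) ^ (s - σ.length) := by
    have : ∑ ρ ∈ strF s, (F.filter fun σ => σ <+: ρ).card = ∑ σ ∈ F, 2 ^ (s - σ.length) := by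
      refine (Finset.sum_card_bipartiteAbove_eq_sum_card_bipartiteBelow (s := strF s) (t := F)
        (r := fun ρ σ : List Bool => σ <+: ρ)).trans ?_
      refine Finset.sum_congr rfl fun σ hσ => ?_
      rw [← card_ext σ s ((hFm σ).1 hσ).1]
      rfl
    rw [← Nat.cast_sum, Finset.sum_congr rfl h1, this]; push_cast; rfl
  rw [h2, Finset.sum_mul]
  refine le_trans (le_of_eq (Finset.sum_congr rfl fun σ hσ => ?_))
    (hC s F fun σ hσ => ((hFm σ).1 hσ).2)
  rw [pow_sub_w _ _ ((hFm σ).1 hσ).1]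
  have := w_mul_pow s
  linear_combination w σ.length * this

theorem μ_level (F : ℕ → Finset (List Bool)) (hF : ∀ s, F s ⊆ strF s)
    (hm : ∀ X s, strPrefix X s ∈ F s → strPrefix X (s + 1) ∈ F (s + 1)) (n : ℕ)
    (hc : ∀ s, ((F s).card : ℝ) * w s ≤ w n) :
    μCantor (openOf {σ | σ ∈ F σ.length}) ≤ 2⁻¹ ^ n := by
  have h1 : openOf {σ | σ ∈ F σ.length} = ⋃ s, {X | strPrefix X s ∈ F s} := by
    ext X
    simp only [openOf, Set.mem_iUnion, Set.mem_ofPred_eq, _root_.cylinder]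
    constructor
    · rintro ⟨σ, h1, h2⟩
      refine ⟨σ.length, ?_⟩
      have h3 := h2.eq
      rwa [h3]
    · rintro ⟨s, h⟩
      exact ⟨strPrefix X s, by rwa [length_strPrefix], isPrefixOf_strPrefix X s⟩
  have hmono : Monotone fun s => {X | strPrefix X s ∈ F s} :=
    monotone_nat_of_le_succ fun s X hX => hm X s hX
  rw [h1, hmono.measure_iUnion]
  refine iSup_le fun s => ?_
  have h2 : {X | strPrefix X s ∈ F s} ⊆ ⋃ σ ∈ F s, cylinder σ := by
    intro X hX
    simp only [Set.mem_iUnion]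
    exact ⟨_, hX, isPrefixOf_strPrefix X s⟩
  refine (measure_mono h2).trans ((measure_biUnion_finset_le _ _).trans ?_)
  have h3 : ∑ σ ∈ F s, μCantor (cylinder σ) ≤ ∑ σ ∈ F s, (2⁻¹ : ENNReal) ^ s := by
    refine Finset.sum_le_sum fun σ hσ => ?_
    have := μ_cylinder σ
    rwa [mem_strF.1 (hF s hσ)] at this
  refine h3.trans ?_
  rw [Finset.sum_const, nsmul_eq_mul]
  have hw : ∀ k, (2⁻¹ : ENNReal) ^ k = ENNReal.ofReal (w k) := by
    intro k
    rw [w, ENNReal.ofReal_pow (by norm_num), one_div, ENNReal.ofReal_inv_of_pos (by norm_num)]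
    simp
  rw [hw, hw, ← ENNReal.ofReal_natCast, ← ENNReal.ofReal_mul (Nat.cast_nonneg _)]
  exact ENNReal.ofReal_le_ofReal (hc s)

theorem solovay {X : ℕ → Bool} (hX : MLRandom X) (Q : List Bool → ℕ → Prop)
    (hQ : PrimrecPred fun p : List Bool × ℕ => Q p.1 p.2)
    (hm : ∀ σ s t, s ≤ t → Q σ s → Q σ t) (C : ℝ)
    (hC : ∀ s (F : Finset (List Bool)), (∀ σ ∈ F, Q σ s) → ∑ σ ∈ F, w σ.length ≤ C) :
    ∃ N, ∀ m, N ≤ m → ∀ s, ¬ Q (strPrefix X m) s := by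
  classical
  obtain ⟨c, hc⟩ := exists_nat_ge (max C 1)
  have hc1 : (1 : ℝ) ≤ c := (le_max_right _ _).trans hc
  have hcC : C ≤ c := (le_max_left _ _).trans hc
  have hpr : PrimrecPred fun p : ℕ × List Bool × ℕ => c * 2 ^ p.1 ≤ pcnt Q p.2.1 := by
    have : PrimrecPred fun q : (ℕ × List Bool × ℕ) × ℕ =>
      Q (q.1.2.1.take q.2) q.1.2.1.length :=
      hQ.comp (show Primrec fun q : (ℕ × List Bool × ℕ) × ℕ =>
        (q.1.2.1.take q.2, q.1.2.1.length) by fun_prop)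
    unfold pcnt
    fun_prop
  obtain ⟨n, hn⟩ := ml_pass hX (fun n ρ _ => c * 2 ^ n ≤ pcnt Q ρ) hpr (by
    intro n
    have := μ_level (fun s => (strF s).filter fun ρ => c * 2 ^ n ≤ pcnt Q ρ)
      (fun s => Finset.filter_subset _ _) (by
        intro X s h
        simp only [Finset.mem_filter, mem_strF, length_strPrefix, true_and] at *
        exact h.trans (pcnt_mono hm (Nat.le_succ s))) n (by
        intro s
        have h1 := pcnt_sum hC s
        have h2 : (((strF s).filter fun ρ => c * 2 ^ n ≤ pcnt Q ρ).card : ℝ) * (c * 2 ^ n) ≤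
            ∑ ρ ∈ strF s, (pcnt Q ρ : ℝ) := by
          rw [← nsmul_eq_mul, ← Finset.sum_const]
          refine (Finset.sum_le_sum (fun ρ hρ => ?_)).trans
            (Finset.sum_le_sum_of_subset_of_nonneg (Finset.filter_subset
              (fun ρ => c * 2 ^ n ≤ pcnt Q ρ) _) fun _ _ _ => Nat.cast_nonneg _)
          have := (Finset.mem_filter.1 hρ).2
          exact_mod_cast this
        have h3 := mul_le_mul_of_nonneg_right h2 (w_nonneg s)
        have h4 := w_mul_pow n
        have h5 := w_nonneg n
        set K := (((strF s).filter fun ρ => c * 2 ^ n ≤ pcnt Q ρ).card : ℝ)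
        have h6 : K * (c * 2 ^ n) * w s ≤ c := h3.trans (h1.trans hcC)
        have h7 : c * (K * w s * 2 ^ n) ≤ c * 1 := by linarith
        have h8 := le_of_mul_le_mul_left h7 (by linarith)
        have h9 := mul_le_mul_of_nonneg_right h8 h5
        linear_combination h9 - K * w s * h4)
    simp only [Finset.mem_filter, mem_strF, true_and] at this
    simpa using this)
  -- bounded monotone counts
  have hb : ∀ s, pcnt Q (strPrefix X s) < c * 2 ^ n := fun s => not_le.1 (hn s 0)
  by_contra hcon
  push Not at hcon
  have hgrow : ∀ k, ∃ s, k ≤ pcnt Q (strPrefix X s) := by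
    intro k
    induction k with
    | zero => exact ⟨0, Nat.zero_le _⟩
    | succ k ih =>
      obtain ⟨s, hs⟩ := ih
      obtain ⟨m, hm1, t, ht⟩ := hcon (s + 1)
      refine ⟨max m t, lt_of_le_of_lt hs ?_⟩
      rw [pcnt_eq, pcnt_eq]
      refine Finset.card_lt_card ⟨fun i hi => ?_, fun hsub => ?_⟩
      · simp only [length_strPrefix, Finset.mem_filter, Finset.mem_range] at *
        rw [take_strPrefix _ _ _ (by omega)] at *
        exact ⟨by omega, hm _ _ _ (by omega) hi.2⟩
      · have := @hsub m (by
          simp only [length_strPrefix, Finset.mem_filter, Finset.mem_range]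
          rw [take_strPrefix _ _ _ (by omega)]
          exact ⟨by omega, hm _ _ _ (by omega) ht⟩)
        simp only [length_strPrefix, Finset.mem_filter, Finset.mem_range] at this
        omega
  obtain ⟨s, hs⟩ := hgrow (c * 2 ^ n)
  exact absurd (hb s) (not_lt.2 hs)

/-! ## the low lemma -/

theorem reduce_zj {Q : ℕ → ℕ → Prop} (hQ : PrimrecPred fun p : ℕ × ℕ => Q p.1 p.2) :
    ∃ f : ℕ → ℕ, Primrec f ∧ ∀ n, zeroJump (f n) = true ↔ ∃ s, Q n s := by
  obtain ⟨c, hc⟩ := exists_code_of_primrec (Q := fun n s => Q n.unpair.1 s)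
    (hQ.comp (show Primrec fun p : ℕ × ℕ => (p.1.unpair.1, p.2) by fun_prop))
  refine ⟨fun n => Encodable.encode (Nat.Partrec.Code.curry c n), by fun_prop, fun n => ?_⟩
  have h1 : ∀ k, WEnum (Encodable.encode (Nat.Partrec.Code.curry c n)) k ↔ ∃ s, Q n s := by
    intro k
    rw [WEnum, Denumerable.ofNat_encode, Nat.Partrec.Code.eval_curry, hc]
    simp
  have h2 : zeroJump (Encodable.encode (Nat.Partrec.Code.curry c n)) = true ↔
      ∃ m, OracleComputes (Encodable.encode (Nat.Partrec.Code.curry c n)) emptyOracle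
        (Encodable.encode (Nat.Partrec.Code.curry c n)) m := by
    classical
    unfold zeroJump jump; exact decide_eq_true_iff
  rw [h2]
  simp only [OracleComputes, h1]
  constructor
  · rintro ⟨_, _, _, h⟩; exact h
  · intro h; exact ⟨0, [], fun i => i.elim0, h⟩

def joinStr (α ρ : List Bool) : List Bool :=
  (List.range α.length).map fun i =>
    if i % 2 = 0 then α[i / 2]?.getD false else ρ[i / 2]?.getD false

@[fun_prop] theorem pr_joinStr {γ : Type*} [Primcodable γ] {f g : γ → List Bool} (hf : Primrec f)
    (hg : Primrec g) : Primrec fun a => joinStr (f a) (g a) := by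
  unfold joinStr; fun_prop

theorem strPrefix_getElem? (A : ℕ → Bool) {i n : ℕ} (h : i < n) :
    (strPrefix A n)[i]? = some (A i) := by
  simp [strPrefix, h]

theorem joinStr_eq (A R : ℕ → Bool) (n : ℕ) :
    joinStr (strPrefix A n) (strPrefix R n) = strPrefix (joinSet A R) n := by
  rw [joinStr, length_strPrefix]
  conv_rhs => rw [strPrefix]
  refine List.map_congr_left fun i hi => ?_
  rw [List.mem_range] at hi
  rw [strPrefix_getElem? _ (by omega), strPrefix_getElem? _ (by omega)]
  simp [joinSet]

theorem take_prefix_eq {A : ℕ → Bool} {σ : List Bool} {n : ℕ} (h : IsPrefixOf σ A)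
    (hn : σ.length ≤ n) : (strPrefix A n).take σ.length = σ := by
  rw [take_strPrefix _ _ _ hn, h.eq]

theorem fin_of_bound {β γ : Type} [DecidableEq β] (Wr : β → ℕ → Prop)
    (hm : ∀ x s t, s ≤ t → Wr x s → Wr x t) (h : β → ℕ) (C : ℝ)
    (hC : ∀ s (F : Finset β), (∀ x ∈ F, Wr x s) → ∑ x ∈ F, w (h x) ≤ C)
    (g : γ → β) (hg : Function.Injective g) (k : ℕ) (hk : ∀ a, h (g a) ≤ k) :
    {a | ∃ s, Wr (g a) s}.Finite := by
  classical
  by_contra hinf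
  obtain ⟨c, hc⟩ := exists_nat_gt (C * 2 ^ k)
  obtain ⟨T, hT, hTc⟩ := Set.Infinite.exists_subset_card_eq hinf c
  obtain ⟨s, _, hs⟩ := CTD.exists_common T (fun a s => Wr (g a) s) (fun a => hm _)
    (fun a ha => hT ha) 0
  have h1 := hC s (T.image g) (by
    intro x hx
    obtain ⟨a, ha, rfl⟩ := Finset.mem_image.1 hx
    exact hs a ha)
  rw [Finset.sum_image hg.injOn] at h1
  have h2 : (c : ℝ) * w k ≤ ∑ x ∈ T, w (h (g x)) := by
    rw [← hTc, ← nsmul_eq_mul, ← Finset.sum_const]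
    exact Finset.sum_le_sum fun a _ => w_anti (hk a)
  have h3 := w_mul_pow k
  have h4 := mul_le_mul_of_nonneg_right (h2.trans h1) (show (0 : ℝ) ≤ 2 ^ k by positivity)
  rw [mul_assoc, h3] at h4
  linarith

theorem sum_w_finset (T : Finset ℕ) : ∑ y ∈ T, w (y + 1) ≤ 1 := by
  refine le_trans (Finset.sum_le_sum_of_subset_of_nonneg (t := Finset.range
    (T.sup id + 1)) ?_ fun _ _ _ => w_nonneg _) (sum_w_le _)
  intro x hx
  rw [Finset.mem_range, Nat.lt_succ_iff]
  exact Finset.le_sup (f := id) hx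

theorem low_lemma {A R : ℕ → Bool} (hA : KTrivial A) (hcup : TuringLE zeroJump (joinSet A R))
    (Q : List Bool → ℕ → Prop) (hQ : PrimrecPred fun p : List Bool × ℕ => Q p.1 p.2) :
    ∃ N : List Bool → List Bool → ℕ → Prop,
      (PrimrecPred fun p : List Bool × List Bool × ℕ => N p.1 p.2.1 p.2.2) ∧
      ∀ y, (¬ ∃ s, Q (strPrefix A s) y) ↔ ∃ s, N (strPrefix A s) (strPrefix R s) y := by
  classical
  -- covering
  have hQ1 : PrimrecPred fun q : (ℕ × List Bool) × ℕ => Q (q.1.2.take q.2) q.1.1 :=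
    hQ.comp (show Primrec fun q : (ℕ × List Bool) × ℕ => (q.1.2.take q.2, q.1.1) by fun_prop)
  have hQ2 : PrimrecPred fun q : ℕ × List Bool => Q q.2 q.1 :=
    hQ.comp (show Primrec fun q : ℕ × List Bool => (q.2, q.1) by fun_prop)
  obtain ⟨Wr, hW1, hW2, ⟨C, hW3⟩, hW4, hW5⟩ := covering (β := ℕ × List Bool) A hA
    (fun p => Q p.2 p.1 ∧ ¬ ∃ m < p.2.length, Q (p.2.take m) p.1) (fun p => p.2) (fun p => p.1 + 1)
    (by fun_prop) (by fun_prop) (by fun_prop) (by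
      intro F hF
      have hinj : Set.InjOn Prod.fst (F : Set (ℕ × List Bool)) := by
        rintro ⟨y, a⟩ h1 ⟨y', a'⟩ h2 heq
        obtain ⟨⟨p1, p2⟩, p3⟩ := hF _ h1
        obtain ⟨⟨q1, q2⟩, q3⟩ := hF _ h2
        dsimp only at *
        subst heq
        have key : ∀ {a a' : List Bool}, IsPrefixOf a A → IsPrefixOf a' A → Q a y →
            (¬ ∃ m < a'.length, Q (a'.take m) y) → ¬ a.length < a'.length := by
          intro a a' h1 h2 h3 h4 hlt
          refine h4 ⟨a.length, hlt, ?_⟩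
          rw [← h2.eq, take_strPrefix _ _ _ hlt.le, h1.eq]
          exact h3
        have e : a.length = a'.length :=
          le_antisymm (not_lt.1 (key q3 p3 q1 p2)) (not_lt.1 (key p3 q3 p1 q2))
        rw [← p3.eq, ← q3.eq, e]
      have := sum_w_finset (F.image Prod.fst)
      rwa [Finset.sum_image hinj] at this)
  have hfin : ∀ y, {a | ∃ s, Wr (y, a) s}.Finite := fun y =>
    fin_of_bound Wr hW2 (fun p => p.1 + 1) C hW3 (fun a => (y, a))
      (fun a b h => by simpa using h) (y + 1) (fun a => le_rfl)
  obtain ⟨f, hf, hfz⟩ := reduce_zj (Q := fun n t => ∃ a, (Encodable.decode t.unpair.1 :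
      Option (List Bool)) = some a ∧ (n.unpair.2 ≤ Encodable.encode a ∧
        Wr (n.unpair.1, a) t.unpair.2)) (by
    have := hW1.comp (show Primrec fun q : (ℕ × ℕ) × List Bool =>
      ((q.1.1.unpair.1, q.2), q.1.2.unpair.2) by fun_prop)
    exact pr_exopt (by fun_prop) (by fun_prop))
  have hfz' : ∀ y s, zeroJump (f (Nat.pair y s)) = true ↔
      ∃ a, s ≤ Encodable.encode a ∧ ∃ t, Wr (y, a) t := by
    intro y s
    rw [hfz]
    simp only [Nat.unpair_pair]
    constructor
    · rintro ⟨t, a, _, h1, h2⟩; exact ⟨a, h1, _, h2⟩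
    · rintro ⟨a, h1, t, h2⟩; exact ⟨Nat.pair (Encodable.encode a) t, a, by simp, h1, by simpa using h2⟩
  obtain ⟨e, he⟩ := hcup
  have he0 : ∀ y s, (¬ ∃ a, s ≤ Encodable.encode a ∧ ∃ t, Wr (y, a) t) ↔
      ∃ σ, IsPrefixOf σ (joinSet A R) ∧ ∃ t, WStage e (Nat.pair (Encodable.encode σ)
        (Nat.pair (f (Nat.pair y s)) 0)) t := by
    intro y s
    have := he (f (Nat.pair y s)) 0
    simp only [OracleComputes, wenum_iff] at this
    rw [this, ← hfz']
    cases zeroJump (f (Nat.pair y s)) <;> simp [natOfBool]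
  refine ⟨fun α ρ y => ∃ s ≤ α.length, (∃ k ≤ α.length,
    WStage e (Nat.pair (Encodable.encode ((joinStr α ρ).take k)) (Nat.pair (f (Nat.pair y s)) 0))
      α.length) ∧ ¬ ∃ z < s, ¬ (((Encodable.decode z : Option (List Bool)).getD []).length ≤ α.length
      ∧ ¬ ((Encodable.decode z : Option (List Bool)).getD [] <+: α ∧
        Q ((Encodable.decode z : Option (List Bool)).getD []) y)), ?_, ?_⟩
  · have h1 := hQ.comp (show Primrec fun q : ((List Bool × List Bool × ℕ) × ℕ) × ℕ =>
      ((Encodable.decode q.2 : Option (List Bool)).getD [], q.1.1.2.2) by fun_prop)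
    have h2 := pr_WStage.comp (show Primrec fun q : ((List Bool × List Bool × ℕ) × ℕ) × ℕ =>
      (e, Nat.pair (Encodable.encode ((joinStr q.1.1.1 q.1.1.2.1).take q.2))
        (Nat.pair (f (Nat.pair q.1.1.2.2 q.1.2)) 0), q.1.1.1.length) by fun_prop)
    fun_prop
  · intro y
    simp only [length_strPrefix, joinStr_eq]
    constructor
    · intro hy
      obtain ⟨s, hs⟩ : ∃ s, ∀ a ∈ (hfin y).toFinset, Encodable.encode a < s :=
        ⟨(hfin y).toFinset.sup Encodable.encode + 1, fun a ha =>
          Nat.lt_succ_of_le (Finset.le_sup ha)⟩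
      obtain ⟨σ, h1, t, h2⟩ := (he0 y s).1 (by
        rintro ⟨a, h1, t, h2⟩
        have := hs a ((hfin y).mem_toFinset.2 ⟨t, h2⟩)
        omega)
      set M := (Finset.range s).sup fun z => ((Encodable.decode z : Option (List Bool)).getD []).length
      have hM : ∀ z < s, ((Encodable.decode z : Option (List Bool)).getD []).length ≤ M :=
        fun z hz => Finset.le_sup (f := fun z =>
          ((Encodable.decode z : Option (List Bool)).getD []).length) (Finset.mem_range.2 hz)
      refine ⟨s + σ.length + t + M, s, by omega, ⟨σ.length, by omega, ?_⟩, ?_⟩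
      · rw [take_prefix_eq h1 (by omega)]
        exact h2.mono (by omega)
      · rintro ⟨z, hz, hn⟩
        apply hn
        refine ⟨(hM z hz).trans (by omega), ?_⟩
        rintro ⟨h3, h4⟩
        have h5 := ((prefix_strPrefix_iff _ _ _).1 h3).1
        rw [← h5.eq] at h4
        exact hy ⟨_, h4⟩
    · rintro ⟨n, s, hs, ⟨k, hk, hst⟩, hz⟩ hex
      have h1 := (he0 y s).2 ⟨_, by
        rw [take_strPrefix _ _ _ hk]; exact isPrefixOf_strPrefix _ _, n, hst⟩
      set m := Nat.find hex
      have hm := Nat.find_spec hex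
      obtain ⟨t, ht⟩ := hW4 (y, strPrefix A m) ⟨hm, by
        rintro ⟨i, hi, hq⟩
        dsimp only at hi hq
        rw [length_strPrefix] at hi
        rw [take_strPrefix _ _ _ hi.le] at hq
        exact Nat.find_min hex hi hq⟩ (isPrefixOf_strPrefix A m)
      have h2 : Encodable.encode (strPrefix A m) < s := by
        by_contra hc
        exact h1 ⟨_, not_lt.1 hc, t, ht⟩
      apply hz
      refine ⟨_, h2, ?_⟩
      rw [Encodable.encodek, Option.getD_some, length_strPrefix]
      rintro ⟨h3, h4⟩
      exact h4 ⟨strPrefix_pre A h3, hm⟩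

/-! ## self reference -/

open Classical in
/-- number of strings of length `s` satisfying `p` -/
noncomputable def cntU (p : List Bool → Prop) (s : ℕ) : ℕ :=
  ((strs s).filter fun ρ => decide (p ρ)).length

theorem cntU_eq (p : List Bool → Prop) [DecidablePred p] (s : ℕ) : cntU p s = ((strF s).filter p).card := by
  rw [cntU, ← List.toFinset_card_of_nodup ((nodup_strs s).filter _)]
  congr 1
  ext ρ
  simp [strF]

@[fun_prop] theorem pr_cntU {γ : Type*} [Primcodable γ] {p : γ → List Bool → Prop} {f : γ → ℕ}
    (hp : PrimrecPred fun q : γ × List Bool => p q.1 q.2) (hf : Primrec f) :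
    Primrec fun a => cntU (p a) (f a) := by
  classical
  unfold cntU
  fun_prop

theorem self_ref {A R : ℕ → Bool} (hA : KTrivial A) (hcup : TuringLE zeroJump (joinSet A R)) :
    ∃ (M : List Bool → List Bool → ℕ → List Bool → Prop) (B : List Bool → ℕ → List Bool → Prop),
      (PrimrecPred fun q : List Bool × List Bool × ℕ × List Bool => M q.1 q.2.1 q.2.2.1 q.2.2.2) ∧
      (PrimrecPred fun q : List Bool × ℕ × List Bool => B q.1 q.2.1 q.2.2) ∧
      (∀ (α ρ : List Bool) (j : ℕ) (σ : List Bool) (m n : ℕ), m ≤ n → M (α.take m) (ρ.take m) j σ → M (α.take n) (ρ.take n) j σ) ∧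
      (∀ (α : List Bool) (j : ℕ) (σ : List Bool), B α j σ ↔ σ.length ≤ α.length ∧
        2 ^ j * cntU (fun ρ => σ <+: ρ ∧ ¬ M α ρ j σ) α.length < 2 ^ (α.length - σ.length)) ∧
      ∀ j σ, (¬ ∃ s, B (strPrefix A s) j σ) ↔ ∃ s, M (strPrefix A s) (strPrefix R s) j σ := by
  classical
  obtain ⟨N, hN, hNy⟩ := low_lemma hA hcup (fun α y => ∃ k ≤ α.length,
    WStage y.unpair.1 (Nat.pair (Encodable.encode (α.take k)) y) α.length) (by
      have := pr_WStage.comp (show Primrec fun q : (List Bool × ℕ) × ℕ =>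
        (q.1.2.unpair.1, Nat.pair (Encodable.encode (q.1.1.take q.2)) q.1.2, q.1.1.length) by
          fun_prop)
      fun_prop)
  set Me : ℕ → List Bool → List Bool → ℕ → Prop := fun e α ρ z =>
    ∃ s' ≤ α.length, N (α.take s') (ρ.take s') (Nat.pair e z) with hMe
  have pMe : PrimrecPred fun q : ℕ × List Bool × List Bool × ℕ => Me q.1 q.2.1 q.2.2.1 q.2.2.2 := by
    have := hN.comp (show Primrec fun q : (ℕ × List Bool × List Bool × ℕ) × ℕ =>
      (q.1.2.1.take q.2, q.1.2.2.1.take q.2, Nat.pair q.1.1 q.1.2.2.2) by fun_prop)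
    simp only [hMe]
    fun_prop
  set Be : ℕ → List Bool → ℕ → List Bool → Prop := fun e α j σ => σ.length ≤ α.length ∧
        2 ^ j * cntU (fun ρ => σ <+: ρ ∧ ¬ Me e α ρ (Nat.pair j (Encodable.encode σ))) α.length
          < 2 ^ (α.length - σ.length) with hBe
  have pBe : PrimrecPred fun q : ℕ × List Bool × ℕ × List Bool => Be q.1 q.2.1 q.2.2.1 q.2.2.2 := by
    have := pMe.comp (show Primrec fun q : (ℕ × List Bool × ℕ × List Bool) × List Bool =>
      (q.1.1, q.1.2.1, q.2, Nat.pair q.1.2.2.1 (Encodable.encode q.1.2.2.2)) by fun_prop)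
    simp only [hBe]
    fun_prop
  obtain ⟨e0, he0⟩ := exists_index_of_primrec (Q := fun n _ =>
    Be n.unpair.2.unpair.1 ((Encodable.decode n.unpair.1 : Option (List Bool)).getD [])
      n.unpair.2.unpair.2.unpair.1
      ((Encodable.decode n.unpair.2.unpair.2.unpair.2 : Option (List Bool)).getD [])) (by
    exact pBe.comp (show Primrec fun q : ℕ × ℕ =>
      (q.1.unpair.2.unpair.1, (Encodable.decode q.1.unpair.1 : Option (List Bool)).getD [],
      q.1.unpair.2.unpair.2.unpair.1,
      (Encodable.decode q.1.unpair.2.unpair.2.unpair.2 : Option (List Bool)).getD []) by fun_prop))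
  have he1 : ∀ α j σ, WEnum e0 (Nat.pair (Encodable.encode α) (Nat.pair e0 (Nat.pair j
      (Encodable.encode σ)))) ↔ Be e0 α j σ := by
    intro α j σ
    rw [he0]
    simp
  refine ⟨fun α ρ j σ => Me e0 α ρ (Nat.pair j (Encodable.encode σ)), Be e0, ?_, ?_, ?_, ?_, ?_⟩
  · exact pMe.comp (show Primrec fun q : List Bool × List Bool × ℕ × List Bool =>
      (e0, q.1, q.2.1, Nat.pair q.2.2.1 (Encodable.encode q.2.2.2)) by fun_prop)
  · exact pBe.comp (show Primrec fun q : List Bool × ℕ × List Bool => (e0, q.1, q.2.1, q.2.2)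
      by fun_prop)
  · rintro α ρ j σ m n hmn ⟨s, h1, h2⟩
    have hs : s ≤ m := h1.trans (by simp)
    refine ⟨s, h1.trans (by simp only [List.length_take]; omega), ?_⟩
    simp only [List.take_take, min_eq_left hs, min_eq_left (hs.trans hmn)] at h2 ⊢
    exact h2
  · intro α j σ; exact Iff.rfl
  · intro j σ
    have h := hNy (Nat.pair e0 (Nat.pair j (Encodable.encode σ)))
    have h1 : (∃ s, ∃ k ≤ (strPrefix A s).length, WStage (Nat.pair e0 (Nat.pair j
        (Encodable.encode σ))).unpair.1 (Nat.pair (Encodable.encode ((strPrefix A s).take k))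
          (Nat.pair e0 (Nat.pair j (Encodable.encode σ)))) (strPrefix A s).length) ↔
        ∃ s, Be e0 (strPrefix A s) j σ := by
      constructor
      · rintro ⟨s, k, hk, h⟩
        rw [length_strPrefix] at hk
        rw [take_strPrefix _ _ _ hk, Nat.unpair_pair] at h
        exact ⟨k, (he1 _ _ _).1 ((wenum_iff _ _).2 ⟨_, h⟩)⟩
      · rintro ⟨k, hk⟩
        obtain ⟨t, ht⟩ := (wenum_iff _ _).1 ((he1 _ _ _).2 hk)
        refine ⟨k + t, k, by rw [length_strPrefix]; omega, ?_⟩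
        rw [take_strPrefix _ _ _ (by omega), Nat.unpair_pair, length_strPrefix]
        exact ht.mono (by omega)
    rw [h1] at h
    rw [h]
    constructor
    · rintro ⟨s, hs⟩
      refine ⟨s, s, by rw [length_strPrefix], ?_⟩
      rw [take_strPrefix _ _ _ le_rfl, take_strPrefix _ _ _ le_rfl]
      exact hs
    · rintro ⟨s, s', h1, h2⟩
      rw [length_strPrefix] at h1
      rw [take_strPrefix _ _ _ h1, take_strPrefix _ _ _ h1] at h2
      exact ⟨s', h2⟩

/-- covering of strings over `A`, projected to plain strings -/
theorem cover_project {A : ℕ → Bool} (hA : KTrivial A) (P : List Bool → List Bool → Prop)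
    (hP : PrimrecPred fun q : List Bool × List Bool => P q.1 q.2) (j : ℕ)
    (hw : ∀ F : Finset (List Bool), (∀ ρ ∈ F, P (strPrefix A ρ.length) ρ) →
      ∑ ρ ∈ F, w ρ.length ≤ 2 ^ j) :
    ∃ Q : List Bool → ℕ → Prop, (PrimrecPred fun p : List Bool × ℕ => Q p.1 p.2) ∧
      (∀ σ s t, s ≤ t → Q σ s → Q σ t) ∧
      (∃ C : ℝ, ∀ s (F : Finset (List Bool)), (∀ σ ∈ F, Q σ s) → ∑ σ ∈ F, w σ.length ≤ C) ∧
      ∀ ρ, P (strPrefix A ρ.length) ρ → ∃ s, Q ρ s := by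
  classical
  obtain ⟨Wr, hW1, hW2, ⟨C, hW3⟩, hW4, hW5⟩ := covering (β := List Bool × List Bool) A hA
    (fun p => p.1.length = p.2.length ∧ P p.1 p.2) (fun p => p.1) (fun p => p.2.length + j)
    (by fun_prop) (by fun_prop) (by fun_prop) (by
      intro F hF
      have hα : ∀ x ∈ F, x.1 = strPrefix A x.2.length := by
        intro x hx
        obtain ⟨⟨h1, h2⟩, h3⟩ := hF x hx
        rw [← h1, h3.eq]
      have hinj : Set.InjOn Prod.snd (F : Set (List Bool × List Bool)) := by
        intro x hx y hy hxy
        refine Prod.ext ?_ hxy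
        rw [hα x hx, hα y hy, hxy]
      have h1 := hw (F.image Prod.snd) (by
        intro ρ hρ
        obtain ⟨x, hx, rfl⟩ := Finset.mem_image.1 hρ
        rw [← hα x hx]
        exact (hF x hx).1.2)
      rw [Finset.sum_image hinj] at h1
      simp only [w_add]
      rw [← Finset.sum_mul]
      have h2 := mul_le_mul_of_nonneg_right h1 (w_nonneg j)
      rw [mul_comm (2 ^ j), w_mul_pow] at h2
      exact h2)
  refine ⟨fun ρ s => ∃ α ∈ strs ρ.length, Wr (α, ρ) s, ?_, ?_, ⟨C * 2 ^ j, ?_⟩, ?_⟩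
  · have := hW1.comp (show Primrec fun q : (List Bool × ℕ) × List Bool => ((q.2, q.1.1), q.1.2) by
      fun_prop)
    fun_prop
  · rintro σ s t hst ⟨α, h1, h2⟩
    exact ⟨α, h1, hW2 _ _ _ hst h2⟩
  · intro s F hF
    choose! g hg1 hg2 using hF
    have h1 := hW3 s (F.image fun ρ => (g ρ, ρ)) (by
      intro x hx
      obtain ⟨ρ, hρ, rfl⟩ := Finset.mem_image.1 hx
      exact hg2 ρ hρ)
    rw [Finset.sum_image (by intro a _ b _ h; exact congrArg Prod.snd h)] at h1
    simp only [w_add] at h1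
    rw [← Finset.sum_mul] at h1
    have h2 := mul_le_mul_of_nonneg_right h1 (show (0 : ℝ) ≤ 2 ^ j by positivity)
    rwa [mul_assoc, w_mul_pow, mul_one] at h2
  · intro ρ hρ
    obtain ⟨s, hs⟩ := hW4 (strPrefix A ρ.length, ρ) ⟨length_strPrefix _ _, hρ⟩
      (isPrefixOf_strPrefix _ _)
    exact ⟨s, _, mem_strs.2 (length_strPrefix _ _), hs⟩

/-! ## the chain argument -/

open Classical in
/-- positions reachable from 0 along steps `E` -/
noncomputable def lst (E : ℕ → ℕ → Prop) (n : ℕ) : List ℕ :=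
  Nat.rec [0] (fun n l => if ∃ c ∈ l, E c (n + 1) then (n + 1) :: l else l) n

theorem pr_lst {γ : Type*} [Primcodable γ] {E : γ → ℕ → ℕ → Prop} {f : γ → ℕ}
    (hE : PrimrecPred fun q : γ × ℕ × ℕ => E q.1 q.2.1 q.2.2) (hf : Primrec f) :
    Primrec fun a => lst (E a) (f a) := by
  classical
  have := hE.comp (show Primrec fun q : (γ × ℕ × List ℕ) × ℕ => (q.1.1, q.2, q.1.2.1 + 1) by
    fun_prop)
  unfold lst
  fun_prop

theorem lst_succ (E : ℕ → ℕ → Prop) (n : ℕ) [Decidable (∃ c ∈ lst E n, E c (n + 1))] :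
    lst E (n + 1) = if ∃ c ∈ lst E n, E c (n + 1) then (n + 1) :: lst E n else lst E n := by
  conv_lhs => unfold lst
  dsimp only
  congr

theorem lst_le {E : ℕ → ℕ → Prop} {n c : ℕ} (h : c ∈ lst E n) : c ≤ n := by
  classical
  induction n with
  | zero => simpa [lst] using h
  | succ n ih =>
    rw [lst_succ] at h
    split_ifs at h with h1
    · rcases List.mem_cons.1 h with h2 | h2
      · omega
      · exact (ih h2).trans (Nat.le_succ n)
    · exact (ih h).trans (Nat.le_succ n)

theorem lst_mono {E : ℕ → ℕ → Prop} {n m c : ℕ} (h : c ∈ lst E n) (hnm : n ≤ m) : c ∈ lst E m := by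
  classical
  induction m, hnm using Nat.le_induction with
  | base => exact h
  | succ m _ ih =>
    rw [lst_succ]
    split_ifs
    · exact List.mem_cons_of_mem _ ih
    · exact ih

theorem lst_step {E : ℕ → ℕ → Prop} {m c : ℕ} (h : c ∈ lst E c) (hcm : c < m) (hE : E c m) :
    m ∈ lst E m := by
  classical
  obtain ⟨k, rfl⟩ : ∃ k, m = k + 1 := ⟨m - 1, by omega⟩
  rw [lst_succ, if_pos ⟨c, lst_mono h (by omega), hE⟩]
  exact List.mem_cons_self

theorem lst_self {E : ℕ → ℕ → Prop} {n c : ℕ} (h : c ∈ lst E n) : c ∈ lst E c := by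
  classical
  induction n with
  | zero =>
    have : c = 0 := by simpa [lst] using h
    rw [this] at h ⊢; exact h
  | succ n ih =>
    by_cases hc : c = n + 1
    · rw [hc] at h ⊢; exact h
    · rw [lst_succ] at h
      split_ifs at h
      · rcases List.mem_cons.1 h with h2 | h2
        · exact absurd h2 hc
        · exact ih h2
      · exact ih h

theorem lst_parent {E : ℕ → ℕ → Prop} {n : ℕ} (h : n ∈ lst E n) (hn : n ≠ 0) :
    ∃ c < n, c ∈ lst E c ∧ E c n := by
  classical
  obtain ⟨k, rfl⟩ : ∃ k, n = k + 1 := ⟨n - 1, by omega⟩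
  rw [lst_succ] at h
  split_ifs at h with h1
  · obtain ⟨c, h2, h3⟩ := h1
    exact ⟨c, Nat.lt_succ_of_le (lst_le h2), lst_self h2, h3⟩
  · have := lst_le h
    omega

theorem lst_congr {E E' : ℕ → ℕ → Prop} {n : ℕ}
    (h : ∀ c' c, c' < c → c ≤ n → (E c' c ↔ E' c' c)) : lst E n = lst E' n := by
  classical
  induction n with
  | zero => rfl
  | succ n ih =>
    have ih' := ih fun c' c h1 h2 => h c' c h1 (h2.trans (Nat.le_succ n))
    rw [lst_succ, lst_succ, ih']
    have : (∃ c ∈ lst E' n, E c (n + 1)) ↔ (∃ c ∈ lst E' n, E' c (n + 1)) := by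
      constructor
      · rintro ⟨c, h1, h2⟩; exact ⟨c, h1, (h c _ (Nat.lt_succ_of_le (lst_le h1)) le_rfl).1 h2⟩
      · rintro ⟨c, h1, h2⟩; exact ⟨c, h1, (h c _ (Nat.lt_succ_of_le (lst_le h1)) le_rfl).2 h2⟩
    by_cases hh : ∃ c ∈ lst E' n, E' c (n + 1)
    · rw [if_pos hh, if_pos (this.2 hh)]
    · rw [if_neg hh, if_neg (fun h' => hh (this.1 h'))]

def Exi (M : List Bool → List Bool → ℕ → List Bool → Prop) (B : List Bool → ℕ → List Bool → Prop)
    (j : ℕ) (α ρ : List Bool) (c' c : ℕ) : Prop :=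
  c' < c ∧ M (α.take c) (ρ.take c) j (ρ.take c') ∧ ¬ B (α.take c) j (ρ.take c') ∧
    ¬ ∃ m < c, c' < m ∧ M (α.take m) (ρ.take m) j (ρ.take c')

theorem Exi_take {M : List Bool → List Bool → ℕ → List Bool → Prop}
    {B : List Bool → ℕ → List Bool → Prop} {j : ℕ} (α ρ : List Bool) {c' c n : ℕ} (hc : c ≤ n) :
    Exi M B j (α.take n) (ρ.take n) c' c ↔ Exi M B j α ρ c' c := by
  unfold Exi
  refine and_congr_right fun h1 => ?_
  have h2 : ∀ m ≤ c, ∀ β : List Bool, (β.take n).take m = β.take m := by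
    intro m hm β
    rw [List.take_take, min_eq_left (hm.trans hc)]
  rw [h2 c le_rfl, h2 c le_rfl, h2 c' h1.le]
  refine and_congr_right fun _ => and_congr_right fun _ => not_congr ?_
  refine exists_congr fun m => and_congr_right fun hm => and_congr_right fun _ => ?_
  rw [h2 m hm.le, h2 m hm.le]

section
variable {A R : ℕ → Bool} {M : List Bool → List Bool → ℕ → List Bool → Prop}
  {B : List Bool → ℕ → List Bool → Prop}

theorem exit_bound
    (hmono : ∀ (α ρ : List Bool) (j : ℕ) (σ : List Bool) (m n : ℕ), m ≤ n →
      M (α.take m) (ρ.take m) j σ → M (α.take n) (ρ.take n) j σ)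
    (hBd : ∀ (α : List Bool) (j : ℕ) (σ : List Bool), B α j σ ↔ σ.length ≤ α.length ∧
        2 ^ j * cntU (fun ρ => σ <+: ρ ∧ ¬ M α ρ j σ) α.length < 2 ^ (α.length - σ.length))
    (j : ℕ) (σ : List Bool) (G : Finset (List Bool))
    (hG : ∀ ρ ∈ G, σ <+: ρ ∧ Exi M B j (strPrefix A ρ.length) ρ σ.length ρ.length) :
    ∑ ρ ∈ G, w ρ.length ≤ (1 - w j) * w σ.length := by
  classical
  rcases G.eq_empty_or_nonempty with rfl | hne
  · simp only [Finset.sum_empty]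
    exact mul_nonneg (sub_nonneg.2 (w_le_one j)) (w_nonneg _)
  obtain ⟨ρ₀, hρ₀, hmax⟩ := Finset.exists_max_image G List.length hne
  set s := ρ₀.length with hs
  have hMρ : ∀ ρ ∈ G, σ.length < ρ.length ∧ M (strPrefix A ρ.length) ρ j σ ∧
      ¬ B (strPrefix A ρ.length) j σ ∧
      ∀ m < ρ.length, σ.length < m → ¬ M (strPrefix A m) (ρ.take m) j σ := by
    intro ρ hρ
    obtain ⟨h1, h2, h3, h4, h5⟩ := hG ρ hρ
    have h6 : ρ.take σ.length = σ := (List.prefix_iff_eq_take.1 h1).symm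
    rw [h6, take_strPrefix _ _ _ le_rfl, List.take_length] at h3
    rw [h6, take_strPrefix _ _ _ le_rfl] at h4
    refine ⟨h2, h3, h4, fun m hm hm2 hM => h5 ⟨m, hm, hm2, ?_⟩⟩
    rw [h6, take_strPrefix _ _ _ hm.le]
    exact hM
  have hpf : ∀ ρ ∈ G, ∀ τ ∈ G, ρ <+: τ → ρ = τ := by
    intro ρ hρ τ hτ hpre
    refine hpre.eq_of_length_le (not_lt.1 fun hlt => ?_)
    have h1 := hMρ ρ hρ
    refine (hMρ τ hτ).2.2.2 _ hlt h1.1 ?_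
    rw [← List.prefix_iff_eq_take.1 hpre]
    exact h1.2.1
  rw [kraft_sum G s (fun ρ hρ => hmax ρ hρ) hpf]
  have hB := (hMρ ρ₀ hρ₀).2.2.1
  have hσs : σ.length < s := (hMρ ρ₀ hρ₀).1
  rw [hBd, length_strPrefix, ← hs] at hB
  have hB2 : 2 ^ (s - σ.length) ≤
      2 ^ j * cntU (fun ρ => σ <+: ρ ∧ ¬ M (strPrefix A s) ρ j σ) s :=
    not_lt.1 fun h => hB ⟨hσs.le, h⟩
  rw [cntU_eq] at hB2
  set U := (strF s).filter fun ρ => σ <+: ρ ∧ ¬ M (strPrefix A s) ρ j σ with hU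
  set V := (strF s).filter fun ρ => ∃ σ ∈ G, σ <+: ρ with hV
  have hUV : V.card + U.card ≤ 2 ^ (s - σ.length) := by
    rw [← card_ext σ s hσs.le, ← Finset.card_union_of_disjoint]
    · apply Finset.card_le_card
      intro τ hτ
      rcases Finset.mem_union.1 hτ with h | h
      · obtain ⟨h1, ρ, h2, h3⟩ := Finset.mem_filter.1 h
        exact Finset.mem_filter.2 ⟨h1, (hG ρ h2).1.trans h3⟩
      · obtain ⟨h1, h2, _⟩ := Finset.mem_filter.1 h
        exact Finset.mem_filter.2 ⟨h1, h2⟩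
    · rw [Finset.disjoint_left]
      intro τ h h'
      obtain ⟨h1, ρ, h2, h3⟩ := Finset.mem_filter.1 h
      obtain ⟨_, _, h4⟩ := Finset.mem_filter.1 h'
      apply h4
      have hl := mem_strF.1 h1
      have h5 := (hMρ ρ h2).2.1
      have h6 := hmono (strPrefix A s) τ j σ ρ.length s (hmax ρ h2) (by
        rw [take_strPrefix _ _ _ (hmax ρ h2), ← List.prefix_iff_eq_take.1 h3]; exact h5)
      rw [take_strPrefix _ _ _ le_rfl, ← hl, List.take_length, hl] at h6
      exact h6
  have e1 : (V.card : ℝ) + U.card ≤ 2 ^ s * w σ.length := by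
    rw [← pow_sub_w s _ hσs.le]; exact_mod_cast hUV
  have e2 : 2 ^ s * w σ.length ≤ 2 ^ j * (U.card : ℝ) := by
    rw [← pow_sub_w s _ hσs.le]; exact_mod_cast hB2
  have e3 : w j * (2 ^ s * w σ.length) ≤ U.card := by
    have := mul_le_mul_of_nonneg_left e2 (w_nonneg j)
    rwa [← mul_assoc (w j) (2 ^ j), w_mul_pow, one_mul] at this
  have e4 : (V.card : ℝ) ≤ 2 ^ s * w σ.length * (1 - w j) := by linarith
  calc w s * (V.card : ℝ) ≤ w s * (2 ^ s * w σ.length * (1 - w j)) :=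
        mul_le_mul_of_nonneg_left e4 (w_nonneg s)
    _ = (w s * 2 ^ s) * ((1 - w j) * w σ.length) := by ring
    _ = _ := by rw [w_mul_pow, one_mul]

theorem reach_bound
    (hmono : ∀ (α ρ : List Bool) (j : ℕ) (σ : List Bool) (m n : ℕ), m ≤ n →
      M (α.take m) (ρ.take m) j σ → M (α.take n) (ρ.take n) j σ)
    (hBd : ∀ (α : List Bool) (j : ℕ) (σ : List Bool), B α j σ ↔ σ.length ≤ α.length ∧
        2 ^ j * cntU (fun ρ => σ <+: ρ ∧ ¬ M α ρ j σ) α.length < 2 ^ (α.length - σ.length))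
    (j : ℕ) (F : Finset (List Bool))
    (hF : ∀ ρ ∈ F, ρ.length ∈ lst (Exi M B j (strPrefix A ρ.length) ρ) ρ.length) :
    ∑ ρ ∈ F, w ρ.length ≤ 2 ^ j := by
  classical
  set T : Finset (List Bool) := ((Finset.range (F.sup List.length + 1)).biUnion strF).filter
    fun ρ => ρ.length ∈ lst (Exi M B j (strPrefix A ρ.length) ρ) ρ.length with hT
  have hmem : ∀ ρ, ρ ∈ T ↔ ρ.length ≤ F.sup List.length ∧
      ρ.length ∈ lst (Exi M B j (strPrefix A ρ.length) ρ) ρ.length := by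
    intro ρ
    simp [hT, mem_strF]
  have hFT : F ⊆ T := fun ρ hρ => (hmem ρ).2 ⟨Finset.le_sup (f := List.length) hρ, hF ρ hρ⟩
  refine (Finset.sum_le_sum_of_subset_of_nonneg hFT fun _ _ _ => w_nonneg _).trans ?_
  have hpar : ∀ ρ ∈ T.erase [], ∃ σ ∈ T, σ <+: ρ ∧
      Exi M B j (strPrefix A ρ.length) ρ σ.length ρ.length := by
    intro ρ hρ
    obtain ⟨hne, hρ⟩ := Finset.mem_erase.1 hρ
    obtain ⟨hl, h⟩ := (hmem ρ).1 hρ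
    obtain ⟨c, hc, h1, h2⟩ := lst_parent h (by simpa using hne)
    have hlen : (ρ.take c).length = c := by simp [hc.le]
    refine ⟨ρ.take c, (hmem _).2 ⟨by omega, ?_⟩, List.take_prefix _ _, by rwa [hlen]⟩
    rw [hlen, ← take_strPrefix A c _ hc.le,
      lst_congr (E' := Exi M B j (strPrefix A ρ.length) ρ) fun c' d _ hd => Exi_take _ _ hd]
    exact h1
  choose! p hp1 hp2 using hpar
  have h1 : ∑ ρ ∈ T.erase [], w ρ.length ≤ ∑ σ ∈ T, (1 - w j) * w σ.length := by
    rw [← Finset.sum_fiberwise_of_maps_to hp1]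
    refine Finset.sum_le_sum fun σ _ => exit_bound (A := A) hmono hBd j σ _ ?_
    intro ρ hρ
    obtain ⟨h1, rfl⟩ := Finset.mem_filter.1 hρ
    exact hp2 ρ h1
  have h2 : ∑ ρ ∈ T, w ρ.length ≤ ∑ ρ ∈ T.erase [], w ρ.length + 1 := by
    by_cases h : ([] : List Bool) ∈ T
    · rw [← Finset.sum_erase_add _ _ h]
      simp [w_zero]
    · rw [Finset.erase_eq_of_notMem h]; linarith
  rw [← Finset.mul_sum] at h1
  have h3 : w j * ∑ ρ ∈ T, w ρ.length ≤ 1 := by linarith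
  have h4 := mul_le_mul_of_nonneg_right h3 (show (0 : ℝ) ≤ 2 ^ j by positivity)
  rw [mul_right_comm, w_mul_pow] at h4
  linarith

theorem many_big (hA : KTrivial A) (hR : MLRandom R)
    (hM : PrimrecPred fun q : List Bool × List Bool × ℕ × List Bool => M q.1 q.2.1 q.2.2.1 q.2.2.2)
    (hB : PrimrecPred fun q : List Bool × ℕ × List Bool => B q.1 q.2.1 q.2.2)
    (hmono : ∀ (α ρ : List Bool) (j : ℕ) (σ : List Bool) (m n : ℕ), m ≤ n →
      M (α.take m) (ρ.take m) j σ → M (α.take n) (ρ.take n) j σ)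
    (hBd : ∀ (α : List Bool) (j : ℕ) (σ : List Bool), B α j σ ↔ σ.length ≤ α.length ∧
        2 ^ j * cntU (fun ρ => σ <+: ρ ∧ ¬ M α ρ j σ) α.length < 2 ^ (α.length - σ.length))
    (hdual : ∀ j σ, (¬ ∃ s, B (strPrefix A s) j σ) ↔ ∃ s, M (strPrefix A s) (strPrefix R s) j σ)
    (j : ℕ) : ∃ n s, B (strPrefix A s) j (strPrefix R n) := by
  classical
  by_contra hno
  push Not at hno
  obtain ⟨Q, hQ1, hQ2, ⟨C, hQ3⟩, hQ4⟩ := cover_project hA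
    (fun α ρ => ρ.length ∈ lst (Exi M B j α ρ) ρ.length) (by
      have h1 := hM.comp (show Primrec fun q : (List Bool × List Bool) × ℕ × ℕ =>
        (q.1.1.take q.2.2, q.1.2.take q.2.2, j, q.1.2.take q.2.1) by fun_prop)
      have h2 := hB.comp (show Primrec fun q : (List Bool × List Bool) × ℕ × ℕ =>
        (q.1.1.take q.2.2, j, q.1.2.take q.2.1) by fun_prop)
      have h3 := hM.comp (show Primrec fun q : ((List Bool × List Bool) × ℕ × ℕ) × ℕ =>
        (q.1.1.1.take q.2, q.1.1.2.take q.2, j, q.1.1.2.take q.1.2.1) by fun_prop)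
      have h4 : PrimrecPred fun q : (List Bool × List Bool) × ℕ × ℕ =>
          Exi M B j q.1.1 q.1.2 q.2.1 q.2.2 := by
        unfold Exi; fun_prop
      have h5 : Primrec fun q : List Bool × List Bool =>
          lst (Exi M B j q.1 q.2) q.2.length :=
        pr_lst (E := fun q : List Bool × List Bool => Exi M B j q.1 q.2) h4 (by fun_prop)
      fun_prop) j (fun F hF => reach_bound hmono hBd j F hF)
  obtain ⟨N, hN⟩ := solovay hR Q hQ1 hQ2 C hQ3
  have hinf : ∀ k, ∃ n ≥ k, n ∈ lst (Exi M B j (strPrefix A n) (strPrefix R n)) n := by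
    intro k
    induction k with
    | zero => exact ⟨0, le_rfl, by simp [lst]⟩
    | succ k ih =>
      obtain ⟨n, hn, h⟩ := ih
      obtain ⟨s, hs⟩ := (hdual j (strPrefix R n)).1 (by rintro ⟨s, hs⟩; exact hno n s hs)
      have hex : ∃ m, n < m ∧ M (strPrefix A m) (strPrefix R m) j (strPrefix R n) := by
        refine ⟨n + s + 1, by omega, ?_⟩
        have := hmono (strPrefix A (n + s + 1)) (strPrefix R (n + s + 1)) j (strPrefix R n) s
          (n + s + 1) (by omega) (by
            rw [take_strPrefix _ _ _ (by omega), take_strPrefix _ _ _ (by omega)]; exact hs)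
        rwa [take_strPrefix _ _ _ (by omega), take_strPrefix _ _ _ (by omega)] at this
      set m := Nat.find hex with hm
      obtain ⟨hm1, hm2⟩ := Nat.find_spec hex
      rw [← hm] at hm1 hm2
      refine ⟨m, by omega, lst_step (c := n) ?_ hm1 ?_⟩
      · rw [lst_congr (E' := Exi M B j (strPrefix A n) (strPrefix R n))]
        · exact h
        · intro c' d _ hd
          have := Exi_take (M := M) (B := B) (j := j) (strPrefix A m) (strPrefix R m) (c' := c') hd
          rw [← this, take_strPrefix _ _ _ hm1.le, take_strPrefix _ _ _ hm1.le]
      · refine ⟨hm1, ?_, ?_, ?_⟩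
        · rw [take_strPrefix _ _ _ hm1.le, take_strPrefix _ _ _ le_rfl, take_strPrefix _ _ _ le_rfl]
          exact hm2
        · rw [take_strPrefix _ _ _ hm1.le, take_strPrefix _ _ _ le_rfl]
          exact hno n m
        · rintro ⟨i, hi, hni, hMi⟩
          rw [take_strPrefix _ _ _ hm1.le, take_strPrefix _ _ _ hi.le,
            take_strPrefix _ _ _ hi.le] at hMi
          exact Nat.find_min hex hi ⟨hni, hMi⟩
  obtain ⟨n, hn, h⟩ := hinf N
  obtain ⟨s, hs⟩ := hQ4 (strPrefix R n) (by simpa only [length_strPrefix] using h)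
  exact hN n hn s hs

end

/-! ## the c.e. cover -/

theorem cover_final {A R : ℕ → Bool} (hA : KTrivial A) (hR : MLRandom R)
    (hcup : TuringLE zeroJump (joinSet A R)) :
    ∃ cov : List Bool → Prop, PrimrecPred cov ∧ (∀ ρ τ, ρ <+: τ → cov ρ → cov τ) ∧
      (∀ n, ¬ cov (strPrefix R n)) ∧
      ∀ j, ∃ n s, n ≤ s ∧ 2 ^ j * cntU (fun ρ => strPrefix R n <+: ρ ∧ ¬ cov ρ) s < 2 ^ (s - n) := by
  classical
  obtain ⟨M, B, hM, hB, hmono, hBd, hdual⟩ := self_ref hA hcup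
  have hbig := many_big hA hR hM hB hmono hBd hdual
  -- covered by an `A`-certificate
  set cv : List Bool → List Bool → Prop := fun α ρ =>
    ∃ j ≤ ρ.length, ∃ k ≤ ρ.length, B α j (ρ.take k) ∧ M α ρ j (ρ.take k) with hcv
  have pcv : PrimrecPred fun q : List Bool × List Bool => cv q.1 q.2 := by
    have h1 := hM.comp (show Primrec fun q : ((List Bool × List Bool) × ℕ) × ℕ =>
      (q.1.1.1, q.1.1.2, q.1.2, q.1.1.2.take q.2) by fun_prop)
    have h2 := hB.comp (show Primrec fun q : ((List Bool × List Bool) × ℕ) × ℕ =>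
      (q.1.1.1, q.1.2, q.1.1.2.take q.2) by fun_prop)
    simp only [hcv]
    fun_prop
  have hRcv : ∀ n, ¬ cv (strPrefix A n) (strPrefix R n) := by
    rintro n ⟨j, _, k, _, h1, h2⟩
    exact (hdual j _).2 ⟨n, h2⟩ ⟨n, h1⟩
  obtain ⟨Q, hQ1, hQ2, ⟨C, hQ3⟩, hQ4⟩ := cover_project hA
    (fun α ρ => cv α ρ ∧ ¬ ∃ m < ρ.length, cv (α.take m) (ρ.take m)) (by
      have h1 := pcv.comp (show Primrec fun q : (List Bool × List Bool) × ℕ =>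
        (q.1.1.take q.2, q.1.2.take q.2) by fun_prop)
      fun_prop) 0 (by
      intro F hF
      rw [pow_zero]
      refine kraft_le_one F ?_
      intro σ hσ τ hτ hpre
      refine hpre.eq_of_length_le (not_lt.1 fun hlt => ?_)
      refine (hF τ hτ).2 ⟨_, hlt, ?_⟩
      rw [take_strPrefix _ _ _ hlt.le, ← List.prefix_iff_eq_take.1 hpre]
      exact (hF σ hσ).1)
  obtain ⟨N, hN⟩ := solovay hR Q hQ1 hQ2 C hQ3
  set cov : List Bool → Prop := fun ρ => ∃ m ≤ ρ.length, Q (ρ.take m) ρ.length ∧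
    ¬ ρ.take m <+: strPrefix R N with hcov
  have hcov2 : ∀ ρ m t, m ≤ ρ.length → t ≤ ρ.length → Q (ρ.take m) t →
      ¬ ρ.take m <+: strPrefix R N → cov ρ := by
    intro ρ m t h1 h2 h3 h4
    exact ⟨m, h1, hQ2 _ _ _ h2 h3, h4⟩
  have hcmono : ∀ ρ τ, ρ <+: τ → cov ρ → cov τ := by
    rintro ρ τ hpre ⟨m, h1, h2, h3⟩
    have hl := hpre.length_le
    have e : τ.take m = ρ.take m := by
      rw [List.prefix_iff_eq_take.1 hpre, List.take_take, min_eq_left h1]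
    exact hcov2 τ m ρ.length (h1.trans hl) hl (by rwa [e]) (by rwa [e])
  refine ⟨cov, ?_, hcmono, ?_, ?_⟩
  · have h1 := hQ1.comp (show Primrec fun q : List Bool × ℕ => (q.1.take q.2, q.1.length) by
      fun_prop)
    simp only [hcov]
    fun_prop
  · rintro n ⟨m, h1, h2, h3⟩
    rw [length_strPrefix] at h1
    rw [take_strPrefix _ _ _ h1] at h2 h3
    refine hN m (not_lt.1 fun hlt => h3 ?_) _ h2
    exact strPrefix_pre R hlt.le
  · intro j
    obtain ⟨n, s₀, hBns⟩ := hbig j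
    have hBns' := hBns
    rw [hBd] at hBns'
    simp only [length_strPrefix] at hBns'
    obtain ⟨hns, hlt⟩ := hBns'
    rw [cntU_eq] at hlt
    have hj : j ≤ s₀ := by
      have h1 : 0 < ((strF s₀).filter fun ρ => strPrefix R n <+: ρ ∧
          ¬ M (strPrefix A s₀) ρ j (strPrefix R n)).card := by
        refine Finset.card_pos.2 ⟨strPrefix R s₀, Finset.mem_filter.2
          ⟨mem_strF.2 (length_strPrefix _ _), strPrefix_pre R hns, ?_⟩⟩
        intro h
        exact (hdual j _).2 ⟨s₀, h⟩ ⟨s₀, hBns⟩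
      have h2 : 2 ^ j < 2 ^ (s₀ - n) :=
        lt_of_le_of_lt (Nat.le_mul_of_pos_right _ h1) hlt
      have := (Nat.pow_lt_pow_iff_right (by norm_num : 1 < 2)).1 h2
      omega
    -- each good string is eventually covered
    have key : ∀ ρ ∈ (strF s₀).filter (fun ρ => strPrefix R n <+: ρ ∧
        M (strPrefix A s₀) ρ j (strPrefix R n)), ∃ t, ∃ m ≤ s₀, Q (ρ.take m) t ∧
          ¬ ρ.take m <+: strPrefix R N := by
      intro ρ hρ
      obtain ⟨h1, h2, h3⟩ := Finset.mem_filter.1 hρ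
      have hl := mem_strF.1 h1
      have hex : ∃ m, cv (strPrefix A m) (ρ.take m) := by
        refine ⟨s₀, ?_⟩
        rw [← hl, List.take_length, hl]
        refine ⟨j, by omega, n, by omega, ?_⟩
        have e : ρ.take n = strPrefix R n := by
          have := List.prefix_iff_eq_take.1 h2
          rw [length_strPrefix] at this
          exact this.symm
        rw [e]
        exact ⟨hBns, h3⟩
      have hle : Nat.find hex ≤ s₀ := by
        refine Nat.find_min' hex ?_
        rw [← hl, List.take_length, hl]
        refine ⟨j, by omega, n, by omega, ?_⟩
        have e : ρ.take n = strPrefix R n := by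
          have := List.prefix_iff_eq_take.1 h2
          rw [length_strPrefix] at this
          exact this.symm
        rw [e]
        exact ⟨hBns, h3⟩
      set m := Nat.find hex with hm
      have hcm := Nat.find_spec hex
      rw [← hm] at hcm
      have hlen : (ρ.take m).length = m := by simp [hl, hle]
      obtain ⟨t, ht⟩ := hQ4 (ρ.take m) (by
        rw [hlen]
        refine ⟨hcm, ?_⟩
        rintro ⟨i, hi, hci⟩
        rw [take_strPrefix _ _ _ hi.le, List.take_take, min_eq_left hi.le] at hci
        exact Nat.find_min hex hi hci)
      refine ⟨t, m, hle, ht, fun hp => ?_⟩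
      have h5 := ((prefix_strPrefix_iff _ _ _).1 hp).1.eq
      rw [hlen] at h5
      rw [← h5] at hcm
      exact hRcv m hcm
    obtain ⟨t, ht0, ht⟩ := CTD.exists_common _ (fun (ρ : List Bool) t => ∃ m ≤ s₀, Q (ρ.take m) t ∧
          ¬ ρ.take m <+: strPrefix R N) (by
        rintro ρ t t' htt ⟨m, h1, h2, h3⟩
        exact ⟨m, h1, hQ2 _ _ _ htt h2, h3⟩) key s₀
    refine ⟨n, t, hns.trans ht0, ?_⟩
    rw [cntU_eq]
    have hcard : ((strF t).filter fun ρ => strPrefix R n <+: ρ ∧ ¬ cov ρ).card ≤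
        ((strF s₀).filter fun ρ => strPrefix R n <+: ρ ∧
          ¬ M (strPrefix A s₀) ρ j (strPrefix R n)).card * 2 ^ (t - s₀) := by
      rw [mul_comm]
      refine Finset.card_le_mul_card_image_of_maps_to (f := fun ρ => ρ.take s₀) ?_ _ ?_
      · intro τ hτ
        obtain ⟨h1, h2, h3⟩ := Finset.mem_filter.1 hτ
        have hl := mem_strF.1 h1
        have hlen : (τ.take s₀).length = s₀ := by simp [hl, ht0]
        have hpre : strPrefix R n <+: τ.take s₀ :=
          List.prefix_of_prefix_length_le h2 (List.take_prefix _ _)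
            (by rw [hlen, length_strPrefix]; exact hns)
        refine Finset.mem_filter.2 ⟨mem_strF.2 hlen, hpre, fun hMM => h3 ?_⟩
        obtain ⟨m, hm1, hm2, hm3⟩ := ht (τ.take s₀)
          (Finset.mem_filter.2 ⟨mem_strF.2 hlen, hpre, hMM⟩)
        rw [List.take_take, min_eq_left hm1] at hm2 hm3
        exact hcov2 τ m t (by omega) hl.ge hm2 hm3
      · intro ρ hρ
        have hl := mem_strF.1 (Finset.mem_filter.1 hρ).1
        rw [← hl, ← card_ext ρ t (by omega)]
        refine Finset.card_le_card fun τ hτ => ?_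
        obtain ⟨h1, h2⟩ := Finset.mem_filter.1 hτ
        refine Finset.mem_filter.2 ⟨(Finset.mem_filter.1 h1).1, ?_⟩
        rw [← h2]
        exact List.take_prefix _ _
    calc _ ≤ 2 ^ j * (_ * 2 ^ (t - s₀)) := Nat.mul_le_mul_left _ hcard
      _ = (2 ^ j * _) * 2 ^ (t - s₀) := (mul_assoc _ _ _).symm
      _ < 2 ^ (s₀ - n) * 2 ^ (t - s₀) := Nat.mul_lt_mul_of_pos_right hlt (by positivity)
      _ = 2 ^ (t - n) := by rw [← pow_add]; congr 1; omega

/-! ## from the cover to completeness -/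

/-- stage approximation to the halting problem -/
def HStage (n s : ℕ) : Prop := ∃ k ≤ s, ∃ m ≤ s,
  WStage n (Nat.pair (Encodable.encode (List.replicate k false)) (Nat.pair n m)) s

theorem pr_HStage : PrimrecPred fun q : ℕ × ℕ => HStage q.1 q.2 := by
  have := pr_WStage.comp (show Primrec fun q : ((ℕ × ℕ) × ℕ) × ℕ =>
    (q.1.1.1, Nat.pair (Encodable.encode (List.replicate q.1.2 false)) (Nat.pair q.1.1.1 q.2),
      q.1.1.2) by fun_prop)
  unfold HStage
  fun_prop

theorem HStage.mono {n s t : ℕ} (h : HStage n s) (hst : s ≤ t) : HStage n t := by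
  obtain ⟨k, h1, m, h2, h3⟩ := h
  exact ⟨k, h1.trans hst, m, h2.trans hst, h3.mono hst⟩

theorem HStage.lt {n s : ℕ} (h : HStage n s) : n < s := by
  obtain ⟨k, h1, m, h2, h3⟩ := h
  have h4 := h3.lt
  have h5 := Nat.right_le_pair (Encodable.encode (List.replicate k false)) (Nat.pair n m)
  have h6 := Nat.left_le_pair n m
  omega

theorem isPrefixOf_empty (σ : List Bool) :
    IsPrefixOf σ emptyOracle ↔ σ = List.replicate σ.length false := by
  rw [isPrefixOf_iff]
  have : strPrefix emptyOracle σ.length = List.replicate σ.length false := by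
    apply List.ext_getElem
    · simp [strPrefix]
    · intro i h1 h2
      simp [strPrefix, emptyOracle]
  rw [this]

theorem zeroJump_iff (n : ℕ) : zeroJump n = true ↔ ∃ s, HStage n s := by
  classical
  have h2 : zeroJump n = true ↔ ∃ m, OracleComputes n emptyOracle n m := by
    unfold zeroJump jump; exact decide_eq_true_iff
  rw [h2]
  constructor
  · rintro ⟨m, σ, h1, h3⟩
    rw [isPrefixOf_empty] at h1
    obtain ⟨s, hs⟩ := (wenum_iff _ _).1 h3
    refine ⟨σ.length + m + s, σ.length, by omega, m, by omega, ?_⟩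
    rw [← h1]
    exact hs.mono (by omega)
  · rintro ⟨s, k, _, m, _, h⟩
    refine ⟨m, List.replicate k false, ?_, (wenum_iff _ _).2 ⟨s, h⟩⟩
    rw [isPrefixOf_empty]; simp

/-- the density of the uncovered part above `σ` is below `2^-n` at stage `s` -/
def Cert (cov : List Bool → Prop) (σ : List Bool) (s n : ℕ) : Prop :=
  σ.length ≤ s ∧ 2 ^ n * cntU (fun ρ => σ <+: ρ ∧ ¬ cov ρ) s < 2 ^ (s - σ.length)

theorem pr_Cert {cov : List Bool → Prop} (hc : PrimrecPred cov) :
    PrimrecPred fun q : List Bool × ℕ × ℕ => Cert cov q.1 q.2.1 q.2.2 := by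
  unfold Cert
  have := hc.comp (show Primrec fun q : (List Bool × ℕ × ℕ) × List Bool => q.2 by fun_prop)
  fun_prop

theorem Cert.mono {cov : List Bool → Prop} (hm : ∀ ρ τ, ρ <+: τ → cov ρ → cov τ)
    {σ : List Bool} {s t n : ℕ} (h : Cert cov σ s n) (hst : s ≤ t) : Cert cov σ t n := by
  classical
  obtain ⟨h1, h2⟩ := h
  refine ⟨h1.trans hst, ?_⟩
  rw [cntU_eq] at h2 ⊢
  have hcard : ((strF t).filter fun ρ => σ <+: ρ ∧ ¬ cov ρ).card ≤
      2 ^ (t - s) * ((strF s).filter fun ρ => σ <+: ρ ∧ ¬ cov ρ).card := by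
    refine Finset.card_le_mul_card_image_of_maps_to (f := fun ρ => ρ.take s) ?_ _ ?_
    · intro τ hτ
      obtain ⟨h3, h4, h5⟩ := Finset.mem_filter.1 hτ
      have hl := mem_strF.1 h3
      have hlen : (τ.take s).length = s := by simp [hl, hst]
      exact Finset.mem_filter.2 ⟨mem_strF.2 hlen, List.prefix_of_prefix_length_le h4
        (List.take_prefix _ _) (by rw [hlen]; exact h1),
        fun hh => h5 (hm _ _ (List.take_prefix _ _) hh)⟩
    · intro ρ hρ
      have hl := mem_strF.1 (Finset.mem_filter.1 hρ).1
      rw [← hl, ← card_ext ρ t (by omega)]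
      refine Finset.card_le_card fun τ hτ => ?_
      obtain ⟨h1, h2⟩ := Finset.mem_filter.1 hτ
      refine Finset.mem_filter.2 ⟨(Finset.mem_filter.1 h1).1, ?_⟩
      rw [← h2]
      exact List.take_prefix _ _
  calc _ ≤ 2 ^ n * (2 ^ (t - s) * _) := Nat.mul_le_mul_left _ hcard
    _ = 2 ^ (t - s) * (2 ^ n * _) := by ring
    _ < 2 ^ (t - s) * 2 ^ (s - σ.length) := Nat.mul_lt_mul_of_pos_left h2 (by positivity)
    _ = 2 ^ (t - σ.length) := by rw [← pow_add]; congr 1; omega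

theorem zcount {cov : List Bool → Prop} (t n : ℕ) (S : Finset (List Bool))
    (hS : ∀ ρ ∈ S, ρ.length = t ∧ ¬ cov ρ ∧ ∃ k ≤ t, Cert cov (ρ.take k) t n) :
    S.card * w t ≤ w n := by
  classical
  have hch : ∀ ρ ∈ S, ∃ σ : List Bool, σ <+: ρ ∧ Cert cov σ t n ∧
      ∀ τ, τ <+: ρ → Cert cov τ t n → σ.length ≤ τ.length := by
    intro ρ hρ
    obtain ⟨hl, -, k, hk, hc⟩ := hS ρ hρ
    have hex : ∃ k, k ≤ t ∧ Cert cov (ρ.take k) t n := ⟨k, hk, hc⟩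
    obtain ⟨h1, h2⟩ := Nat.find_spec hex
    refine ⟨ρ.take (Nat.find hex), List.take_prefix _ _, h2, fun τ hτ hcτ => ?_⟩
    have h3 : Nat.find hex ≤ τ.length := Nat.find_min' hex ⟨hl ▸ hτ.length_le, by
      rw [← List.prefix_iff_eq_take.1 hτ]; exact hcτ⟩
    simp only [List.length_take]
    omega
  choose! f hf1 hf2 hf3 using hch
  have hpf : ∀ σ ∈ S.image f, ∀ τ ∈ S.image f, σ <+: τ → σ = τ := by
    intro σ hσ τ hτ hpre
    obtain ⟨ρ, hρ, rfl⟩ := Finset.mem_image.1 hσ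
    obtain ⟨ρ', hρ', rfl⟩ := Finset.mem_image.1 hτ
    exact hpre.eq_of_length_le (hf3 ρ' hρ' _ (hpre.trans (hf1 ρ' hρ')) (hf2 ρ hρ))
  have hk := kraft_le_one _ hpf
  have hfib : ∀ σ ∈ S.image f, ((S.filter fun ρ => f ρ = σ).card : ℝ) ≤
      w n * 2 ^ t * w σ.length := by
    intro σ hσ
    obtain ⟨ρ, hρ, rfl⟩ := Finset.mem_image.1 hσ
    obtain ⟨h1, h2⟩ := hf2 ρ hρ
    rw [cntU_eq] at h2
    have h3 : (S.filter fun ρ' => f ρ' = f ρ).card ≤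
        ((strF t).filter fun τ => f ρ <+: τ ∧ ¬ cov τ).card := by
      refine Finset.card_le_card fun τ hτ => ?_
      obtain ⟨h4, h5⟩ := Finset.mem_filter.1 hτ
      obtain ⟨h6, h7, _⟩ := hS τ h4
      exact Finset.mem_filter.2 ⟨mem_strF.2 h6, h5 ▸ hf1 τ h4, h7⟩
    have h4 : 2 ^ n * (S.filter fun ρ' => f ρ' = f ρ).card ≤ 2 ^ (t - (f ρ).length) :=
      (Nat.mul_le_mul_left _ h3).trans h2.le
    have h5 : (2 : ℝ) ^ n * ((S.filter fun ρ' => f ρ' = f ρ).card : ℝ) ≤ 2 ^ t * w (f ρ).length := by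
      rw [← pow_sub_w _ _ h1]; exact_mod_cast h4
    have h6 := mul_le_mul_of_nonneg_left h5 (w_nonneg n)
    rw [← mul_assoc, w_mul_pow, one_mul, ← mul_assoc] at h6
    exact h6
  have hcard : (S.card : ℝ) ≤ w n * 2 ^ t := by
    rw [Finset.card_eq_sum_card_image f S]
    push_cast
    refine (Finset.sum_le_sum hfib).trans ?_
    rw [← Finset.mul_sum]
    exact mul_le_of_le_one_right (mul_nonneg (w_nonneg n) (by positivity)) hk
  calc (S.card : ℝ) * w t ≤ w n * 2 ^ t * w t := mul_le_mul_of_nonneg_right hcard (w_nonneg t)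
    _ = w n * (w t * 2 ^ t) := by ring
    _ = w n := by rw [w_mul_pow, mul_one]

/-- strings caught when `n` enters the halting problem at stage `|ρ|` -/
def Zs (cov : List Bool → Prop) (ρ : List Bool) (n : ℕ) : Prop :=
  HStage n ρ.length ∧ ¬ HStage n (ρ.length - 1) ∧ ¬ cov ρ ∧
    ∃ k ≤ ρ.length, Cert cov (ρ.take k) ρ.length n

theorem zbound {cov : List Bool → Prop} (F : Finset (List Bool)) (hF : ∀ ρ ∈ F, ∃ n, Zs cov ρ n) :
    ∑ ρ ∈ F, w ρ.length ≤ 2 := by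
  classical
  choose! g hg using hF
  have h1 : ∑ ρ ∈ F, w ρ.length ≤ ∑ n ∈ F.image g, w n := by
    rw [← Finset.sum_fiberwise_of_maps_to (t := F.image g) (g := g)
      (fun ρ hρ => Finset.mem_image_of_mem g hρ)]
    refine Finset.sum_le_sum fun n hn => ?_
    obtain ⟨ρ, hρ, rfl⟩ := Finset.mem_image.1 hn
    have hlen : ∀ τ ∈ F.filter (fun τ => g τ = g ρ), τ.length = ρ.length := by
      intro τ hτ
      obtain ⟨h1, h2⟩ := Finset.mem_filter.1 hτ
      have hz := hg τ h1
      rw [h2] at hz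
      have hz' := hg ρ hρ
      have a1 : ¬ τ.length < ρ.length := fun h => hz'.2.1 (hz.1.mono (by omega))
      have a2 : ¬ ρ.length < τ.length := fun h => hz.2.1 (hz'.1.mono (by omega))
      omega
    rw [Finset.sum_congr rfl fun τ hτ => by rw [hlen τ hτ], Finset.sum_const, nsmul_eq_mul]
    refine zcount (cov := cov) ρ.length (g ρ) _ fun τ hτ => ?_
    have hl := hlen τ hτ
    obtain ⟨h1, h2⟩ := Finset.mem_filter.1 hτ
    have hz := hg τ h1
    rw [h2] at hz
    refine ⟨hl, hz.2.2.1, ?_⟩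
    rw [← hl]
    exact hz.2.2.2
  have h2 := sum_w_finset (F.image g)
  simp only [w_succ] at h2
  rw [← Finset.sum_div] at h2
  linarith

theorem complete_of_cover {R : ℕ → Bool} (hR : MLRandom R) (cov : List Bool → Prop)
    (hc : PrimrecPred cov) (hm : ∀ ρ τ, ρ <+: τ → cov ρ → cov τ)
    (hRc : ∀ n, ¬ cov (strPrefix R n))
    (hcert : ∀ j, ∃ n s, n ≤ s ∧
      2 ^ j * cntU (fun ρ => strPrefix R n <+: ρ ∧ ¬ cov ρ) s < 2 ^ (s - n)) :
    TuringLE zeroJump R := by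
  classical
  have pC := pr_Cert hc
  obtain ⟨N, hN⟩ := solovay hR (fun ρ _ => ∃ n < ρ.length, Zs cov ρ n) (by
    have h1 := pr_HStage.comp (show Primrec fun q : (List Bool × ℕ) × ℕ => (q.2, q.1.1.length) by
      fun_prop)
    have h2 := pr_HStage.comp (show Primrec fun q : (List Bool × ℕ) × ℕ =>
      (q.2, q.1.1.length - 1) by fun_prop)
    have h3 := hc.comp (show Primrec fun q : (List Bool × ℕ) × ℕ => q.1.1 by fun_prop)
    have h4 := pC.comp (show Primrec fun q : ((List Bool × ℕ) × ℕ) × ℕ =>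
      (q.1.1.1.take q.2, q.1.1.1.length, q.1.2) by fun_prop)
    unfold Zs
    fun_prop) (fun _ _ _ _ h => h) 2 (fun s F hF => zbound (cov := cov) F fun ρ hρ => by
      obtain ⟨n, _, h⟩ := hF ρ hρ
      exact ⟨n, h⟩)
  -- the value 0 is right along R for n ≥ N
  have hzero : ∀ n, N ≤ n → ((∃ s, (∃ k ≤ s, Cert cov (strPrefix R k) s n) ∧ ¬ HStage n s) ↔
      zeroJump n = false) := by
    intro n hn
    rw [← Bool.not_eq_true, zeroJump_iff]
    constructor
    · rintro ⟨s, ⟨k, hk, hcs⟩, hns⟩ hex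
      set t := Nat.find hex with ht
      have ht1 := Nat.find_spec hex
      rw [← ht] at ht1
      have hst : s < t := not_le.1 fun h => hns (ht1.mono h)
      have hnt := ht1.lt
      refine hN t (by omega) 0 ⟨n, by rw [length_strPrefix]; exact hnt, ?_⟩
      unfold Zs
      rw [length_strPrefix]
      refine ⟨ht1, Nat.find_min hex (by omega), hRc t, k, by omega, ?_⟩
      rw [take_strPrefix _ _ _ (by omega)]
      exact hcs.mono hm hst.le
    · intro hno
      obtain ⟨k, s, hks, h⟩ := hcert n
      refine ⟨s, ⟨k, hks, by rw [length_strPrefix]; exact hks, ?_⟩, fun h => hno ⟨s, h⟩⟩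
      rw [length_strPrefix]; exact h
  set Ax : List Bool → ℕ → ℕ → Prop := fun τ n m =>
    (n < N ∧ ((m = 1 ∧ (strPrefix zeroJump N)[n]? = some true) ∨
      (m = 0 ∧ (strPrefix zeroJump N)[n]? = some false))) ∨
    (N ≤ n ∧ ((m = 1 ∧ HStage n τ.length) ∨
      (m = 0 ∧ (∃ k ≤ τ.length, Cert cov (τ.take k) τ.length n) ∧ ¬ HStage n τ.length))) with hAx
  have pAx : PrimrecPred fun q : List Bool × ℕ × ℕ => Ax q.1 q.2.1 q.2.2 := by
    have h1 := pr_HStage.comp (show Primrec fun q : List Bool × ℕ × ℕ => (q.2.1, q.1.length) by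
      fun_prop)
    have h2 := pC.comp (show Primrec fun q : (List Bool × ℕ × ℕ) × ℕ =>
      (q.1.1.take q.2, q.1.1.length, q.1.2.1) by fun_prop)
    simp only [hAx]
    fun_prop
  obtain ⟨e, he⟩ := exists_index_of_primrec (Q := fun x _ =>
    Ax ((Encodable.decode x.unpair.1 : Option (List Bool)).getD []) x.unpair.2.unpair.1
      x.unpair.2.unpair.2) (by
    exact pAx.comp (show Primrec fun q : ℕ × ℕ =>
      ((Encodable.decode q.1.unpair.1 : Option (List Bool)).getD [], q.1.unpair.2.unpair.1,
        q.1.unpair.2.unpair.2) by fun_prop))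
  refine ⟨e, fun n m => ?_⟩
  have h1 : OracleComputes e R n m ↔ ∃ s, Ax (strPrefix R s) n m := by
    unfold OracleComputes
    simp only [he, Nat.unpair_pair, Encodable.encodek, Option.getD_some, exists_const]
    constructor
    · rintro ⟨σ, h1, h2⟩
      exact ⟨σ.length, by rwa [h1.eq]⟩
    · rintro ⟨s, h⟩
      exact ⟨_, isPrefixOf_strPrefix _ _, h⟩
  rw [h1]
  by_cases hn : n < N
  · have hg : (strPrefix zeroJump N)[n]? = some (zeroJump n) := strPrefix_getElem? _ hn
    simp only [hAx, hg, hn, not_le.2 hn, true_and, false_and, or_false, exists_const]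
    cases zeroJump n <;> simp [natOfBool]
  · have hn' := not_lt.1 hn
    have hz := hzero n hn'
    have hz1 := zeroJump_iff n
    have h2 : (∃ s, Ax (strPrefix R s) n m) ↔ (m = 1 ∧ zeroJump n = true) ∨
        (m = 0 ∧ zeroJump n = false) := by
      rw [← hz, hz1]
      simp only [hAx, hn, hn', true_and, false_and, false_or, length_strPrefix]
      constructor
      · rintro ⟨s, ⟨h3, h4⟩ | ⟨h3, ⟨k, hk, h4⟩, h5⟩⟩
        · exact Or.inl ⟨h3, s, h4⟩
        · rw [take_strPrefix _ _ _ hk] at h4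
          exact Or.inr ⟨h3, s, ⟨k, hk, h4⟩, h5⟩
      · rintro (⟨h3, s, h4⟩ | ⟨h3, s, ⟨k, hk, h4⟩, h5⟩)
        · exact ⟨s, Or.inl ⟨h3, h4⟩⟩
        · exact ⟨s, Or.inr ⟨h3, ⟨k, hk, by rwa [take_strPrefix _ _ _ hk]⟩, h5⟩⟩
    rw [h2]
    change _ ↔ m = natOfBool (zeroJump n)
    cases zeroJump n <;> simp [natOfBool]

/-- no K-trivial set is weakly ML-cuppable: if `A` is K-trivial and
`R` is Martin-Löf random with `A ⊕ R ≥_T ∅′`, then `R ≥_T ∅′`. -/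
theorem stmt9 (A : ℕ → Bool) (hA : KTrivial A)
    (R : ℕ → Bool) (hR : MLRandom R) (hcup : TuringLE zeroJump (joinSet A R)) :
    TuringLE zeroJump R := by
  obtain ⟨cov, h1, h2, h3, h4⟩ := cover_final hA hR hcup
  exact complete_of_cover hR cov h1 h2 h3 h4
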